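/- Fix ε > 0, let α₁, α₂, … be a sequence of elements of 𝒦, and let γ₁, γ₂, … be a sequence of real numbers. Then there exists a set 𝒢 ⊆ Bad of Hausdorff dimension dim_H(𝒢) = 1 such that for every β ∈ 𝒢, every i ∈ ℕ and every δ ∈ ℝ, the inequality n·‖nα_i − γ_i‖·‖nβ − δ‖ < (log log log n)^{ε + 1/2} / (log n)^{1/2} has infinitely many solutions n ∈ ℕ. -/

import Mathlib

open Filter MeasureTheory Real

/-- Distance from `x` to the nearest integer, `‖x‖ = min {|x - k| : k ∈ ℤ}`. -/
noncomputable def dni (x : ℝ) : ℝ := |x - round x|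

/-- The set of badly approximable numbers. -/
noncomputable def Bad : Set ℝ :=
  {α : ℝ | 0 < Filter.atTop.liminf (fun n : ℕ => (n : ℝ) * dni (n * α))}

/-- The `t`-th continued fraction convergent denominator `q_t(α)` of `α`. -/
noncomputable def qden (α : ℝ) (t : ℕ) : ℝ := (GenContFract.of α).dens t

/-- The set `𝒦` of irrationals whose convergent denominators grow at most exponentially. -/
noncomputable def KSet : Set ℝ :=
  {α : ℝ | Irrational α ∧ ∃ C : ℝ, ∀ t : ℕ, 1 ≤ t → Real.log (qden α t) / t ≤ C}

/-!
For `α ∈ 𝒦` every convergent denominator `Q` yields an `N ∈ [Q, 2Q)` with `N‖Nα - γ‖ ≤ 5`. Take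
`R` such integers `N₀ < ⋯ < N_{R-1}`, consecutive ones apart by a factor exceeding a fixed power
of `R`. Since `log Q_t = O(t)`, they can be chosen with `log N_j = O(R log R)`, so `(log N_j)^τ =
o(R)` for `τ < 1`. If now `‖N_j β - j/R‖ ≤ 2/R` for all `j`, then each `δ` is within `O(1/R)` of
some `N_j β` modulo `1`, and that `N_j` solves the inequality.

The numbers `β` are taken in a Cantor set of badly approximable numbers made of good `b`-adic
intervals, inside which one can steer: if `n` exceeds the scale of a good interval by a fixed
power of `R`, a good subinterval exists on which `n y` is within `2/R` of any given residue. The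
points `y` are images of badly approximable `z` under Dirichlet matrices, which turns `n y` into
`C / (z + κ)` up to a constant, and `z` runs through a family of Möbius images of badly
approximable clusters on which this is nearly affine with slopes that seldom coincide. A large
sieve bound for the resulting exponential sums shows that the values are equidistributed finely
enough to meet the target.

A block of `R` steered approximations which starts at level `m` ends by level `(1 + η) m`, and the
construction branches freely between sparse blocks, so the dimension is arbitrarily close to `1`.
-/

theorem dni_eq_norm (x : ℝ) : dni x = ‖(x : UnitAddCircle)‖ := UnitAddCircle.norm_eq.symm

theorem dni_nonneg (x : ℝ) : 0 ≤ dni x := abs_nonneg _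

theorem dni_le_abs_sub_intCast (x : ℝ) (k : ℤ) : dni x ≤ |x - k| := round_le x k

theorem dni_neg (x : ℝ) : dni (-x) = dni x := by
  rw [dni_eq_norm, dni_eq_norm, AddCircle.coe_neg, norm_neg]

theorem dni_add_intCast (x : ℝ) (k : ℤ) : dni (x + k) = dni x := by
  simp [dni]

theorem dni_add_le (x y : ℝ) : dni (x + y) ≤ dni x + |y| := by
  calc dni (x + y) ≤ |x + y - round x| := dni_le_abs_sub_intCast _ _
    _ = |(x - round x) + y| := by ring_nf
    _ ≤ dni x + |y| := abs_add_le _ _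

theorem dni_eq_abs {x : ℝ} (hx : |x| ≤ 1 / 2) : dni x = |x| := by
  rw [dni_eq_norm, AddCircle.norm_coe_eq_abs_iff 1 one_ne_zero]
  simpa using hx

/-- `x` is badly approximable with the explicit constant `c`: `c ≤ q‖qx‖` for all `q ≥ 1`. -/
def BadWith (c x : ℝ) : Prop := ∀ q p : ℤ, 1 ≤ q → c ≤ q * |q * x - p|

namespace BadWith

variable {c c' x : ℝ}

theorem mono (h : BadWith c x) (hc : c' ≤ c) : BadWith c' x :=
  fun q p hq => hc.trans (h q p hq)

theorem le_natCast_mul_dni (h : BadWith c x) {n : ℕ} (hn : 1 ≤ n) : c ≤ n * dni (n * x) := by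
  simpa [dni] using h n (round (n * x)) (by exact_mod_cast hn)

theorem le_abs_mul_abs (h : BadWith c x) {q : ℤ} (hq : q ≠ 0) (p : ℤ) :
    c ≤ |(q : ℝ)| * |q * x - p| := by
  rcases lt_or_gt_of_ne hq with hneg | hpos
  · have hc := h (-q) (-p) (by omega)
    push_cast at hc
    rw [abs_of_neg (by exact_mod_cast hneg)]
    rwa [show -(q : ℝ) * x - -(p : ℝ) = -(q * x - p) by ring, abs_neg] at hc
  · rw [abs_of_pos (by exact_mod_cast hpos)]
    exact h q p (by omega)

theorem frequently_mul_dni_le_one (hc : 0 < c) (h : BadWith c x) :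
    ∃ᶠ n : ℕ in atTop, n * dni (n * x) ≤ 1 := by
  rw [frequently_atTop]
  intro N
  obtain ⟨m, hm⟩ := exists_nat_gt (N / c)
  have hm0 : 0 < m := by exact_mod_cast (by positivity : 0 ≤ N / c).trans_lt hm
  obtain ⟨k, hk0, hkm, hk⟩ := exists_nat_abs_mul_sub_round_le x hm0
  have hupper : k * dni (k * x) ≤ k / (m + 1) := by
    rw [div_eq_mul_one_div]
    exact mul_le_mul_of_nonneg_left hk (Nat.cast_nonneg k)
  have hlower := (h.le_natCast_mul_dni hk0).trans hupper
  have hkm' : (k : ℝ) ≤ m := by exact_mod_cast hkm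
  rw [le_div_iff₀ (by positivity)] at hlower
  rw [div_lt_iff₀ hc] at hm
  refine ⟨k, ?_, hupper.trans ((div_le_one (by positivity)).mpr (by linarith))⟩
  have hNk : (N : ℝ) ≤ k := by nlinarith
  exact_mod_cast hNk

-- Frequent boundedness rules out the junk value that `liminf` takes on sequences tending to `∞`.
theorem mem_Bad (hc : 0 < c) (h : BadWith c x) : x ∈ Bad := by
  refine hc.trans_le (le_liminf_of_le
    (IsCoboundedUnder.of_frequently_le (h.frequently_mul_dni_le_one hc)) ?_)
  filter_upwards [eventually_ge_atTop 1] with n hn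
  exact h.le_natCast_mul_dni hn

end BadWith

/-! ### Good adic intervals and Cantor sets -/

/-- The closed `b`-adic interval `[i b⁻ᵐ, (i + 1) b⁻ᵐ]` of level `m`. -/
def adicIcc (b m : ℕ) (i : ℤ) : Set ℝ := Set.Icc (i / (b : ℝ) ^ m) ((i + 1) / (b : ℝ) ^ m)

/-- The interval `adicIcc b m i` with an interval of level `m + 1` removed at either end. -/
def adicCore (b m : ℕ) (i : ℤ) : Set ℝ :=
  Set.Icc (i / (b : ℝ) ^ m + 1 / (b : ℝ) ^ (m + 1)) ((i + 1) / (b : ℝ) ^ m - 1 / (b : ℝ) ^ (m + 1))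

/-- `adicIcc b m i` is good if its points satisfy `c ≤ q |q y - p|` for all denominators with
`K ≤ q ^ 2 < κ b ^ m`, which are those that matter between the scale of `K` and its own scale. -/
def GoodAdic (b : ℕ) (κ c K : ℝ) (m : ℕ) (i : ℤ) : Prop :=
  ∀ y ∈ adicIcc b m i, ∀ q p : ℤ, 1 ≤ q → K ≤ (q : ℝ) ^ 2 → (q : ℝ) ^ 2 < κ * (b : ℝ) ^ m →
    c ≤ q * |q * y - p|

/-- The intervals of level `m'` with indices `ch d` lie well inside `adicIcc b m i` and are
`b⁻⁽ᵐ⁺¹⁾` apart from each other: they form one branching step of a Cantor set. -/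
structure IsBranching {B : ℕ} (b m : ℕ) (i : ℤ) (m' : ℕ) (ch : Fin B → ℤ) : Prop where
  subset_core : ∀ d, adicIcc b m' (ch d) ⊆ adicCore b m i
  le_abs_sub : ∀ d d', d ≠ d' → ∀ x ∈ adicIcc b m' (ch d), ∀ y ∈ adicIcc b m' (ch d'),
    1 / (b : ℝ) ^ (m + 1) ≤ |x - y|

/-- `x` parametrises a Cantor set of reals by digit sequences, and sequences which first differ at
place `r` give points whose distance is between `b ^ (-(L r + 1))` and `b ^ (-L r)`. -/
structure IsCantorCoding {B : ℕ} (b : ℕ) (L : ℕ → ℕ) (x : (ℕ → Fin B) → ℝ) : Prop where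
  abs_sub_le : ∀ d d', d ≠ d' → |x d - x d'| ≤ 1 / (b : ℝ) ^ L (PiNat.firstDiff d d')
  le_abs_sub : ∀ d d', d ≠ d' →
    1 / (b : ℝ) ^ (L (PiNat.firstDiff d d') + 1) ≤ |x d - x d'|

section Adic

variable {b m m' m'' : ℕ} {i j : ℤ} {x y : ℝ}

theorem adicCore_subset_adicIcc : adicCore b m i ⊆ adicIcc b m i := by
  have h : 0 ≤ 1 / (b : ℝ) ^ (m + 1) := by positivity
  exact Set.Icc_subset_Icc (by linarith) (by linarith)

theorem abs_sub_le_of_mem_adicIcc (hx : x ∈ adicIcc b m i) (hy : y ∈ adicIcc b m i) :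
    |x - y| ≤ 1 / (b : ℝ) ^ m := by
  have h := Set.abs_sub_le_of_uIcc_subset_uIcc (Set.uIcc_subset_uIcc
    (Set.Icc_subset_uIcc hy) (Set.Icc_subset_uIcc hx))
  rw [← sub_div, add_sub_cancel_left] at h
  rwa [abs_of_nonneg (by positivity : 0 ≤ 1 / (b : ℝ) ^ m)] at h

theorem le_abs_sub_of_mem_adicIcc (hb : 0 < b) (hij : i + 2 ≤ j) (hx : x ∈ adicIcc b m i)
    (hy : y ∈ adicIcc b m j) : 1 / (b : ℝ) ^ m ≤ |x - y| := by
  have hβ : 0 < (b : ℝ) ^ m := by positivity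
  have hij' : (i : ℝ) + 2 ≤ j := by exact_mod_cast hij
  have h1 := (le_div_iff₀ hβ).mp hx.2
  have h2 := (div_le_iff₀ hβ).mp hy.1
  rw [abs_sub_comm, div_le_iff₀ hβ]
  nlinarith [le_abs_self (y - x)]

theorem adicIcc_succ_subset_adicCore (hb : 0 < b) (h1 : b * i + 1 ≤ j) (h2 : j + 2 ≤ b * (i + 1)) :
    adicIcc b (m + 1) j ⊆ adicCore b m i := by
  have hb0 : (b : ℝ) ≠ 0 := by exact_mod_cast hb.ne'
  have h1' : (b : ℝ) * i + 1 ≤ j := by exact_mod_cast h1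
  have h2' : (j : ℝ) + 2 ≤ b * (i + 1) := by exact_mod_cast h2
  have hlevel (t : ℝ) : t / (b : ℝ) ^ m = b * t / (b : ℝ) ^ (m + 1) := by
    rw [pow_succ]; field_simp [hb0]
  refine Set.Icc_subset_Icc ?_ ?_
  · rw [hlevel, ← add_div]
    gcongr
  · rw [hlevel, ← sub_div]
    gcongr
    linarith

theorem IsBranching.trans {B : ℕ} {ch ch' : Fin B → ℤ} (h : IsBranching b m i m' ch)
    (hsub : ∀ d, adicIcc b m'' (ch' d) ⊆ adicIcc b m' (ch d)) : IsBranching b m i m'' ch' where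
  subset_core d := (hsub d).trans (h.subset_core d)
  le_abs_sub d d' hd x hx y hy := h.le_abs_sub d d' hd x (hsub d hx) y (hsub d' hy)

end Adic

theorem one_div_le_abs_div_sub_div {p q p' q' : ℤ} (hq : 1 ≤ q) (hq' : 1 ≤ q')
    (hne : (p : ℝ) / q ≠ p' / q') : 1 / ((q : ℝ) * q') ≤ |(p : ℝ) / q - p' / q'| := by
  have hq0 : (0 : ℝ) < q := by exact_mod_cast hq
  have hq0' : (0 : ℝ) < q' := by exact_mod_cast hq'
  rw [div_sub_div _ _ hq0.ne' hq0'.ne', abs_div, abs_of_pos (mul_pos hq0 hq0')]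
  gcongr
  have hnum : p * q' - q * p' ≠ 0 := by
    intro h
    apply hne
    rw [div_eq_div_iff hq0.ne' hq0'.ne']
    have h' : (p : ℝ) * q' - q * p' = 0 := by exact_mod_cast h
    linarith
  exact_mod_cast Int.one_le_abs hnum

section GoodAdic

variable {b B : ℕ} {κ c K : ℝ} {m : ℕ} {i : ℤ}

theorem abs_sub_div_le_of_mul_abs_lt {b β : ℝ} (hb : 0 < b) (hβ : 0 < β) (hcκ : c * (8 * b) ≤ κ)
    {y : ℝ} {q p : ℤ} (hq : 1 ≤ q) (hlow : κ * β ≤ (q : ℝ) ^ 2) (hbad : (q : ℝ) * |q * y - p| < c) :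
    |y - p / q| ≤ 1 / (8 * b * β) := by
  have hq0 : (0 : ℝ) < q := by exact_mod_cast hq
  have hy : y - p / q = (q * y - p) / q := by field_simp
  rw [hy, abs_div, abs_of_pos hq0, div_le_div_iff₀ hq0 (by positivity), one_mul]
  refine le_of_mul_le_mul_left ?_ hq0
  calc (q : ℝ) * (|q * y - p| * (8 * b * β)) = q * |q * y - p| * (8 * b) * β := by ring
    _ ≤ c * (8 * b) * β := by gcongr
    _ ≤ κ * β := by gcongr
    _ ≤ q * q := by linarith

/-- The reason why good intervals have many good subintervals: two points of an interval of length
`1 / β` which are `1 / (β b)` apart cannot both be close to rationals whose denominators belong to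
the window `κ β ≤ q ^ 2 < κ β b`, since such rationals are either equal or too far apart. -/
theorem not_both_close_to_rationals {b β : ℝ} (hb : 1 ≤ b) (hβ : 0 < β)
    (hκb : κ * (2 * b) ≤ 1) (hcκ : c * (8 * b) ≤ κ) {y y' : ℝ} {q p q' p' : ℤ}
    (hq : 1 ≤ q) (hq' : 1 ≤ q')
    (hlow : κ * β ≤ (q : ℝ) ^ 2) (hhigh : (q : ℝ) ^ 2 < κ * (β * b))
    (hlow' : κ * β ≤ (q' : ℝ) ^ 2) (hhigh' : (q' : ℝ) ^ 2 < κ * (β * b))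
    (hnear : |y - y'| ≤ 1 / β) (hfar : 1 / (β * b) ≤ |y - y'|) :
    ¬ ((q : ℝ) * |q * y - p| < c ∧ (q' : ℝ) * |q' * y' - p'| < c) := by
  rintro ⟨hbad, hbad'⟩
  have hb0 : 0 < b := by linarith
  have hq0 : (0 : ℝ) < q := by exact_mod_cast hq
  have hq0' : (0 : ℝ) < q' := by exact_mod_cast hq'
  have hclose := abs_sub_div_le_of_mul_abs_lt hb0 hβ hcκ hq hlow hbad
  have hclose' := abs_sub_div_le_of_mul_abs_lt hb0 hβ hcκ hq' hlow' hbad'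
  have heighth : 1 / (8 * b * β) = 1 / (β * b) / 8 := by field_simp
  have hpos : 0 < 1 / (β * b) := by positivity
  have hshort : 1 / (β * b) ≤ 1 / β := one_div_le_one_div_of_le hβ (le_mul_of_one_le_right hβ.le hb)
  rw [heighth] at hclose hclose'
  rw [abs_le] at hclose hclose'
  have hne : (p : ℝ) / q ≠ p' / q' := by
    intro h
    have : |y - y'| ≤ 1 / (β * b) / 4 := by rw [abs_le]; constructor <;> linarith
    linarith
  have hgap := one_div_le_abs_div_sub_div hq hq' hne
  have hdist : |(p : ℝ) / q - p' / q'| ≤ 1 / β + 1 / β := by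
    rw [abs_le] at hnear ⊢
    constructor <;> linarith
  have hprod : (q : ℝ) * q' < β / 2 := by nlinarith [sq_nonneg ((q : ℝ) - q')]
  have hlt : 1 / (β / 2) < 1 / ((q : ℝ) * q') := one_div_lt_one_div_of_lt (by positivity) hprod
  have htwo : 1 / (β / 2) = 1 / β + 1 / β := by field_simp; norm_num
  linarith

/-- The children are the `B + 1` intervals with indices `b i + 2 t + 1`, except at most one that
meets the neighbourhood of a rational with denominator in the current window. -/
theorem GoodAdic.exists_isBranching (hb : b = 2 * B + 3) (hκb : κ * (2 * b) ≤ 1)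
    (hcκ : c * (8 * b) ≤ κ) (hG : GoodAdic b κ c K m i) :
    ∃ ch : Fin B → ℤ, (∀ d, GoodAdic b κ c K (m + 1) (ch d)) ∧ IsBranching b m i (m + 1) ch := by
  have hb1 : 1 ≤ b := by omega
  have hβ : (0 : ℝ) < (b : ℝ) ^ m := by positivity
  have hpow : (b : ℝ) ^ (m + 1) = (b : ℝ) ^ m * b := pow_succ _ _
  let ix (t : Fin (B + 1)) : ℤ := b * i + 2 * t + 1
  have hcore (t : Fin (B + 1)) : adicIcc b (m + 1) (ix t) ⊆ adicCore b m i := by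
    have ht : (t : ℤ) ≤ B := by have := t.isLt; omega
    have hbi : (b : ℤ) * (i + 1) = b * i + (2 * B + 3) := by rw [hb]; push_cast; ring
    exact adicIcc_succ_subset_adicCore hb1 (by simp only [ix]; omega) (by simp only [ix]; omega)
  have hsep (t t' : Fin (B + 1)) (hne : t ≠ t') (x : ℝ) (hx : x ∈ adicIcc b (m + 1) (ix t)) (y : ℝ)
      (hy : y ∈ adicIcc b (m + 1) (ix t')) : 1 / (b : ℝ) ^ (m + 1) ≤ |x - y| := by
    rcases lt_or_gt_of_ne hne with h | h
    · exact le_abs_sub_of_mem_adicIcc hb1 (by simp only [ix]; omega) hx hy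
    · rw [abs_sub_comm]
      exact le_abs_sub_of_mem_adicIcc hb1 (by simp only [ix]; omega) hy hx
  obtain ⟨e, he⟩ : ∃ e : Fin (B + 1), ∀ t ≠ e, ∀ y ∈ adicIcc b (m + 1) (ix t), ∀ q p : ℤ, 1 ≤ q →
      κ * (b : ℝ) ^ m ≤ (q : ℝ) ^ 2 → (q : ℝ) ^ 2 < κ * (b : ℝ) ^ (m + 1) →
        c ≤ q * |q * y - p| := by
    by_contra! hcon
    obtain ⟨t', -, y', hy', q', p', hq', hlow', hhigh', hbad'⟩ := hcon 0
    obtain ⟨t, hne, y, hy, q, p, hq, hlow, hhigh, hbad⟩ := hcon t'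
    rw [hpow] at hhigh hhigh'
    refine not_both_close_to_rationals (by exact_mod_cast hb1) hβ hκb hcκ hq hq' hlow hhigh
      hlow' hhigh' ?_ ?_ ⟨hbad, hbad'⟩
    · exact abs_sub_le_of_mem_adicIcc (adicCore_subset_adicIcc (hcore t hy))
        (adicCore_subset_adicIcc (hcore t' hy'))
    · rw [← hpow]
      exact hsep t t' hne y hy y' hy'
  refine ⟨fun d => ix (e.succAbove d), fun d y hy q p hq hK hlt => ?_, fun d => hcore _, ?_⟩
  · rcases lt_or_ge ((q : ℝ) ^ 2) (κ * (b : ℝ) ^ m) with hsmall | hlarge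
    · exact hG y (adicCore_subset_adicIcc (hcore _ hy)) q p hq hK hsmall
    · exact he _ (e.succAbove_ne d) y hy q p hq hlarge hlt
  · exact fun d d' hne => hsep _ _ (fun h => hne (e.succAbove_right_injective h))

theorem GoodAdic.of_le (h : κ * (b : ℝ) ^ m ≤ K) : GoodAdic b κ c K m i :=
  fun _ _ _ _ _ hK hlt => absurd hlt (h.trans hK).not_gt

theorem le_mul_abs_of_forall_goodAdic (hb : 2 ≤ b) (hκ : 0 < κ) {x : ℝ} {L : ℕ → ℕ}
    (hL : ∀ r, r ≤ L r) (hx : ∀ r, ∃ i, GoodAdic b κ c K (L r) i ∧ x ∈ adicIcc b (L r) i)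
    {q : ℤ} (hq : 1 ≤ q) (hK : K ≤ (q : ℝ) ^ 2) (p : ℤ) : c ≤ q * |q * x - p| := by
  have hb1 : (1 : ℝ) < b := by exact_mod_cast hb
  obtain ⟨r, hr⟩ := pow_unbounded_of_one_lt ((q : ℝ) ^ 2 / κ) hb1
  obtain ⟨i, hi, hxi⟩ := hx r
  refine hi x hxi q p hq hK ?_
  calc (q : ℝ) ^ 2 < (b : ℝ) ^ r * κ := (div_lt_iff₀ hκ).mp hr
    _ ≤ (b : ℝ) ^ L r * κ := by gcongr; exacts [hb1.le, hL r]
    _ = κ * (b : ℝ) ^ L r := mul_comm _ _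

end GoodAdic

section CantorCoding

variable {B b : ℕ} {L : ℕ → ℕ}

theorem exists_isCantorCoding {N : ℕ → ℤ → Prop} {i₀ : ℤ} (h₀ : N 0 i₀)
    (hstep : ∀ r i, N r i → ∃ ch : Fin B → ℤ,
      (∀ d, N (r + 1) (ch d)) ∧ IsBranching b (L r) i (L (r + 1)) ch) :
    ∃ x : (ℕ → Fin B) → ℝ, IsCantorCoding b L x ∧
      ∀ d, x d ∈ adicCore b (L 0) i₀ ∧ ∀ r, ∃ i, N r i ∧ x d ∈ adicIcc b (L r) i := by
  choose! ch hN hbranch using hstep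
  let node (d : ℕ → Fin B) : ℕ → ℤ := Nat.rec i₀ fun r i => ch r i (d r)
  have hnode (d : ℕ → Fin B) (r : ℕ) : N r (node d r) := by
    induction r with
    | zero => exact h₀
    | succ r ih => exact hN r _ ih (d r)
  have hcore (d : ℕ → Fin B) (r : ℕ) :
      adicIcc b (L (r + 1)) (node d (r + 1)) ⊆ adicCore b (L r) (node d r) :=
    (hbranch r _ (hnode d r)).subset_core (d r)
  have hinter (d : ℕ → Fin B) : ∃ x, ∀ r, x ∈ adicIcc b (L r) (node d r) := by
    have hanti : Antitone fun r => adicIcc b (L r) (node d r) :=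
      antitone_nat_of_succ_le fun r => (hcore d r).trans adicCore_subset_adicIcc
    have hmem := ciSup_mem_iInter_Icc_of_antitone_Icc hanti fun r => by gcongr; linarith
    exact ⟨_, fun r => Set.mem_iInter.mp hmem r⟩
  choose x hx using hinter
  have hagree {d d' : ℕ → Fin B} {r : ℕ} (h : ∀ k < r, d k = d' k) : node d r = node d' r := by
    induction r with
    | zero => rfl
    | succ r ih =>
      change ch r (node d r) (d r) = ch r (node d' r) (d' r)
      rw [ih fun k hk => h k (by omega), h r (by omega)]
  have hsplit (d d' : ℕ → Fin B) :
      node d (PiNat.firstDiff d d') = node d' (PiNat.firstDiff d d') :=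
    hagree fun k hk => PiNat.apply_eq_of_lt_firstDiff hk
  refine ⟨x, ⟨fun d d' _ => ?_, fun d d' hne => ?_⟩,
    fun d => ⟨hcore d 0 (hx d 1), fun r => ⟨_, hnode d r, hx d r⟩⟩⟩
  · exact abs_sub_le_of_mem_adicIcc (hx d _) (hsplit d d' ▸ hx d' _)
  · have hx' := hx d' (PiNat.firstDiff d d' + 1)
    change x d' ∈ adicIcc b _ (ch _ (node d' _) _) at hx'
    rw [← hsplit] at hx'
    exact (hbranch _ _ (hnode d _)).le_abs_sub _ _ (PiNat.apply_firstDiff_ne hne) _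
      (hx d (PiNat.firstDiff d d' + 1)) _ hx'

theorem exists_isCantorCoding_bad (hb : b = 2 * B + 3) {κ c : ℝ} (hκ : 0 < κ)
    (hκb : κ * (2 * b) ≤ 1) (hcκ : c * (8 * b) ≤ κ) (m : ℕ) (i : ℤ) :
    ∃ x : (ℕ → Fin B) → ℝ, IsCantorCoding b (m + ·) x ∧ ∀ d, x d ∈ adicCore b m i ∧
      ∀ q p : ℤ, 1 ≤ q → κ * (b : ℝ) ^ m ≤ (q : ℝ) ^ 2 → c ≤ q * |q * x d - p| := by
  obtain ⟨x, hx, hmem⟩ := exists_isCantorCoding (B := B) (b := b) (L := (m + ·))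
    (N := fun r => GoodAdic b κ c (κ * (b : ℝ) ^ m) (m + r)) (i₀ := i) (GoodAdic.of_le le_rfl)
    fun r i hi => hi.exists_isBranching hb hκb hcκ
  exact ⟨x, hx, fun d => ⟨(hmem d).1, fun q p hq hK =>
    le_mul_abs_of_forall_goodAdic (by omega) hκ (Nat.le_add_left · m) (hmem d).2 hq hK p⟩⟩

/-- The digit sequence carrying the word `u` at the places `h₀, …, h₀ + h₁ - 1`, padded by zeros. -/
def padDigits [NeZero B] (h₀ : ℕ) {h₁ : ℕ} (u : Fin h₁ → Fin B) (k : ℕ) : Fin B :=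
  if hk : h₀ ≤ k ∧ k < h₀ + h₁ then u ⟨k - h₀, by omega⟩ else 0

theorem padDigits_injective [NeZero B] (h₀ h₁ : ℕ) :
    Function.Injective (padDigits h₀ : (Fin h₁ → Fin B) → ℕ → Fin B) := by
  intro u u' h
  funext k
  simpa [padDigits] using congrFun h (h₀ + k)

theorem firstDiff_padDigits_mem_Ico [NeZero B] {h₀ h₁ : ℕ} {u u' : Fin h₁ → Fin B} (hne : u ≠ u') :
    PiNat.firstDiff (padDigits h₀ u) (padDigits h₀ u') ∈ Set.Ico h₀ (h₀ + h₁) := by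
  by_contra h
  apply PiNat.apply_firstDiff_ne ((padDigits_injective h₀ h₁).ne hne)
  rw [Set.mem_Ico] at h
  rw [padDigits, padDigits, dif_neg h, dif_neg h]

theorem exists_bad_cluster [NeZero B] (hb : b = 2 * B + 3) (h₀ h₁ : ℕ) :
    ∃ w : (Fin h₁ → Fin B) → ℝ,
      (∀ u, w u ∈ Set.Icc 1 2 ∧ BadWith (1 / (16 * (b : ℝ) ^ 2)) (w u)) ∧
      ∀ u u', u ≠ u' → |w u - w u'| ≤ 1 / (b : ℝ) ^ h₀ ∧
        1 / (b : ℝ) ^ (h₀ + h₁) ≤ |w u - w u'| := by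
  have hb1 : (1 : ℝ) ≤ b := by exact_mod_cast (by omega : 1 ≤ b)
  obtain ⟨x, hx, hmem⟩ := exists_isCantorCoding_bad hb (κ := 1 / (2 * b))
    (c := 1 / (16 * (b : ℝ) ^ 2)) (by positivity) (by field_simp; rfl)
    (by apply le_of_eq; field_simp; norm_num) 0 1
  refine ⟨fun u => x (padDigits h₀ u), fun u => ⟨?_, fun q p hq => ?_⟩, fun u u' hne => ?_⟩
  · have h := adicCore_subset_adicIcc (hmem (padDigits h₀ u)).1
    norm_num [adicIcc] at h ⊢
    exact h
  · refine (hmem _).2 q p hq ?_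
    have hq1 : (1 : ℝ) ≤ q := by exact_mod_cast hq
    calc 1 / (2 * (b : ℝ)) * (b : ℝ) ^ 0 ≤ 1 := by
          rw [pow_zero, mul_one, div_le_one (by positivity)]; linarith
      _ ≤ (q : ℝ) ^ 2 := one_le_pow₀ hq1
  · have hne' := (padDigits_injective h₀ h₁).ne hne
    obtain ⟨hlow, hhigh⟩ := firstDiff_padDigits_mem_Ico (h₀ := h₀) hne
    constructor
    · refine (hx.abs_sub_le _ _ hne').trans (one_div_le_one_div_of_le (by positivity) ?_)
      exact pow_le_pow_right₀ hb1 (by omega)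
    · refine le_trans (one_div_le_one_div_of_le (by positivity) ?_) (hx.le_abs_sub _ _ hne')
      exact pow_le_pow_right₀ hb1 (by omega)

end CantorCoding

namespace IsCantorCoding

variable {B b : ℕ} {L : ℕ → ℕ} {x : (ℕ → Fin B) → ℝ}

theorem injective (hx : IsCantorCoding b L x) (hb : 0 < b) : Function.Injective x := by
  intro d d' hdd
  by_contra hne
  have h := hx.le_abs_sub d d' hne
  rw [hdd, sub_self, abs_zero] at h
  exact absurd h (by positivity : 0 < 1 / (b : ℝ) ^ (L (PiNat.firstDiff d d') + 1)).not_ge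

theorem abs_ofDigits_sub_le (hx : IsCantorCoding b L x) (hb : 0 < b) {s s₁ : ℝ} (hs : 0 < s)
    (hs₁ : (b : ℝ) ^ s₁ ≤ B) (hL : ∀ r, s * L r ≤ s₁ * r) (d d' : ℕ → Fin B) :
    |ofDigits d - ofDigits d'| ≤ (b : ℝ) ^ s * |x d - x d'| ^ s := by
  have hb0 : (0 : ℝ) < b := by exact_mod_cast hb
  have hb1 : (1 : ℝ) ≤ b := by exact_mod_cast hb
  rcases eq_or_ne d d' with rfl | hne
  · simp only [sub_self, abs_zero]
    positivity
  set r := PiNat.firstDiff d d'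
  have hpow : (b : ℝ) ^ (s * L r) ≤ (B : ℝ) ^ r :=
    calc (b : ℝ) ^ (s * L r) ≤ (b : ℝ) ^ (s₁ * r) := rpow_le_rpow_of_exponent_le hb1 (hL r)
      _ = ((b : ℝ) ^ s₁) ^ r := by rw [rpow_mul hb0.le, rpow_natCast]
      _ ≤ (B : ℝ) ^ r := by gcongr
  calc |ofDigits d - ofDigits d'| ≤ ((B : ℝ) ^ r)⁻¹ :=
        abs_ofDigits_sub_ofDigits_le fun k hk => PiNat.apply_eq_of_lt_firstDiff hk
    _ ≤ ((b : ℝ) ^ (s * L r))⁻¹ := inv_anti₀ (by positivity) hpow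
    _ = (b * (1 / (b : ℝ) ^ (L r + 1))) ^ s := by
        rw [pow_succ, show (b : ℝ) * (1 / ((b : ℝ) ^ L r * b)) = ((b : ℝ) ^ L r)⁻¹ by field_simp,
          inv_rpow (by positivity), ← rpow_natCast, ← rpow_mul hb0.le, mul_comm]
    _ = (b : ℝ) ^ s * (1 / (b : ℝ) ^ (L r + 1)) ^ s := mul_rpow hb0.le (by positivity)
    _ ≤ (b : ℝ) ^ s * |x d - x d'| ^ s := by
        gcongr
        exact hx.le_abs_sub d d' hne

/-- The base-`B` expansion turns the coded set into `[0, 1]` by an `s`-Hölder map. -/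
theorem le_dimH_range (hx : IsCantorCoding b L x) (hb : 0 < b) (hB : 2 ≤ B) {s : NNReal} {s₁ : ℝ}
    (hs : 0 < s) (hs₁ : (b : ℝ) ^ s₁ ≤ B) (hL : ∀ r, s * L r ≤ s₁ * r) :
    (s : ENNReal) ≤ dimH (Set.range x) := by
  have : NeZero B := ⟨by omega⟩
  have hleft := Function.leftInverse_invFun (hx.injective hb)
  have hholder : HolderOnWith ((b : NNReal) ^ (s : ℝ)) s (ofDigits ∘ Function.invFun x)
      (Set.range x) := by
    rintro _ ⟨d, rfl⟩ _ ⟨d', rfl⟩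
    rw [Function.comp_apply, Function.comp_apply, hleft, hleft, edist_dist, edist_dist, dist_eq,
      dist_eq, ENNReal.ofReal_rpow_of_nonneg (abs_nonneg _) s.coe_nonneg,
      ← ENNReal.ofReal_coe_nnreal, ← ENNReal.ofReal_mul (NNReal.coe_nonneg _)]
    refine ENNReal.ofReal_le_ofReal ?_
    simpa using hx.abs_ofDigits_sub_le hb (NNReal.coe_pos.mpr hs) hs₁ hL d d'
  have hsurj : Set.Icc (0 : ℝ) 1 ⊆ (ofDigits ∘ Function.invFun x) '' Set.range x := by
    intro y hy
    obtain ⟨d, -, hd⟩ := ofDigits_SurjOn (b := B) (by omega) hy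
    exact ⟨x d, ⟨d, rfl⟩, by rw [Function.comp_apply, hleft, hd]⟩
  have hIcc : dimH (Set.Icc (0 : ℝ) 1) = 1 := by
    rw [dimH_of_nonempty_interior (by rw [interior_Icc]; exact ⟨1 / 2, by norm_num⟩)]
    simp
  have hle : 1 ≤ dimH (Set.range x) / s :=
    hIcc ▸ (dimH_mono hsurj).trans (hholder.dimH_image_le hs)
  rw [ENNReal.le_div_iff_mul_le (.inl (by exact_mod_cast hs.ne')) (.inl ENNReal.coe_ne_top)] at hle
  simpa using hle

end IsCantorCoding

/-! ### Möbius images of badly approximable numbers -/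

section Mobius

/-- An integer matrix of determinant `1` whose first column approximates `y` by the fraction `a / c`
with denominator at most `V`; the second column is an earlier approximation `b / d`. -/
structure IsDirichletMatrix (V y : ℝ) (a b c d : ℤ) : Prop where
  det_eq_one : a * d - b * c = 1
  one_le_d : (1 : ℝ) ≤ d
  d_le_c : (d : ℝ) ≤ c
  c_le : (c : ℝ) ≤ V
  abs_mul_sub_le : |c * y - a| ≤ 1 / V

theorem exists_det_eq_one {a c : ℤ} (hc : 0 < c) (hac : IsCoprime a c) :
    ∃ b d : ℤ, a * d - b * c = 1 ∧ 1 ≤ d ∧ d ≤ c := by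
  obtain ⟨u, v, huv⟩ := hac
  obtain ⟨m, hm, -⟩ := existsUnique_add_zsmul_mem_Ioc hc u 0
  rw [zero_add, smul_eq_mul, Set.mem_Ioc] at hm
  exact ⟨a * m - v, u + m * c, by linear_combination huv, hm.1, hm.2⟩

theorem exists_isDirichletMatrix {V : ℝ} (hV : 1 ≤ V) (y : ℝ) :
    ∃ a b c d : ℤ, IsDirichletMatrix V y a b c d := by
  obtain ⟨t, ht, htV⟩ := exists_rat_abs_sub_le_and_den_le y (Nat.floor_pos.mpr hV)
  obtain ⟨b, d, hdet, hd, hdc⟩ := exists_det_eq_one (by exact_mod_cast t.pos)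
    (Rat.isCoprime_num_den t)
  refine ⟨t.num, b, t.den, d, hdet, by exact_mod_cast hd, by exact_mod_cast hdc, ?_, ?_⟩
  · exact (by exact_mod_cast htV : ((t.den : ℤ) : ℝ) ≤ ⌊V⌋₊).trans (Nat.floor_le (by linarith))
  · have hden : (0 : ℝ) < t.den := by exact_mod_cast t.pos
    have hnum : (t.num : ℝ) = t.den * t := by exact_mod_cast (Rat.den_mul_eq_num t).symm
    rw [Int.cast_natCast, hnum, ← mul_sub, abs_mul, abs_of_pos hden]
    calc (t.den : ℝ) * |y - t| ≤ t.den * (1 / ((⌊V⌋₊ + 1) * t.den)) := by gcongr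
      _ = 1 / (⌊V⌋₊ + 1) := by field_simp
      _ ≤ 1 / V := one_div_le_one_div_of_le (by linarith) (Nat.lt_floor_add_one V).le

variable {a b c d : ℤ} {c₀ z : ℝ}

theorem mobius_mul_sub {a b c d z q p : ℝ} (hden : c * z + d ≠ 0) :
    q * ((a * z + b) / (c * z + d)) - p =
      ((a * q - c * p) * z - (d * p - b * q)) / (c * z + d) := by
  rw [eq_div_iff hden, sub_mul, mul_assoc, div_mul_cancel₀ _ hden]
  ring

/-- In the coordinates `q = c r + d s`, `p = a r + b s` the approximation error of the image of `z`
by `p / q` is that of `z` by `r / s`, up to the factor `c z + d`. -/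
theorem exists_coords_of_det_eq_one (hdet : a * d - b * c = 1) (hden : 0 < c * z + d) (q p : ℤ) :
    ∃ r s : ℤ, q = c * r + d * s ∧ s = a * q - c * p ∧
      |q * ((a * z + b) / (c * z + d)) - p| = |s * z - r| / (c * z + d) := by
  refine ⟨d * p - b * q, a * q - c * p, by linear_combination (-q) * hdet, rfl, ?_⟩
  rw [mobius_mul_sub hden.ne', abs_div, abs_of_pos hden]
  push_cast
  rfl

theorem BadWith.mul_le_of_den_le (hz : BadWith c₀ z) (hc₁ : c₀ ≤ 1) (hz1 : 1 ≤ z)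
    (hd : (1 : ℝ) ≤ d) (hdc : (d : ℝ) ≤ c) {q r s : ℤ} (hq : c ≤ q) (hqrs : q = c * r + d * s) :
    c₀ * c / 2 ≤ q * |s * z - r| := by
  have hqrs' : (q : ℝ) = c * r + d * s := by exact_mod_cast hqrs
  have hq' : (c : ℝ) ≤ q := by exact_mod_cast hq
  have hc : (0 : ℝ) < c := by linarith
  suffices h : c₀ * c ≤ 2 * q * |s * z - r| by linarith
  rcases le_or_gt (|(s : ℝ)| * c) (2 * q) with hs | hs
  · rcases eq_or_ne s 0 with rfl | hs0
    · have hr : (1 : ℝ) ≤ |(r : ℝ)| := by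
        have : r ≠ 0 := by rintro rfl; push_cast at hqrs'; linarith
        exact_mod_cast Int.one_le_abs this
      rw [Int.cast_zero, zero_mul, zero_sub, abs_neg]
      nlinarith
    · calc c₀ * c ≤ |(s : ℝ)| * |s * z - r| * c := by gcongr; exact hz.le_abs_mul_abs hs0 r
        _ = |(s : ℝ)| * c * |s * z - r| := by ring
        _ ≤ 2 * q * |s * z - r| := by gcongr
  · have hlower : (c : ℝ) * |(s : ℝ)| - q ≤ c * |s * z - r| := by
      have hsplit : c * (s * z - r) = s * (c * z + d) - q := by rw [hqrs']; ring
      have habs : c * |s * z - r| = |s * (c * z + d) - q| := by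
        rw [← hsplit, abs_mul, abs_of_pos hc]
      refine le_trans ?_ ((abs_sub_abs_le_abs_sub _ _).trans_eq habs.symm)
      have hden : 0 < c * z + d := by nlinarith
      rw [abs_mul, abs_of_pos hden, abs_of_pos (by linarith : (0 : ℝ) < q)]
      nlinarith [abs_nonneg (s : ℝ), mul_le_mul_of_nonneg_left hz1 hc.le]
    have hone : 1 ≤ |s * z - r| := by
      refine le_of_mul_le_mul_left ?_ hc
      linarith
    nlinarith

theorem one_le_and_abs_le_of_lt_den (hz1 : 1 ≤ z) (hd : 1 ≤ d) (hdc : d ≤ c) {q r s : ℤ}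
    (hq1 : 1 ≤ q) (hq : q < c) (hqrs : q = c * r + d * s) :
    1 ≤ |s * z - r| ∧ |(s : ℝ)| ≤ |s * z - r| := by
  rcases lt_trichotomy s 0 with hs | rfl | hs
  · have hr : (1 : ℝ) ≤ r := by exact_mod_cast (by by_contra! hr; nlinarith : 1 ≤ r)
    have hs' : (s : ℝ) < 0 := by exact_mod_cast hs
    rw [abs_of_neg hs', abs_of_nonpos (by nlinarith)]
    constructor <;> nlinarith
  · have hr : 1 ≤ r := by by_contra! hr; nlinarith
    nlinarith
  · have hr : (r : ℝ) ≤ 0 := by exact_mod_cast (by by_contra! hr; nlinarith : r ≤ 0)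
    have hs' : (1 : ℝ) ≤ s := by exact_mod_cast hs
    have hsz : (s : ℝ) ≤ s * z := by nlinarith
    rw [abs_of_pos (by linarith), abs_of_nonneg (by linarith)]
    constructor <;> linarith

theorem mul_le_of_lt_den (hc₀ : 0 ≤ c₀) (hz1 : 1 ≤ z) (hd : 1 ≤ d) (hdc : d ≤ c)
    {y : ℝ} (hy : |c * y - a| ≤ 1 / c) {q p r s : ℤ} (hq1 : 1 ≤ q) (hq : q < c)
    (hqrs : q = c * r + d * s) (hs : s = a * q - c * p) (hbad : c₀ ≤ q * |q * y - p|) :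
    c₀ * c / 2 ≤ q * |s * z - r| := by
  obtain ⟨hone, hle⟩ := one_le_and_abs_le_of_lt_den hz1 hd hdc hq1 hq hqrs
  have hc : (0 : ℝ) < c := by exact_mod_cast (by omega : 0 < c)
  have hq0 : (0 : ℝ) < q := by exact_mod_cast hq1
  rcases le_or_gt (c₀ * c / 2) q with hlarge | hsmall
  · nlinarith
  have hs' : |c * (q * y - p)| ≤ |(s : ℝ)| + q * |c * y - a| := by
    have hsplit : c * (q * y - p) = s + q * (c * y - a) := by rw [hs]; push_cast; ring
    rw [hsplit, ← abs_of_pos hq0, ← abs_mul, abs_of_pos hq0]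
    exact abs_add_le _ _
  rw [abs_mul, abs_of_pos hc] at hs'
  have hqc : q * (q * |c * y - a|) ≤ c₀ * c / 2 := by
    calc q * (q * |c * y - a|) ≤ c * (c₀ * c / 2 * (1 / c)) := by
          have : (q : ℝ) ≤ c := by exact_mod_cast hq.le
          gcongr
      _ = c₀ * c / 2 := by field_simp
  calc c₀ * c / 2 ≤ c * (q * |q * y - p|) - q * (q * |c * y - a|) := by nlinarith
    _ = q * (c * |q * y - p| - q * |c * y - a|) := by ring
    _ ≤ q * |s * z - r| := by gcongr; linarith

namespace IsDirichletMatrix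

variable {V y Z : ℝ} {q p : ℤ}

theorem c_pos (h : IsDirichletMatrix V y a b c d) : (0 : ℝ) < c := by
  linarith [h.one_le_d, h.d_le_c]

theorem abs_mul_sub_le_one_div (h : IsDirichletMatrix V y a b c d) : |c * y - a| ≤ 1 / c :=
  h.abs_mul_sub_le.trans (one_div_le_one_div_of_le h.c_pos h.c_le)

theorem mul_add_pos (h : IsDirichletMatrix V y a b c d) (hz1 : 1 ≤ z) : 0 < c * z + d := by
  nlinarith [h.one_le_d, h.c_pos]

theorem abs_mobius_sub_le (h : IsDirichletMatrix V y a b c d) (hz1 : 1 ≤ z) :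
    |(a * z + b) / (c * z + d) - y| ≤ 2 / (c : ℝ) ^ 2 := by
  have hc := h.c_pos
  have hden := h.mul_add_pos hz1
  have hdet : (a : ℝ) * d - b * c = 1 := by exact_mod_cast h.det_eq_one
  have hsplit : (a * z + b) / (c * z + d) - y = -(1 / (c * (c * z + d))) - (c * y - a) / c := by
    have hquot : (a * z + b) / (c * z + d) = a / c - 1 / (c * (c * z + d)) := by
      rw [div_sub_div _ _ hc.ne' (by positivity), div_eq_div_iff hden.ne' (by positivity)]
      linear_combination (-(c * (c * z + d))) * hdet
    rw [hquot, sub_div, mul_div_cancel_left₀ y hc.ne']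
    ring
  have hfirst : 1 / ((c : ℝ) * (c * z + d)) ≤ 1 / (c : ℝ) ^ 2 := by
    apply one_div_le_one_div_of_le (by positivity)
    nlinarith [h.one_le_d]
  calc |(a * z + b) / (c * z + d) - y| ≤ 1 / (c * (c * z + d)) + |c * y - a| / c := by
        rw [hsplit]
        refine (abs_sub _ _).trans_eq ?_
        rw [abs_neg, abs_of_pos (by positivity), abs_div, abs_of_pos hc]
    _ ≤ 1 / (c : ℝ) ^ 2 + 1 / c / c := by gcongr; exact h.abs_mul_sub_le_one_div
    _ = 2 / (c : ℝ) ^ 2 := by field_simp; norm_num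

theorem le_mul_abs_mobius (h : IsDirichletMatrix V y a b c d) (hc₀ : 0 ≤ c₀) (hc₁ : c₀ ≤ 1)
    (hz1 : 1 ≤ z) (hzZ : z ≤ Z) (hz : BadWith c₀ z) (hq : 1 ≤ q)
    (hsmall : q < c → c₀ ≤ q * |q * y - p|) :
    c₀ / (2 * (Z + 1)) ≤ q * |q * ((a * z + b) / (c * z + d)) - p| := by
  have hden := h.mul_add_pos hz1
  obtain ⟨r, s, hqrs, hs, habs⟩ := exists_coords_of_det_eq_one h.det_eq_one hden q p
  have hkey : c₀ * c / 2 ≤ q * |s * z - r| := by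
    rcases le_or_gt c q with hcq | hqc
    · exact hz.mul_le_of_den_le hc₁ hz1 h.one_le_d h.d_le_c hcq hqrs
    · exact mul_le_of_lt_den hc₀ hz1 (by exact_mod_cast h.one_le_d)
        (by exact_mod_cast h.d_le_c) h.abs_mul_sub_le_one_div hq hqc hqrs hs (hsmall hqc)
  have hdenZ : c * z + d ≤ c * (Z + 1) := by nlinarith [h.c_pos, h.d_le_c]
  rw [habs, ← mul_div_assoc, div_le_div_iff₀ (by linarith) hden]
  calc c₀ * (c * z + d) ≤ c₀ * (c * (Z + 1)) := by gcongr
    _ = c₀ * c / 2 * (2 * (Z + 1)) := by ring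
    _ ≤ q * |s * z - r| * (2 * (Z + 1)) := by gcongr; linarith

theorem abs_snd_mul_sub_le (h : IsDirichletMatrix V y a b c d) : |d * y - b| ≤ 2 / c := by
  have hc := h.c_pos
  have hd := h.one_le_d
  have hdet : (a : ℝ) * d - b * c = 1 := by exact_mod_cast h.det_eq_one
  have hsplit : d * y - b = (d * (c * y - a) + 1) / c := by
    rw [eq_div_iff hc.ne']; linear_combination hdet
  have hfirst : |d * (c * y - a)| ≤ 1 := by
    rw [abs_mul, abs_of_pos (by linarith)]
    calc (d : ℝ) * |c * y - a| ≤ c * (1 / c) := by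
          exact mul_le_mul h.d_le_c h.abs_mul_sub_le_one_div (abs_nonneg _) hc.le
      _ = 1 := mul_one_div_cancel hc.ne'
  rw [hsplit, abs_div, abs_of_pos hc]
  gcongr
  calc |d * (c * y - a) + 1| ≤ |d * (c * y - a)| + |(1 : ℝ)| := abs_add_le _ _
    _ ≤ 2 := by rw [abs_one]; linarith

theorem mul_le_c (h : IsDirichletMatrix V y a b c d) (hV : 0 < V) (hy : BadWith c₀ y) :
    c₀ * V ≤ c := by
  have hc : (1 : ℤ) ≤ c := by exact_mod_cast h.one_le_d.trans h.d_le_c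
  rw [← le_div_iff₀ hV, div_eq_mul_one_div]
  exact (hy c a hc).trans (mul_le_mul_of_nonneg_left h.abs_mul_sub_le h.c_pos.le)

theorem mul_le_d (h : IsDirichletMatrix V y a b c d) (hy : BadWith c₀ y) : c₀ * c / 2 ≤ d := by
  have hle : c₀ ≤ d * (2 / c) := (hy d b (by exact_mod_cast h.one_le_d)).trans
    (mul_le_mul_of_nonneg_left h.abs_snd_mul_sub_le (by linarith [h.one_le_d]))
  rw [← mul_div_assoc, le_div_iff₀ h.c_pos] at hle
  linarith

theorem c_le_a (h : IsDirichletMatrix V y a b c d) (hV : 2 ≤ V) (hy1 : 1 ≤ y) : c ≤ a := by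
  have herr : 1 / V ≤ 1 / 2 := one_div_le_one_div_of_le two_pos hV
  have hc : (c : ℝ) < a + 1 := by nlinarith [abs_le.mp h.abs_mul_sub_le, h.c_pos]
  exact Int.lt_add_one_iff.mp (by exact_mod_cast hc)

theorem a_le (h : IsDirichletMatrix V y a b c d) (hV : 2 ≤ V) (hy2 : y ≤ 2) : a ≤ 3 * c := by
  have herr : 1 / V ≤ 1 / 2 := one_div_le_one_div_of_le two_pos hV
  have ha : (a : ℝ) ≤ 3 * c := by
    nlinarith [abs_le.mp h.abs_mul_sub_le, h.c_pos, h.one_le_d, h.d_le_c]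
  exact_mod_cast ha

end IsDirichletMatrix

theorem bounds_of_det_eq_one (hdet : a * d - b * c = 1) (hd : 1 ≤ d) (hdc : d ≤ c) (hc : 2 ≤ c)
    (hca : c ≤ a) (ha : a ≤ 3 * c) : d ≤ b ∧ b ≤ a ∧ b ≤ 4 * d := by
  refine ⟨?_, ?_, ?_⟩ <;> by_contra! h <;> nlinarith

/-- A matrix as in `IsDirichletMatrix` for a number `y ∈ [1, 2]` with `BadWith c₀ y`: its entries
are comparable to `V` up to factors depending only on `c₀`. -/
structure IsBadDirichletMatrix (c₀ V y : ℝ) (a b c d : ℤ) : Prop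
    extends IsDirichletMatrix V y a b c d where
  le_c : c₀ * V ≤ c
  le_d : c₀ * c / 2 ≤ d
  c_le_a : (c : ℝ) ≤ a
  a_le : (a : ℝ) ≤ 3 * c
  d_le_b : (d : ℝ) ≤ b
  b_le_a : (b : ℝ) ≤ a
  b_le : (b : ℝ) ≤ 4 * d

theorem exists_isBadDirichletMatrix {V y : ℝ} (hV : 2 ≤ V) (hcV : 1 < c₀ * V) (hy1 : 1 ≤ y)
    (hy2 : y ≤ 2) (hy : BadWith c₀ y) : ∃ a b c d : ℤ, IsBadDirichletMatrix c₀ V y a b c d := by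
  obtain ⟨a, b, c, d, h⟩ := exists_isDirichletMatrix (by linarith : 1 ≤ V) y
  have hcV' : c₀ * V ≤ c := h.mul_le_c (by linarith) hy
  have hc : (1 : ℝ) < c := by linarith
  obtain ⟨hdb, hba, hb⟩ := bounds_of_det_eq_one h.det_eq_one (by exact_mod_cast h.one_le_d)
    (by exact_mod_cast h.d_le_c) (by exact_mod_cast hc) (h.c_le_a hV hy1) (h.a_le hV hy2)
  exact ⟨a, b, c, d, h, hcV', h.mul_le_d hy, by exact_mod_cast h.c_le_a hV hy1,
    by exact_mod_cast h.a_le hV hy2, by exact_mod_cast hdb, by exact_mod_cast hba,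
    by exact_mod_cast hb⟩

theorem abs_le_abs_mul_sub_of_mul_neg {r s : ℝ} (hz1 : 1 ≤ z) (hrs : r * s < 0) :
    |r| ≤ |s * z - r| := by
  rcases lt_or_ge r 0 with hr | hr
  · have hs : 0 < s := by by_contra! hs; nlinarith
    rw [abs_of_neg hr]
    exact le_trans (by nlinarith) (le_abs_self _)
  · have hs : s < 0 := by by_contra! hs; nlinarith
    rw [abs_of_nonneg hr]
    exact le_trans (by nlinarith) (neg_le_abs _)

namespace IsBadDirichletMatrix

variable {V y : ℝ}

theorem badWith_mobius (h : IsBadDirichletMatrix c₀ V y a b c d) (hc₀ : 0 ≤ c₀) (hc₁ : c₀ ≤ 1)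
    (hy : BadWith c₀ y) (hz1 : 1 ≤ z) (hz2 : z ≤ 2) (hz : BadWith c₀ z) :
    BadWith (c₀ / 6) ((a * z + b) / (c * z + d)) := by
  intro q p hq
  have hle := h.le_mul_abs_mobius hc₀ hc₁ hz1 hz2 hz hq fun _ => hy q p hq
  norm_num at hle
  exact hle

theorem mul_le_of_mul_neg (h : IsBadDirichletMatrix c₀ V y a b c d) (hc₀ : 0 ≤ c₀) (hc₁ : c₀ ≤ 1)
    (hy : BadWith c₀ y) (hz1 : 1 ≤ z) {q r s : ℤ} (hq : 1 ≤ q) (hqrs : q = b * r + d * s)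
    (hrs : r * s < 0) : c₀ * d / 2 ≤ q * |s * z - r| := by
  have hd := h.one_le_d
  have hq' : (1 : ℝ) ≤ q := by exact_mod_cast hq
  have hr0 : r ≠ 0 := by rintro rfl; simp at hrs
  have hle : |(r : ℝ)| ≤ |s * z - r| :=
    abs_le_abs_mul_sub_of_mul_neg hz1 (by exact_mod_cast hrs)
  rcases le_or_gt (c₀ * d / 2) |(r : ℝ)| with hlarge | hsmall
  · nlinarith [abs_nonneg (r : ℝ)]
  have hbad : c₀ ≤ |(r : ℝ)| * |r * y + s| := by
    simpa using hy.le_abs_mul_abs hr0 (-s)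
  have hlower : d * |r * y + s| - |(r : ℝ)| * (2 / c) ≤ q := by
    have hsplit : (q : ℝ) = d * (r * y + s) - r * (d * y - b) := by rw [hqrs]; push_cast; ring
    have hsub := abs_sub_abs_le_abs_sub (d * (r * y + s)) (r * (d * y - b))
    rw [← hsplit, abs_mul, abs_mul, abs_of_pos (by linarith : (0 : ℝ) < d),
      abs_of_pos (by linarith : (0 : ℝ) < q)] at hsub
    linarith [mul_le_mul_of_nonneg_left h.abs_snd_mul_sub_le (abs_nonneg (r : ℝ))]
  have herr : |(r : ℝ)| * (|(r : ℝ)| * (2 / c)) ≤ c₀ * d / 2 := by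
    calc |(r : ℝ)| * (|(r : ℝ)| * (2 / c)) ≤ c₀ * d / 2 * (c₀ * d / 2 * (2 / d)) := by
          have hc := h.c_pos
          have hdc : 2 / (c : ℝ) ≤ 2 / d :=
            div_le_div_of_nonneg_left two_pos.le (by linarith) h.d_le_c
          gcongr
      _ = c₀ * (c₀ * d / 2) := by field_simp
      _ ≤ c₀ * d / 2 := mul_le_of_le_one_left (by positivity) hc₁
  calc c₀ * d / 2 ≤ d * (|(r : ℝ)| * |r * y + s|) - |(r : ℝ)| * (|(r : ℝ)| * (2 / c)) := by
        nlinarith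
    _ = |(r : ℝ)| * (d * |r * y + s| - |(r : ℝ)| * (2 / c)) := by ring
    _ ≤ |(r : ℝ)| * q := by gcongr
    _ ≤ q * |s * z - r| := by rw [mul_comm]; gcongr

theorem mul_le_of_mul_nonneg (h : IsBadDirichletMatrix c₀ V y a b c d) {c₁ : ℝ} (hc₁ : c₁ ≤ 1)
    {q r s : ℤ} (hz : BadWith c₁ z) (hq : 1 ≤ q) (hqrs : q = b * r + d * s)
    (hrs : 0 ≤ r * s) : c₁ * d ≤ q * |s * z - r| := by
  have hd : 1 ≤ d := by exact_mod_cast h.one_le_d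
  have hdb : d ≤ b := by exact_mod_cast h.d_le_b
  have hr : 0 ≤ r := by
    by_contra! hr
    have : s ≤ 0 := by by_contra! hs; nlinarith
    nlinarith
  have hs : 0 ≤ s := by
    by_contra! hs
    have : r ≤ 0 := by by_contra! hr; nlinarith
    nlinarith
  rcases hs.eq_or_lt with rfl | hs
  · have hr1 : 1 ≤ r := by by_contra! hr; nlinarith
    have hr1' : (1 : ℝ) ≤ r := by exact_mod_cast hr1
    have hdq : (d : ℝ) ≤ q := by exact_mod_cast (by nlinarith : d ≤ q)
    rw [Int.cast_zero, zero_mul, zero_sub, abs_neg, abs_of_pos (by linarith)]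
    nlinarith [h.one_le_d]
  · have hdq : (d : ℝ) * s ≤ q := by exact_mod_cast (by nlinarith : d * s ≤ q)
    calc c₁ * d ≤ s * |s * z - r| * d :=
          mul_le_mul_of_nonneg_right (hz s r hs) (by linarith [h.one_le_d])
      _ = d * s * |s * z - r| := by ring
      _ ≤ q * |s * z - r| := by gcongr

theorem badWith_transpose_mobius (h : IsBadDirichletMatrix c₀ V y a b c d) {c₁ : ℝ} (hc₁ : 0 ≤ c₁)
    (hc₁₀ : c₁ ≤ c₀) (hc₀ : c₀ ≤ 1) (hy : BadWith c₀ y) (hz1 : 1 ≤ z) (hz4 : z ≤ 4)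
    (hz : BadWith c₁ z) : BadWith (c₁ / 34) ((a * z + c) / (b * z + d)) := by
  intro q p hq
  have hd := h.one_le_d
  have hden : 0 < b * z + d := by nlinarith [h.d_le_b]
  obtain ⟨r, s, hqrs, -, habs⟩ := exists_coords_of_det_eq_one (a := a) (b := c) (c := b) (d := d)
    (by linear_combination h.det_eq_one) hden q p
  have hkey : c₁ * d / 2 ≤ q * |s * z - r| := by
    rcases lt_or_ge (r * s) 0 with hrs | hrs
    · have := h.mul_le_of_mul_neg (hc₁.trans hc₁₀) hc₀ hy hz1 hq hqrs hrs
      nlinarith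
    · have := h.mul_le_of_mul_nonneg (hc₁₀.trans hc₀) hz hq hqrs hrs
      nlinarith
  have hden17 : b * z + d ≤ 17 * d := by nlinarith [h.d_le_b, h.b_le]
  rw [habs, ← mul_div_assoc, div_le_div_iff₀ (by norm_num) hden]
  nlinarith

end IsBadDirichletMatrix

end Mobius

/-! ### Exponential sums over nearly affine families -/

open scoped FourierTransform

section ExponentialSums

theorem re_fourierChar (t : ℝ) : (𝐞 t : ℂ).re = cos (2 * π * t) := by
  rw [Real.fourierChar_apply, Complex.exp_ofReal_mul_I_re]

theorem norm_fourierChar_sub_le (s t : ℝ) : ‖(𝐞 s : ℂ) - 𝐞 t‖ ≤ 2 * π * |s - t| := by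
  have hfactor : (𝐞 s : ℂ) - 𝐞 t = 𝐞 t * (𝐞 (s - t) - 1) := by
    rw [mul_sub, ← Circle.coe_mul, ← AddChar.map_add_eq_mul, add_sub_cancel, mul_one]
  rw [hfactor, norm_mul, Circle.norm_coe, one_mul, Real.fourierChar_apply, mul_comm _ Complex.I]
  refine norm_exp_I_mul_ofReal_sub_one_le.trans_eq ?_
  rw [norm_eq_abs, abs_mul, abs_of_pos two_pi_pos]

theorem fourierChar_sub_round (t : ℝ) : 𝐞 (t - round t) = 𝐞 t := by
  ext
  rw [Real.fourierChar_apply, Real.fourierChar_apply]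
  refine Eq.trans ?_ (Complex.exp_periodic.sub_int_mul_eq (round t))
  push_cast
  congr 1
  ring

theorem four_mul_dni_le_norm_fourierChar_sub_one (t : ℝ) : 4 * dni t ≤ ‖(𝐞 t : ℂ) - 1‖ := by
  have hhalf : 2 * π * (t - round t) / 2 = π * (t - round t) := by ring
  have hle : |π * (t - round t)| ≤ π / 2 := by
    rw [abs_mul, abs_of_pos pi_pos]
    nlinarith [pi_pos, abs_sub_round t]
  have hsin := Real.mul_abs_le_abs_sin hle
  rw [abs_mul, abs_of_pos pi_pos, ← mul_assoc, div_mul_cancel₀ _ pi_ne_zero] at hsin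
  rw [← fourierChar_sub_round, Real.fourierChar_apply, mul_comm _ Complex.I,
    Complex.norm_exp_I_mul_ofReal_sub_one, norm_eq_abs, abs_mul, abs_two, hhalf, dni]
  linarith

theorem fourierChar_natCast_mul (n : ℕ) (t : ℝ) : (𝐞 (n * t) : ℂ) = (𝐞 t : ℂ) ^ n := by
  rw [← nsmul_eq_mul, AddChar.map_nsmul_eq_pow, Circle.coe_pow]

theorem norm_geom_sum_fourierChar_mul_dni_le (N : ℕ) (t : ℝ) :
    ‖∑ j ∈ Finset.range N, (𝐞 (j * t) : ℂ)‖ * (2 * dni t) ≤ 1 := by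
  have hgeom : (∑ j ∈ Finset.range N, (𝐞 (j * t) : ℂ)) * (𝐞 t - 1) = (𝐞 t : ℂ) ^ N - 1 := by
    simp only [fourierChar_natCast_mul, geom_sum_mul]
  have hnorm : ‖∑ j ∈ Finset.range N, (𝐞 (j * t) : ℂ)‖ * ‖(𝐞 t : ℂ) - 1‖ ≤ 2 := by
    rw [← norm_mul, hgeom]
    refine (norm_sub_le _ _).trans ?_
    rw [norm_pow, Circle.norm_coe, one_pow, norm_one, one_add_one_eq_two]
  have := (mul_le_mul_of_nonneg_left (four_mul_dni_le_norm_fourierChar_sub_one t)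
    (norm_nonneg _)).trans hnorm
  linarith

theorem norm_sum_fourierChar_sq {ι : Type*} (s : Finset ι) (x : ι → ℝ) :
    ‖∑ a ∈ s, (𝐞 (x a) : ℂ)‖ ^ 2 = ∑ a ∈ s, ∑ a' ∈ s, (𝐞 (x a - x a') : ℂ).re := by
  simp only [← Complex.re_sum]
  rw [← Complex.ofReal_re (_ ^ 2), Complex.ofReal_pow, ← Complex.mul_conj', map_sum,
    Finset.sum_mul_sum]
  congr! 5 with a _ a' _
  rw [← Circle.coe_inv_eq_conj, ← AddChar.map_neg_eq_inv, ← Circle.coe_mul,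
    ← AddChar.map_add_eq_mul, sub_eq_add_neg]

theorem norm_sum_fourierChar_le_add {ι : Type*} [Fintype ι] {x y : ι → ℝ} {h : ℝ}
    (hxy : ∀ l, |x l - y l| ≤ h) :
    ‖∑ l, (𝐞 (x l) : ℂ)‖ ≤ ‖∑ l, (𝐞 (y l) : ℂ)‖ + Fintype.card ι * (2 * π * h) := by
  rw [← sub_le_iff_le_add']
  refine (norm_sub_norm_le _ _).trans ?_
  rw [← Finset.sum_sub_distrib, ← Finset.card_univ, ← nsmul_eq_mul, ← Finset.sum_const]
  refine norm_sum_le_of_le _ fun l _ => (norm_fourierChar_sub_le _ _).trans ?_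
  exact mul_le_mul_of_nonneg_left (hxy l) two_pi_pos.le

theorem mul_card_sub_le_sum_norm_sum_fourierChar_sq {Ω : Type*} [Fintype Ω] (u : Ω → ℝ) (N : ℕ)
    {δ : ℝ} (hδ : 0 ≤ δ) (h : ∀ k : ℕ, 1 ≤ k → k < N → ‖∑ ω, (𝐞 (k * u ω) : ℂ)‖ ≤ δ) :
    N * Fintype.card Ω - N ^ 2 * δ ≤ ∑ ω, ‖∑ j ∈ Finset.range N, (𝐞 (j * u ω) : ℂ)‖ ^ 2 := by
  have hoff : ∀ j j' : ℕ, j' < j → j < N → -δ ≤ ∑ ω, (𝐞 (j * u ω - j' * u ω) : ℂ).re := by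
    intro j j' hlt hj
    have hk := h (j - j') (by lia) (by lia)
    simp only [Nat.cast_sub hlt.le, sub_mul] at hk
    rw [← Complex.re_sum]
    exact (abs_le.mp ((Complex.abs_re_le_norm _).trans hk)).1
  have hterm : ∀ j ∈ Finset.range N, ∀ j' ∈ Finset.range N,
      (if j = j' then (Fintype.card Ω : ℝ) else 0) - δ ≤
        ∑ ω, (𝐞 (j * u ω - j' * u ω) : ℂ).re := by
    intro j hj j' hj'
    rw [Finset.mem_range] at hj hj'
    rcases lt_trichotomy j j' with hlt | rfl | hgt
    · rw [if_neg hlt.ne, zero_sub]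
      convert hoff j' j hlt hj' using 2 with ω
      rw [re_fourierChar, re_fourierChar, ← cos_neg]
      ring_nf
    · simpa using hδ
    · rw [if_neg hgt.ne', zero_sub]
      exact hoff j j' hgt hj
  calc N * Fintype.card Ω - N ^ 2 * δ
      = ∑ j ∈ Finset.range N, ∑ j' ∈ Finset.range N,
          ((if j = j' then (Fintype.card Ω : ℝ) else 0) - δ) := by
        simp only [Finset.sum_sub_distrib, Finset.sum_ite_eq, Finset.sum_ite_mem,
          Finset.inter_self, Finset.sum_const, Finset.card_range, nsmul_eq_mul]
        ring
    _ ≤ ∑ j ∈ Finset.range N, ∑ j' ∈ Finset.range N, ∑ ω, (𝐞 (j * u ω - j' * u ω) : ℂ).re :=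
        Finset.sum_le_sum fun j hj => Finset.sum_le_sum fun j' hj' => hterm j hj j' hj'
    _ = ∑ ω, ‖∑ j ∈ Finset.range N, (𝐞 (j * u ω) : ℂ)‖ ^ 2 := by
        simp only [norm_sum_fourierChar_sq]
        exact (Finset.sum_congr rfl fun j _ => Finset.sum_comm).trans Finset.sum_comm

theorem exists_dni_sq_le_of_norm_sum_fourierChar_le {Ω : Type*} [Fintype Ω] [Nonempty Ω]
    (u : Ω → ℝ) {N : ℕ} (hN : 1 ≤ N) (h : ∀ k : ℕ, 1 ≤ k → k < N →
      ‖∑ ω, (𝐞 (k * u ω) : ℂ)‖ ≤ (Fintype.card Ω : ℝ) / (4 * N)) :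
    ∃ ω, dni (u ω) ^ 2 ≤ 1 / N := by
  have hN₀ : (0 : ℝ) < N := by exact_mod_cast hN
  have hlarge : Fintype.card Ω • (3 / 4 * N : ℝ) ≤
      ∑ ω, ‖∑ j ∈ Finset.range N, (𝐞 (j * u ω) : ℂ)‖ ^ 2 := by
    refine le_trans (le_of_eq ?_)
      (mul_card_sub_le_sum_norm_sum_fourierChar_sq u N (by positivity) h)
    rw [nsmul_eq_mul]
    field_simp
    ring
  obtain ⟨ω, -, hω⟩ := Finset.exists_le_of_sum_le (f := fun _ : Ω => (3 / 4 * N : ℝ))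
    Finset.univ_nonempty (by simpa only [Finset.sum_const, Finset.card_univ] using hlarge)
  refine ⟨ω, ?_⟩
  have hgeom := norm_geom_sum_fourierChar_mul_dni_le N (u ω)
  set Y := ‖∑ j ∈ Finset.range N, (𝐞 (j * u ω) : ℂ)‖
  have hsq : (Y * (2 * dni (u ω))) ^ 2 ≤ 1 :=
    pow_le_one₀ (mul_nonneg (norm_nonneg _) (mul_nonneg zero_le_two (dni_nonneg _))) hgeom
  rw [le_div_iff₀ hN₀]
  nlinarith [mul_le_mul_of_nonneg_right hω (sq_nonneg (dni (u ω))), sq_nonneg (dni (u ω))]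

theorem abs_sub_lt_one_of_natFloor_eq {a b : ℝ} (ha : 0 ≤ a) (hb : 0 ≤ b) (h : ⌊a⌋₊ = ⌊b⌋₊) :
    |a - b| < 1 := by
  apply Int.abs_sub_lt_one_of_floor_eq_floor
  rw [← Int.natCast_floor_eq_floor ha, ← Int.natCast_floor_eq_floor hb, h]

variable {ι : Type*} {w : ι → ℝ} {ε₁ : ℝ} {K : ℕ}

theorem sum_div_le_one_add_log {s : Finset ι} (hε₁ : 0 < ε₁) (hle : ∀ l ∈ s, ε₁ ≤ w l)
    (hK : ∀ l ∈ s, w l ≤ K * ε₁) (hsep : ∀ l ∈ s, ∀ l' ∈ s, l ≠ l' → ε₁ ≤ |w l - w l'|) :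
    ∑ l ∈ s, ε₁ / w l ≤ 1 + log K := by
  have hone : ∀ l ∈ s, 1 ≤ ⌊w l / ε₁⌋₊ := fun l hl =>
    Nat.le_floor (by rw [Nat.cast_one, one_le_div hε₁]; exact hle l hl)
  have hinj : Set.InjOn (fun l => ⌊w l / ε₁⌋₊) (s : Set ι) := by
    intro l hl l' hl' heq
    by_contra hne
    have hpos : ∀ l ∈ s, 0 ≤ w l / ε₁ := fun l hl => div_nonneg (hε₁.le.trans (hle l hl)) hε₁.le
    have hlt := abs_sub_lt_one_of_natFloor_eq (hpos l hl) (hpos l' hl') heq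
    rw [← sub_div, abs_div, abs_of_pos hε₁, div_lt_one hε₁] at hlt
    exact hlt.not_ge (hsep l hl l' hl' hne)
  calc ∑ l ∈ s, ε₁ / w l ≤ ∑ l ∈ s, (⌊w l / ε₁⌋₊ : ℝ)⁻¹ := by
        refine Finset.sum_le_sum fun l hl => ?_
        rw [← inv_div]
        refine inv_anti₀ (by exact_mod_cast hone l hl) (Nat.floor_le ?_)
        exact div_nonneg (hε₁.le.trans (hle l hl)) hε₁.le
    _ = ∑ k ∈ s.image (fun l => ⌊w l / ε₁⌋₊), (k : ℝ)⁻¹ := by rw [Finset.sum_image hinj]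
    _ ≤ ∑ k ∈ Finset.Icc 1 K, (k : ℝ)⁻¹ := by
        refine Finset.sum_le_sum_of_subset_of_nonneg (Finset.image_subset_iff.mpr fun l hl => ?_)
          fun _ _ _ => by positivity
        refine Finset.mem_Icc.mpr ⟨hone l hl, Nat.floor_le_of_le ?_⟩
        rw [div_le_iff₀ hε₁]
        exact hK l hl
    _ ≤ 1 + log K := by
        have := harmonic_le_one_add_log K
        rw [harmonic_eq_sum_Icc] at this
        push_cast at this
        exact this

variable [Fintype ι]

theorem sum_erase_div_abs_sub_le [DecidableEq ι] (hε₁ : 0 < ε₁)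
    (hsep : ∀ l l', l ≠ l' → ε₁ ≤ |w l - w l'|) (hK : ∀ l l', |w l - w l'| ≤ K * ε₁) (l : ι) :
    ∑ l' ∈ Finset.univ.erase l, ε₁ / |w l - w l'| ≤ 2 * (1 + log K) := by
  have hside : ∀ s ⊆ Finset.univ.erase l, (∃ σ : ℝ, |σ| = 1 ∧
      ∀ l' ∈ s, |w l - w l'| = σ * (w l - w l')) →
      ∑ l' ∈ s, ε₁ / |w l - w l'| ≤ 1 + log K := by
    rintro s hs ⟨σ, hσ, habs⟩
    refine sum_div_le_one_add_log hε₁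
      (fun l' hl' => hsep l l' (Finset.ne_of_mem_erase (hs hl')).symm) (fun l' _ => hK l l')
      fun a ha b hb hab => ?_
    have hdiff : σ * (w l - w a) - σ * (w l - w b) = σ * (w b - w a) := by ring
    rw [habs a ha, habs b hb, hdiff, abs_mul, hσ, one_mul]
    exact hsep b a hab.symm
  rw [← Finset.sum_filter_add_sum_filter_not (Finset.univ.erase l) (fun l' => w l < w l'), two_mul]
  refine add_le_add (hside _ (Finset.filter_subset _ _) ⟨-1, by simp, fun l' hl' => ?_⟩)
    (hside _ (Finset.filter_subset _ _) ⟨1, abs_one, fun l' hl' => ?_⟩)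
  · rw [abs_of_neg (sub_neg.mpr (Finset.mem_filter.mp hl').2), neg_one_mul]
  · rw [abs_of_nonneg (sub_nonneg.mpr (not_lt.mp (Finset.mem_filter.mp hl').2)), one_mul]

theorem norm_geom_sum_fourierChar_le {t : ℝ} (J : ℕ) (ht : t ≠ 0) (ht₂ : |t| ≤ 1 / 2) :
    ‖∑ c ∈ Finset.range J, (𝐞 (c * t) : ℂ)‖ ≤ 1 / (2 * |t|) := by
  rw [le_div_iff₀ (by positivity), ← dni_eq_abs ht₂]
  exact norm_geom_sum_fourierChar_mul_dni_le J t

theorem sum_norm_sum_fourierChar_sq_le {g : ℝ} (w₀ : ℝ) (J : ℕ) (hε₁ : 0 < ε₁) (hg : 0 < g)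
    (hsep : ∀ l l', l ≠ l' → ε₁ ≤ |w l - w l'|) (hK : ∀ l l', |w l - w l'| ≤ K * ε₁)
    (hgK : g * (K * ε₁) ≤ 1 / 2) :
    ∑ c ∈ Finset.range J, ‖∑ l, (𝐞 (g * c * (w l - w₀)) : ℂ)‖ ^ 2 ≤
      Fintype.card ι * (J + 1 / (g * ε₁) * (1 + log K)) := by
  classical
  have hexpand : ∑ c ∈ Finset.range J, ‖∑ l, (𝐞 (g * c * (w l - w₀)) : ℂ)‖ ^ 2 =
      ∑ l, ∑ l', (∑ c ∈ Finset.range J, (𝐞 (c * (g * (w l - w l'))) : ℂ)).re := by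
    simp only [norm_sum_fourierChar_sq, Complex.re_sum]
    rw [Finset.sum_comm]
    refine Finset.sum_congr rfl fun l _ => Finset.sum_comm.trans ?_
    refine Finset.sum_congr rfl fun l' _ => Finset.sum_congr rfl fun c _ => ?_
    ring_nf
  have hoff : ∀ l, ∀ l' ∈ Finset.univ.erase l,
      (∑ c ∈ Finset.range J, (𝐞 (c * (g * (w l - w l'))) : ℂ)).re ≤
        1 / (2 * (g * ε₁)) * (ε₁ / |w l - w l'|) := by
    intro l l' hl'
    have hpos := hε₁.trans_le (hsep l l' (Finset.ne_of_mem_erase hl').symm)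
    have habs : |g * (w l - w l')| = g * |w l - w l'| := by rw [abs_mul, abs_of_pos hg]
    calc _ ≤ 1 / (2 * |g * (w l - w l')|) := by
          refine (Complex.re_le_norm _).trans (norm_geom_sum_fourierChar_le J
            (mul_ne_zero hg.ne' (abs_pos.mp hpos)) ?_)
          rw [habs]
          exact (mul_le_mul_of_nonneg_left (hK l l') hg.le).trans hgK
      _ = 1 / (2 * (g * ε₁)) * (ε₁ / |w l - w l'|) := by
          rw [habs]
          field_simp
  rw [hexpand, ← Finset.card_univ, ← nsmul_eq_mul]
  refine Finset.sum_le_card_nsmul _ _ _ fun l _ => ?_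
  rw [← Finset.add_sum_erase _ _ (Finset.mem_univ l)]
  refine add_le_add (by simp) ((Finset.sum_le_sum (hoff l)).trans ?_)
  rw [← Finset.mul_sum]
  calc _ ≤ 1 / (2 * (g * ε₁)) * (2 * (1 + log K)) := by
        gcongr
        exact sum_erase_div_abs_sub_le hε₁ hsep hK l
    _ = 1 / (g * ε₁) * (1 + log K) := by field_simp

theorem norm_sum_fourierChar_le_of_near_affine {u : ι → ℝ} {k A B base w₀ ε η g : ℝ} (hk : 0 ≤ k)
    (hu : ∀ l, |u l - base - A * (w l - w₀)| ≤ η) (hw : ∀ l, |w l - w₀| ≤ ε)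
    (hB : |k * A - B| ≤ g) :
    ‖∑ l, (𝐞 (k * u l) : ℂ)‖ ≤
      ‖∑ l, (𝐞 (B * (w l - w₀)) : ℂ)‖ + Fintype.card ι * (2 * π * (k * η + g * ε)) := by
  have hshift : ‖∑ l, (𝐞 (k * base + B * (w l - w₀)) : ℂ)‖ =
      ‖∑ l, (𝐞 (B * (w l - w₀)) : ℂ)‖ := by
    simp only [AddChar.map_add_eq_mul, Circle.coe_mul, ← Finset.mul_sum, norm_mul, Circle.norm_coe,
      one_mul]
  rw [← hshift]
  refine norm_sum_fourierChar_le_add fun l => ?_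
  have hsplit : k * u l - (k * base + B * (w l - w₀)) =
      k * (u l - base - A * (w l - w₀)) + (k * A - B) * (w l - w₀) := by ring
  rw [hsplit]
  refine (abs_add_le _ _).trans (add_le_add ?_ ?_)
  · rw [abs_mul, abs_of_nonneg hk]
    exact mul_le_mul_of_nonneg_left (hu l) hk
  · rw [abs_mul]
    exact mul_le_mul hB (hw l) (abs_nonneg _) ((abs_nonneg _).trans hB)

section Energy

variable {I I' C : Type*} [Fintype I] [Fintype I'] {φ : I → I' → C}

theorem sum_coincidences_le [DecidableEq C]
    (hφ : ∀ i i' j j', i ≠ i' → j ≠ j' → φ i j = φ i j' → φ i' j ≠ φ i' j') :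
    ∑ i, ∑ j, ∑ j', (if φ i j = φ i j' then (1 : ℝ) else 0) ≤
      Fintype.card I * Fintype.card I' + Fintype.card I' ^ 2 := by
  classical
  have hpair : ∀ j j', ∑ i, (if φ i j = φ i j' then (1 : ℝ) else 0) ≤
      (if j = j' then (Fintype.card I : ℝ) else 0) + 1 := by
    intro j j'
    by_cases hjj : j = j'
    · simp [hjj]
    · rw [if_neg hjj, zero_add, Finset.sum_boole]
      norm_cast
      refine Finset.card_le_one.mpr fun i hi i' hi' => ?_
      by_contra hne
      exact hφ i i' j j' hne hjj (Finset.mem_filter.mp hi).2 (Finset.mem_filter.mp hi').2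
  calc ∑ i, ∑ j, ∑ j', (if φ i j = φ i j' then (1 : ℝ) else 0)
      = ∑ j, ∑ j', ∑ i, (if φ i j = φ i j' then (1 : ℝ) else 0) :=
        Finset.sum_comm.trans (Finset.sum_congr rfl fun j _ => Finset.sum_comm)
    _ ≤ ∑ j : I', ∑ j' : I', ((if j = j' then (Fintype.card I : ℝ) else 0) + 1) :=
        Finset.sum_le_sum fun j _ => Finset.sum_le_sum fun j' _ => hpair j j'
    _ = Fintype.card I * Fintype.card I' + Fintype.card I' ^ 2 := by
        simp only [Finset.sum_add_distrib, Finset.sum_ite_eq, Finset.mem_univ, if_true,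
          Finset.sum_const, Finset.card_univ, nsmul_eq_mul, mul_one]
        ring

theorem sq_sum_comp_le {T : Finset C} (hT : ∀ i j, φ i j ∈ T)
    (hφ : ∀ i i' j j', i ≠ i' → j ≠ j' → φ i j = φ i j' → φ i' j ≠ φ i' j') (f : C → ℝ) :
    (∑ i, ∑ j, f (φ i j)) ^ 2 ≤
      (Fintype.card I * Fintype.card I' + Fintype.card I' ^ 2) *
        (Fintype.card I * ∑ c ∈ T, f c ^ 2) := by
  classical
  let mult : I → C → ℝ := fun i c => ∑ j, if φ i j = c then 1 else 0
  have hfibre : ∀ i, ∑ j, f (φ i j) = ∑ c ∈ T, mult i c * f c := by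
    intro i
    simp only [mult, Finset.sum_mul, ite_mul, one_mul, zero_mul]
    rw [Finset.sum_comm]
    simp only [Finset.sum_ite_eq, hT, if_true]
  have hmult : ∀ i, ∑ c ∈ T, mult i c ^ 2 = ∑ j, ∑ j', if φ i j = φ i j' then 1 else 0 := by
    intro i
    simp only [mult, sq, Finset.sum_mul_sum, ite_mul, one_mul, zero_mul]
    rw [Finset.sum_comm]
    refine Finset.sum_congr rfl fun j _ => ?_
    rw [Finset.sum_comm]
    simp only [Finset.sum_ite_eq, hT, if_true]
    simp only [eq_comm]
  have hCS := Finset.sum_mul_sq_le_sq_mul_sq ((Finset.univ : Finset I) ×ˢ T)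
    (fun p => mult p.1 p.2) (fun p => f p.2)
  simp only [Finset.sum_product, Finset.sum_const, Finset.card_univ, nsmul_eq_mul, hmult,
    ← hfibre] at hCS
  exact hCS.trans (mul_le_mul_of_nonneg_right (sum_coincidences_le hφ) (by positivity))

end Energy

theorem abs_sub_lt_of_natFloor_mul_div_eq {k g A A' : ℝ} (hk : 1 ≤ k) (hg : 0 < g) (hA : 0 ≤ A)
    (hA' : 0 ≤ A') (h : ⌊k * A / g⌋₊ = ⌊k * A' / g⌋₊) : |A - A'| < g := by
  have hlt := abs_sub_lt_one_of_natFloor_eq (by positivity) (by positivity) h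
  rw [← sub_div, ← mul_sub, abs_div, abs_of_pos hg, div_lt_one hg, abs_mul,
    abs_of_nonneg (zero_le_one.trans hk)] at hlt
  exact (le_mul_of_one_le_left (abs_nonneg _) hk).trans_lt hlt

variable {I : Type*} [Fintype I] {w₀ g : ℝ} {J N : ℕ}

theorem sum_norm_sum_fourierChar_comp_le (hN : 1 ≤ N) {φ : I → I → ℕ} (hφJ : ∀ i j, φ i j < J)
    (hφ : ∀ i i' j j', i ≠ i' → j ≠ j' → φ i j = φ i j' → φ i' j ≠ φ i' j')
    (hε₁ : 0 < ε₁) (hg : 0 < g)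
    (hsep : ∀ l l', l ≠ l' → ε₁ ≤ |w l - w l'|) (hK : ∀ l l', |w l - w l'| ≤ K * ε₁)
    (hgK : g * (K * ε₁) ≤ 1 / 2)
    (hcard : 512 * (N : ℝ) ^ 2 * (J + 1 / (g * ε₁) * (1 + log K)) ≤
      Fintype.card I * Fintype.card ι) :
    ∑ i, ∑ j, ‖∑ l, (𝐞 (g * φ i j * (w l - w₀)) : ℂ)‖ ≤
      Fintype.card I * (Fintype.card I * Fintype.card ι) / (16 * N) := by
  have henergy := sq_sum_comp_le (fun i j => Finset.mem_range.mpr (hφJ i j)) hφ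
    (fun c => ‖∑ l, (𝐞 (g * c * (w l - w₀)) : ℂ)‖)
  have hsieve := sum_norm_sum_fourierChar_sq_le w₀ J hε₁ hg hsep hK hgK
  set M : ℝ := (Fintype.card I : ℝ)
  set X : ℝ := (Fintype.card ι : ℝ)
  set Q : ℝ := J + 1 / (g * ε₁) * (1 + log K)
  have : 0 ≤ M := Nat.cast_nonneg _
  have : 0 ≤ X := Nat.cast_nonneg _
  have : (0 : ℝ) < N := by exact_mod_cast hN
  refine le_of_sq_le_sq (henergy.trans ?_) (by positivity)
  calc _ ≤ (M * M + M ^ 2) * (M * (X * Q)) := by gcongr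
    _ = (M ^ 3 * X) / (256 * N ^ 2) * (512 * N ^ 2 * Q) := by
        field_simp
        ring
    _ ≤ (M ^ 3 * X) / (256 * N ^ 2) * (M * X) := by gcongr
    _ = (M * (M * X) / (16 * N)) ^ 2 := by
        field_simp
        norm_num

theorem norm_sum_fourierChar_le_floor {u : ι → ℝ} {A base ε η k : ℝ} (hN : 1 ≤ N) (hk : 0 ≤ k)
    (hkN : k ≤ N) (hA : 0 ≤ A) (hg : 0 < g) (hu : ∀ l, |u l - base - A * (w l - w₀)| ≤ η)
    (hη : N * η ≤ 1 / (128 * N)) (hw : ∀ l, |w l - w₀| ≤ ε) (hgε : g * ε ≤ 1 / (128 * N)) :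
    ‖∑ l, (𝐞 (k * u l) : ℂ)‖ ≤
      ‖∑ l, (𝐞 (g * ⌊k * A / g⌋₊ * (w l - w₀)) : ℂ)‖ + Fintype.card ι / (8 * N) := by
  rcases isEmpty_or_nonempty ι with hι | ⟨⟨l₀⟩⟩
  · simp
  have hround : |k * A - g * ⌊k * A / g⌋₊| ≤ g := by
    have hlo := Nat.floor_le (by positivity : 0 ≤ k * A / g)
    have hhi := (Nat.lt_floor_add_one (k * A / g)).le
    rw [le_div_iff₀' hg] at hlo
    rw [div_le_iff₀' hg] at hhi
    rw [abs_le]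
    constructor <;> linarith
  refine (norm_sum_fourierChar_le_of_near_affine hk hu hw hround).trans
    (add_le_add_right ?_ _)
  have hη₀ : 0 ≤ η := (abs_nonneg _).trans (hu l₀)
  have herr : k * η + g * ε ≤ 1 / (64 * N) := by
    have hkη : k * η ≤ N * η := by gcongr
    have hhalf : 1 / (64 * (N : ℝ)) = 1 / (128 * N) + 1 / (128 * N) := by ring
    linarith
  calc Fintype.card ι * (2 * π * (k * η + g * ε))
      ≤ Fintype.card ι * (2 * π * (1 / (64 * N))) := by gcongr
    _ ≤ Fintype.card ι * (2 * 4 * (1 / (64 * N))) := by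
        gcongr
        exact pi_lt_four.le
    _ = Fintype.card ι / (8 * N) := by ring

theorem exists_dni_sq_le_of_near_affine [Nonempty I] [Nonempty ι] {u : I → I → ι → ℝ}
    {A base : I → I → ℝ} {ε η : ℝ} (hN : 1 ≤ N) (hε₁ : 0 < ε₁) (hg : 0 < g)
    (hu : ∀ i j l, |u i j l - base i j - A i j * (w l - w₀)| ≤ η)
    (hη : N * η ≤ 1 / (128 * N)) (hA : ∀ i j, 0 ≤ A i j) (hAJ : ∀ i j, N * A i j < g * J)
    (hcol : ∀ i i' j j', i ≠ i' → j ≠ j' → |A i j - A i j'| < g → g ≤ |A i' j - A i' j'|)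
    (hw : ∀ l, |w l - w₀| ≤ ε) (hgε : g * ε ≤ 1 / (128 * N))
    (hsep : ∀ l l', l ≠ l' → ε₁ ≤ |w l - w l'|) (hK : ∀ l l', |w l - w l'| ≤ K * ε₁)
    (hgK : g * (K * ε₁) ≤ 1 / 2)
    (hcard : 512 * (N : ℝ) ^ 2 * (J + 1 / (g * ε₁) * (1 + log K)) ≤
      Fintype.card I * Fintype.card ι) :
    ∃ i j l, dni (u i j l) ^ 2 ≤ 1 / N := by
  have : (0 : ℝ) < N := by exact_mod_cast hN
  suffices hsum : ∀ k : ℕ, 1 ≤ k → k < N →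
      ‖∑ p : I × I × ι, (𝐞 (k * u p.1 p.2.1 p.2.2) : ℂ)‖ ≤
        (Fintype.card (I × I × ι) : ℝ) / (4 * N) by
    obtain ⟨⟨i, j, l⟩, hijl⟩ := exists_dni_sq_le_of_norm_sum_fourierChar_le
      (fun p : I × I × ι => u p.1 p.2.1 p.2.2) hN hsum
    exact ⟨i, j, l, hijl⟩
  intro k hk hkN
  have hk₁ : (1 : ℝ) ≤ k := by exact_mod_cast hk
  have hkN' : (k : ℝ) ≤ N := by exact_mod_cast hkN.le
  have hfloor : ∀ i j, 0 ≤ k * A i j / g := fun i j => by have := hA i j; positivity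
  let φ : I → I → ℕ := fun i j => ⌊k * A i j / g⌋₊
  have hφJ : ∀ i j, φ i j < J := fun i j => by
    rw [Nat.floor_lt (hfloor i j), div_lt_iff₀' hg]
    exact (mul_le_mul_of_nonneg_right hkN' (hA i j)).trans_lt (hAJ i j)
  have hclass : ∀ i j j', φ i j = φ i j' → |A i j - A i j'| < g := fun i j j' =>
    abs_sub_lt_of_natFloor_mul_div_eq hk₁ hg (hA i j) (hA i j')
  have hmain := sum_norm_sum_fourierChar_comp_le (w₀ := w₀) hN hφJ (fun i i' j j' hi hj h h' =>
    (hclass _ _ _ h').not_ge (hcol i i' j j' hi hj (hclass _ _ _ h))) hε₁ hg hsep hK hgK hcard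
  have hinner : ∀ i j, ‖∑ l, (𝐞 (k * u i j l) : ℂ)‖ ≤
      ‖∑ l, (𝐞 (g * φ i j * (w l - w₀)) : ℂ)‖ + Fintype.card ι / (8 * N) := fun i j =>
    norm_sum_fourierChar_le_floor hN (zero_le_one.trans hk₁) hkN' (hA i j) hg (hu i j) hη hw hgε
  calc ‖∑ p : I × I × ι, (𝐞 (k * u p.1 p.2.1 p.2.2) : ℂ)‖
      ≤ ∑ i, ∑ j, ‖∑ l, (𝐞 (k * u i j l) : ℂ)‖ := by
        simp only [Fintype.sum_prod_type]
        exact norm_sum_le_of_le _ fun i _ => norm_sum_le _ _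
    _ ≤ ∑ i, ∑ j, (‖∑ l, (𝐞 (g * φ i j * (w l - w₀)) : ℂ)‖ + Fintype.card ι / (8 * N)) :=
        Finset.sum_le_sum fun i _ => Finset.sum_le_sum fun j _ => hinner i j
    _ ≤ Fintype.card I * (Fintype.card I * Fintype.card ι) / (16 * N) +
          Fintype.card I * (Fintype.card I * (Fintype.card ι / (8 * N))) := by
        simpa only [Finset.sum_add_distrib, Finset.sum_const, Finset.card_univ, nsmul_eq_mul]
          using add_le_add_left hmain _
    _ = 3 / 4 * ((Fintype.card (I × I × ι) : ℝ) / (4 * N)) := by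
        simp only [Fintype.card_prod, Nat.cast_mul]
        field_simp
        norm_num
    _ ≤ (Fintype.card (I × I × ι) : ℝ) / (4 * N) :=
        mul_le_of_le_one_left (by positivity) (by norm_num)

end ExponentialSums

section MobiusPairs

variable {c₀ V y y' : ℝ}

/-- `(P₁, P₂)` is a vector of length comparable to `V` whose direction is close to that of
`(y, 1)`. -/
structure IsNearDirection (c₀ V y P₁ P₂ : ℝ) : Prop where
  le_fst : c₀ * V ≤ P₁
  fst_le : P₁ ≤ 9 * V
  le_snd : c₀ * V ≤ P₂
  snd_le : P₂ ≤ 3 * V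
  abs_sub_le : |P₁ - y * P₂| ≤ 4 / (c₀ * V)

theorem IsBadDirichletMatrix.isNearDirection {a b c d : ℤ} {s t : ℝ} (hc₀ : 0 < c₀)
    (hc₁ : c₀ ≤ 1) (hV : 0 < V) (h : IsBadDirichletMatrix c₀ V y a b c d) (hs₁ : 1 ≤ s)
    (hs₂ : s ≤ 2) (ht₀ : 0 ≤ t) (ht₁ : t ≤ 1) :
    IsNearDirection c₀ V y (a * s + b * t) (c * s + d * t) := by
  have hd := h.one_le_d
  have ha := h.a_le
  have hca := h.c_le_a
  have hdb := h.d_le_b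
  have hba := h.b_le_a
  have hdc := h.d_le_c
  have hcV := h.c_le
  have hVc := h.le_c
  have : 0 < c₀ * V := by positivity
  refine ⟨by nlinarith, by nlinarith, by nlinarith, by nlinarith, ?_⟩
  have hV_le : 1 / V ≤ 1 / (c₀ * V) := by
    gcongr
    exact mul_le_of_le_one_left hV.le hc₁
  calc |a * s + b * t - y * (c * s + d * t)| = |-(s * (c * y - a)) - t * (d * y - b)| := by ring_nf
    _ ≤ |-(s * (c * y - a))| + |t * (d * y - b)| := abs_sub _ _
    _ = s * |c * y - a| + t * |d * y - b| := by
        rw [abs_neg, abs_mul, abs_mul, abs_of_nonneg ht₀, abs_of_nonneg (by linarith : 0 ≤ s)]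
    _ ≤ 2 * (1 / (c₀ * V)) + 1 * (2 / (c₀ * V)) := by
        gcongr
        · exact h.abs_mul_sub_le.trans hV_le
        · exact h.abs_snd_mul_sub_le.trans (by gcongr)
    _ = 4 / (c₀ * V) := by ring

namespace IsNearDirection

variable {P₁ P₂ P₁' P₂' Q₁ Q₂ Q₁' Q₂' x x' ρ t : ℝ}

theorem fst_pos (h : IsNearDirection c₀ V y P₁ P₂) (hc₀ : 0 < c₀) (hV : 0 < V) : 0 < P₁ :=
  (mul_pos hc₀ hV).trans_le h.le_fst

theorem snd_pos (h : IsNearDirection c₀ V y P₁ P₂) (hc₀ : 0 < c₀) (hV : 0 < V) : 0 < P₂ :=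
  (mul_pos hc₀ hV).trans_le h.le_snd

theorem le_inner (h : IsNearDirection c₀ V y P₁ P₂) (h' : IsNearDirection c₀ V x Q₁ Q₂)
    (hc₀ : 0 < c₀) (hV : 0 < V) : c₀ ^ 2 * V ^ 2 ≤ P₁ * Q₁ + P₂ * Q₂ := by
  have hfst := mul_le_mul h.le_fst h'.le_fst (by positivity) (h.fst_pos hc₀ hV).le
  have hsnd := mul_pos (h.snd_pos hc₀ hV) (h'.snd_pos hc₀ hV)
  linarith

theorem inner_le (h : IsNearDirection c₀ V y P₁ P₂) (h' : IsNearDirection c₀ V x Q₁ Q₂)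
    (hc₀ : 0 < c₀) (hV : 0 < V) : P₁ * Q₁ + P₂ * Q₂ ≤ 90 * V ^ 2 := by
  have hfst := mul_le_mul h.fst_le h'.fst_le (h'.fst_pos hc₀ hV).le (by positivity)
  have hsnd := mul_le_mul h.snd_le h'.snd_le (h'.snd_pos hc₀ hV).le (by positivity)
  linarith

theorem le_abs_wedge (hc₀ : 0 < c₀) (hV : 0 < V) (hVρ : 48 / c₀ ^ 3 ≤ V ^ 2 * ρ)
    (h : IsNearDirection c₀ V y P₁ P₂) (h' : IsNearDirection c₀ V y' P₁' P₂')
    (hy : ρ ≤ |y - y'|) : c₀ ^ 2 * V ^ 2 * ρ / 2 ≤ |P₁ * P₂' - P₂ * P₁'| := by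
  have hP₂ := h.snd_pos hc₀ hV
  have hP₂' := h'.snd_pos hc₀ hV
  have hmain : c₀ ^ 2 * V ^ 2 * ρ ≤ P₂ * P₂' * |y - y'| := by
    have hmul := mul_le_mul h.le_snd h'.le_snd (by positivity) hP₂.le
    calc c₀ ^ 2 * V ^ 2 * ρ = (c₀ * V) * (c₀ * V) * ρ := by ring
      _ ≤ (c₀ * V) * (c₀ * V) * |y - y'| := by gcongr
      _ ≤ P₂ * P₂' * |y - y'| := by gcongr
  have herror : |P₁ - y * P₂| * P₂' + P₂ * |P₁' - y' * P₂'| ≤ 24 / c₀ := by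
    calc |P₁ - y * P₂| * P₂' + P₂ * |P₁' - y' * P₂'|
        ≤ 4 / (c₀ * V) * (3 * V) + 3 * V * (4 / (c₀ * V)) := by
          gcongr
          · exact h.abs_sub_le
          · exact h'.snd_le
          · exact h.snd_le
          · exact h'.abs_sub_le
      _ = 24 / c₀ := by field_simp; norm_num
  have htriangle : P₂ * P₂' * |y - y'| ≤
      |P₁ * P₂' - P₂ * P₁'| + (|P₁ - y * P₂| * P₂' + P₂ * |P₁' - y' * P₂'|) := by
    calc P₂ * P₂' * |y - y'| = |P₂ * P₂' * (y - y')| := by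
          rw [abs_mul, abs_of_pos (mul_pos hP₂ hP₂')]
      _ = |(P₁ * P₂' - P₂ * P₁') + (-((P₁ - y * P₂) * P₂') + P₂ * (P₁' - y' * P₂'))| := by ring_nf
      _ ≤ |P₁ * P₂' - P₂ * P₁'| + (|-((P₁ - y * P₂) * P₂')| + |P₂ * (P₁' - y' * P₂')|) :=
          (abs_add_le _ _).trans (by gcongr; exact abs_add_le _ _)
      _ = _ := by rw [abs_neg, abs_mul, abs_mul P₂, abs_of_pos hP₂, abs_of_pos hP₂']
  have hsmall : 48 / c₀ ≤ c₀ ^ 2 * V ^ 2 * ρ := by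
    calc 48 / c₀ = c₀ ^ 2 * (48 / c₀ ^ 3) := by field_simp
      _ ≤ c₀ ^ 2 * (V ^ 2 * ρ) := by gcongr
      _ = c₀ ^ 2 * V ^ 2 * ρ := by ring
  have : 48 / c₀ = 2 * (24 / c₀) := by ring
  linarith

theorem abs_wedge_mul_abs_wedge_le (hc₀ : 0 < c₀) (hV : 0 < V)
    (h : IsNearDirection c₀ V y P₁ P₂) (h' : IsNearDirection c₀ V y' P₁' P₂')
    (g : IsNearDirection c₀ V x Q₁ Q₂)
    (ht : |(P₁ * Q₁ + P₂ * Q₂) - (P₁ * Q₁' + P₂ * Q₂')| ≤ t)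
    (ht' : |(P₁' * Q₁ + P₂' * Q₂) - (P₁' * Q₁' + P₂' * Q₂')| ≤ t) :
    |P₁ * P₂' - P₂ * P₁'| * |Q₁ * Q₂' - Q₂ * Q₁'| ≤ 180 * V ^ 2 * t := by
  have abs_sub_le {r r' s s' k : ℝ} (hr : |r| ≤ t) (hr' : |r'| ≤ t) (hs : 0 ≤ s) (hs' : 0 ≤ s')
      (hsk : s ≤ k) (hsk' : s' ≤ k) : |s * r - s' * r'| ≤ 2 * k * t := by
    calc |s * r - s' * r'| ≤ |s * r| + |s' * r'| := abs_sub _ _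
      _ = s * |r| + s' * |r'| := by rw [abs_mul, abs_mul, abs_of_nonneg hs, abs_of_nonneg hs']
      _ ≤ k * t + k * t := by gcongr <;> linarith
      _ = 2 * k * t := by ring
  have hfst : |(Q₁ - Q₁') * (P₁ * P₂' - P₂ * P₁')| ≤ 2 * (3 * V) * t := by
    refine le_trans (le_of_eq ?_) (abs_sub_le ht ht' (h'.snd_pos hc₀ hV).le
      (h.snd_pos hc₀ hV).le h'.snd_le h.snd_le)
    ring_nf
  have hsnd : |(Q₂ - Q₂') * (P₁ * P₂' - P₂ * P₁')| ≤ 2 * (9 * V) * t := by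
    refine le_trans (le_of_eq ?_) (abs_sub_le ht' ht (h.fst_pos hc₀ hV).le
      (h'.fst_pos hc₀ hV).le h.fst_le h'.fst_le)
    ring_nf
  calc |P₁ * P₂' - P₂ * P₁'| * |Q₁ * Q₂' - Q₂ * Q₁'|
      = |Q₂ * ((Q₁ - Q₁') * (P₁ * P₂' - P₂ * P₁')) -
          Q₁ * ((Q₂ - Q₂') * (P₁ * P₂' - P₂ * P₁'))| := by rw [← abs_mul]; ring_nf
    _ ≤ Q₂ * |(Q₁ - Q₁') * (P₁ * P₂' - P₂ * P₁')| +
          Q₁ * |(Q₂ - Q₂') * (P₁ * P₂' - P₂ * P₁')| := by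
        refine (abs_sub _ _).trans_eq ?_
        rw [abs_mul Q₂, abs_mul Q₁, abs_of_pos (g.snd_pos hc₀ hV), abs_of_pos (g.fst_pos hc₀ hV)]
    _ ≤ 3 * V * (2 * (3 * V) * t) + 9 * V * (2 * (9 * V) * t) := by
        gcongr
        · exact g.snd_le
        · exact g.fst_le
    _ = 180 * V ^ 2 * t := by ring

theorem le_of_abs_inner_sub_le (hc₀ : 0 < c₀) (hV : 0 < V) (hρ : 0 ≤ ρ)
    (hVρ : 48 / c₀ ^ 3 ≤ V ^ 2 * ρ) (h : IsNearDirection c₀ V y P₁ P₂)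
    (h' : IsNearDirection c₀ V y' P₁' P₂') (hy : ρ ≤ |y - y'|) (g : IsNearDirection c₀ V x Q₁ Q₂)
    (g' : IsNearDirection c₀ V x' Q₁' Q₂') (hx : ρ ≤ |x - x'|)
    (ht : |(P₁ * Q₁ + P₂ * Q₂) - (P₁ * Q₁' + P₂ * Q₂')| ≤ t)
    (ht' : |(P₁' * Q₁ + P₂' * Q₂) - (P₁' * Q₁' + P₂' * Q₂')| ≤ t) :
    c₀ ^ 4 * V ^ 2 * ρ ^ 2 ≤ 720 * t := by
  have hwedge := mul_le_mul (le_abs_wedge hc₀ hV hVρ h h' hy) (le_abs_wedge hc₀ hV hVρ g g' hx)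
    (by positivity) (abs_nonneg _)
  have hle := hwedge.trans (abs_wedge_mul_abs_wedge_le hc₀ hV h h' g ht ht')
  refine le_of_mul_le_mul_left (a := V ^ 2) ?_ (by positivity)
  linarith

end IsNearDirection

theorem abs_sub_le_of_abs_div_sq_sub_le {C lo hi S S' g : ℝ} (hC : 0 < C) (hlo : 0 < lo)
    (hS : S ∈ Set.Icc lo hi) (hS' : S' ∈ Set.Icc lo hi) (h : |C / S ^ 2 - C / S' ^ 2| ≤ g) :
    |S - S'| ≤ g * hi ^ 4 / (2 * lo * C) := by
  have hSpos : 0 < S := hlo.trans_le hS.1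
  have hSpos' : 0 < S' := hlo.trans_le hS'.1
  have hhi : 0 < hi := hSpos.trans_le hS.2
  have hfactor : |C / S ^ 2 - C / S' ^ 2| = |S - S'| * (C * (S + S') / (S ^ 2 * S' ^ 2)) := by
    have : C / S ^ 2 - C / S' ^ 2 = (S' - S) * (C * (S + S') / (S ^ 2 * S' ^ 2)) := by
      field_simp
      ring
    rw [this, abs_mul, abs_sub_comm, abs_of_pos (a := _ / _) (by positivity)]
  rw [le_div_iff₀ (by positivity)]
  calc |S - S'| * (2 * lo * C) = |S - S'| * (C * (lo + lo) / (hi ^ 2 * hi ^ 2)) * hi ^ 4 := by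
        field_simp; ring
    _ ≤ |S - S'| * (C * (S + S') / (S ^ 2 * S' ^ 2)) * hi ^ 4 := by
        gcongr
        exacts [hS.1, hS'.1, hS.2, hS'.2]
    _ ≤ g * hi ^ 4 := by
        gcongr
        exact hfactor ▸ h

theorem abs_mobius_sub_add_le {α β X Y w w₀ : ℝ} (hdet : α * Y - β * X = -1) (hX : 0 ≤ X)
    (hY : 0 < Y) (hw : 1 ≤ w) (hw₀ : 0 ≤ w₀) :
    |(α * w + β) / (X * w + Y) - (α * w₀ + β) / (X * w₀ + Y) + (w - w₀) / (X * w₀ + Y) ^ 2| ≤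
      (w - w₀) ^ 2 / (X * w₀ + Y) ^ 2 := by
  have hS : 0 < X * w₀ + Y := by positivity
  have hT : X ≤ X * w + Y := by nlinarith
  have hT₀ : 0 < X * w + Y := by positivity
  have hsub : (α * w + β) / (X * w + Y) - (α * w₀ + β) / (X * w₀ + Y) =
      -(w - w₀) / ((X * w + Y) * (X * w₀ + Y)) := by
    rw [div_sub_div _ _ hT₀.ne' hS.ne']
    congr 1
    linear_combination (w - w₀) * hdet
  have heq : (α * w + β) / (X * w + Y) - (α * w₀ + β) / (X * w₀ + Y) +
      (w - w₀) / (X * w₀ + Y) ^ 2 = (w - w₀) ^ 2 / (X * w₀ + Y) ^ 2 * (X / (X * w + Y)) := by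
    rw [hsub]
    field_simp
    ring
  rw [heq, abs_of_nonneg (by positivity)]
  exact mul_le_of_le_one_right (by positivity) (div_le_one_of_le₀ hT hT₀.le)

namespace IsBadDirichletMatrix

variable {a b c d a' b' c' d' : ℤ} {w z κ : ℝ}

theorem mobius_mem_Icc (h : IsBadDirichletMatrix c₀ V y a b c d) (hw : 1 ≤ w) :
    (a * w + b) / (c * w + d) ∈ Set.Icc (1 : ℝ) 4 := by
  have hd := h.one_le_d
  have hc := h.d_le_c
  have hden : (0 : ℝ) < c * w + d := by nlinarith
  rw [Set.mem_Icc, one_le_div hden, div_le_iff₀ hden]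
  constructor <;> nlinarith [h.c_le_a, h.d_le_b, h.a_le, h.b_le]

theorem transpose_mobius_mem_Icc (h : IsBadDirichletMatrix c₀ V y a b c d) (hc₀ : 0 < c₀)
    (hz : 1 ≤ z) : (a * z + c) / (b * z + d) ∈ Set.Icc 1 (6 / c₀) := by
  have hd := h.one_le_d
  have hdb := h.d_le_b
  have hden : (0 : ℝ) < b * z + d := by nlinarith
  have hcd : c₀ * c ≤ 2 * d := by linarith [h.le_d]
  have hab : c₀ * a ≤ 6 * b := by nlinarith [h.a_le]
  rw [Set.mem_Icc, one_le_div hden, div_le_div_iff₀ hden hc₀]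
  exact ⟨by nlinarith [h.b_le_a, h.d_le_c], by nlinarith⟩

theorem exists_badWith_one_div_add_eq (h : IsBadDirichletMatrix c₀ V y a b c d)
    (h' : IsBadDirichletMatrix c₀ V y' a' b' c' d') (hc₀ : 0 < c₀) (hc₁ : c₀ ≤ 1)
    (hy : BadWith c₀ y) (hy' : BadWith c₀ y') (hw : w ∈ Set.Icc 1 2) (hwbad : BadWith c₀ w) :
    ∃ z ∈ Set.Icc 1 (6 / c₀), BadWith (c₀ / 204) z ∧
      1 / (z + κ) = (b * (a' * w + b') + d * (c' * w + d')) /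
        ((a + b * κ) * (a' * w + b') + (c + d * κ) * (c' * w + d')) := by
  have hζ := h'.mobius_mem_Icc hw.1
  have hζbad := h'.badWith_mobius hc₀.le hc₁ hy' hw.1 hw.2 hwbad
  have hd := h.one_le_d
  have hdb := h.d_le_b
  have hm : (0 : ℝ) < c' * w + d' := by nlinarith [h'.one_le_d, h'.d_le_c, hw.1]
  set ζ := (a' * w + b') / (c' * w + d')
  have hn : a' * w + b' = ζ * (c' * w + d') := (div_mul_cancel₀ _ hm.ne').symm
  have hden : (0 : ℝ) < b * ζ + d := by nlinarith [hζ.1]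
  have hzbad := h.badWith_transpose_mobius (c₁ := c₀ / 6) (by positivity) (by linarith) hc₁ hy
    hζ.1 hζ.2 hζbad
  have hzmem := h.transpose_mobius_mem_Icc hc₀ hζ.1
  refine ⟨_, hzmem, hzbad.mono (by linarith), ?_⟩
  have hadd : (a * ζ + c) / (b * ζ + d) + κ = ((a + b * κ) * ζ + (c + d * κ)) / (b * ζ + d) := by
    rw [div_add' _ _ _ hden.ne']
    congr 1
    ring
  rw [hadd, one_div_div, hn, ← mul_div_mul_right _ _ hm.ne']
  congr 1 <;> ring

end IsBadDirichletMatrix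

section Families

variable {I ι : Type*} {w : ι → ℝ} {w₀ κ ρ : ℝ}

/-- A family of badly approximable points `z i j l` for which `1 / (z i j l + κ)` is nearly affine
in `w l`, with slope `-1 / S i j ^ 2`, where the `S i j` have no two close coincidences
`S i j ≈ S i j'` and `S i' j ≈ S i' j'`. -/
structure IsNearAffineFamily (c₀ V ρ κ w₀ : ℝ) (w : ι → ℝ) (z : I → I → ι → ℝ)
    (S ψ : I → I → ℝ) : Prop where
  mem_Icc : ∀ i j l, z i j l ∈ Set.Icc 1 (6 / c₀)
  badWith : ∀ i j l, BadWith (c₀ / 204) (z i j l)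
  slope_mem_Icc : ∀ i j, S i j ∈ Set.Icc (c₀ ^ 2 * V ^ 2) (90 * V ^ 2)
  abs_sub_add_le : ∀ i j l,
    |1 / (z i j l + κ) - ψ i j + (w l - w₀) / S i j ^ 2| ≤ (w l - w₀) ^ 2 / S i j ^ 2
  le_of_abs_slope_sub_le : ∀ i i' j j' t, i ≠ i' → j ≠ j' → |S i j - S i j'| ≤ t →
    |S i' j - S i' j'| ≤ t → c₀ ^ 4 * V ^ 2 * ρ ^ 2 ≤ 720 * t

theorem exists_isNearAffineFamily {Y : I → ℝ} (hc₀ : 0 < c₀) (hc₁ : c₀ ≤ 1) (hV : 2 ≤ V)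
    (hcV : 1 < c₀ * V) (hρ : 0 ≤ ρ) (hVρ : 48 / c₀ ^ 3 ≤ V ^ 2 * ρ)
    (hY : ∀ i, Y i ∈ Set.Icc 1 2 ∧ BadWith c₀ (Y i)) (hYsep : ∀ i i', i ≠ i' → ρ ≤ |Y i - Y i'|)
    (hw : ∀ l, w l ∈ Set.Icc 1 2 ∧ BadWith c₀ (w l)) (hw₀ : w₀ ∈ Set.Icc 1 2)
    (hκ : κ ∈ Set.Icc 0 1) :
    ∃ (z : I → I → ι → ℝ) (S ψ : I → I → ℝ), IsNearAffineFamily c₀ V ρ κ w₀ w z S ψ := by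
  have hV₀ : 0 < V := by linarith
  choose a b c d hG using fun i =>
    exists_isBadDirichletMatrix hV hcV (hY i).1.1 (hY i).1.2 (hY i).2
  choose z hz hzbad hz_eq using fun i j l => (hG i).exists_badWith_one_div_add_eq (hG j) hc₀ hc₁
    (hY i).2 (hY j).2 (hw l).1 (hw l).2 (κ := κ)
  have hP i := (hG i).isNearDirection hc₀ hc₁ hV₀ le_rfl one_le_two hκ.1 hκ.2
  have hQ i := (hG i).isNearDirection hc₀ hc₁ hV₀ hw₀.1 hw₀.2 zero_le_one le_rfl
  simp only [mul_one] at hP hQ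
  refine ⟨z, fun i j => (a i + b i * κ) * (a j * w₀ + b j) + (c i + d i * κ) * (c j * w₀ + d j),
    fun i j => (b i * (a j * w₀ + b j) + d i * (c j * w₀ + d j)) /
      ((a i + b i * κ) * (a j * w₀ + b j) + (c i + d i * κ) * (c j * w₀ + d j)), hz, hzbad,
    fun i j => ⟨(hP i).le_inner (hQ j) hc₀ hV₀, (hP i).inner_le (hQ j) hc₀ hV₀⟩,
    fun i j l => ?_, fun i i' j j' t hi hj => IsNearDirection.le_of_abs_inner_sub_le hc₀ hV₀ hρ hVρ
      (hP i) (hP i') (hYsep _ _ hi) (hQ j) (hQ j') (hYsep _ _ hj)⟩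
  have hP₁ := (hP i).fst_pos hc₀ hV₀
  have hP₂ := (hP i).snd_pos hc₀ hV₀
  have hd := (hG j).one_le_d
  have hc := hd.trans (hG j).d_le_c
  have ha := hc.trans (hG j).c_le_a
  have hb := hd.trans (hG j).d_le_b
  have hdet : ((b i * a j + d i * c j) * ((a i + b i * κ) * b j + (c i + d i * κ) * d j) -
      (b i * b j + d i * d j) * ((a i + b i * κ) * a j + (c i + d i * κ) * c j) : ℝ) = -1 := by
    have hdet_i : (a i * d i - b i * c i : ℝ) = 1 := by exact_mod_cast (hG i).det_eq_one
    have hdet_j : (a j * d j - b j * c j : ℝ) = 1 := by exact_mod_cast (hG j).det_eq_one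
    linear_combination (-(a j * d j - b j * c j : ℝ)) * hdet_i - hdet_j
  have hlin := abs_mobius_sub_add_le hdet (by positivity) (by positivity) (hw l).1.1
    (zero_le_one.trans hw₀.1)
  have hcollect (p q v : ℝ) : p * (a j * v + b j) + q * (c j * v + d j) =
      (p * a j + q * c j) * v + (p * b j + q * d j) := by ring
  simpa only [hz_eq, hcollect] using hlin

end Families

end MobiusPairs

section InverseShift

theorem exists_eq_mul_pow_four {x C : ℝ} (hx : 1 ≤ x) (hC : x ^ 43 ≤ C) :
    ∃ V : ℝ, x ^ 4 ≤ V ∧ C = x ^ 27 * V ^ 4 := by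
  have hle : (x ^ 4) ^ 4 ≤ C / x ^ 27 := by
    rw [le_div_iff₀ (by positivity)]
    linarith [hC]
  have hnonneg : 0 ≤ C / x ^ 27 := (by positivity : (0 : ℝ) ≤ (x ^ 4) ^ 4).trans hle
  refine ⟨√√(C / x ^ 27), Real.le_sqrt_of_sq_le (Real.le_sqrt_of_sq_le (by linarith)), ?_⟩
  rw [show 4 = 2 * 2 from rfl, pow_mul, Real.sq_sqrt (Real.sqrt_nonneg _), Real.sq_sqrt hnonneg]
  field_simp

namespace IsNearAffineFamily

variable {I ι : Type*} {c₀ V κ w₀ x C : ℝ} {w : ι → ℝ} {z : I → I → ι → ℝ} {S ψ : I → I → ℝ}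

theorem div_slope_sq_le {ρ : ℝ} (h : IsNearAffineFamily c₀ V ρ κ w₀ w z S ψ) (hc₀ : 0 < c₀)
    (hV : 0 < V) (hx : 0 ≤ x) (hC : C = x ^ 27 * V ^ 4) (i j : I) :
    C / S i j ^ 2 ≤ x ^ 27 / c₀ ^ 4 := by
  calc C / S i j ^ 2 ≤ C / (c₀ ^ 2 * V ^ 2) ^ 2 := by
        gcongr
        · rw [hC]
          positivity
        · exact (h.slope_mem_Icc i j).1
    _ = x ^ 27 / c₀ ^ 4 := by
        rw [hC]
        field_simp

theorem abs_sub_affine_le {ρ ω : ℝ} (h : IsNearAffineFamily c₀ V ρ κ w₀ w z S ψ) (hc₀ : 0 < c₀)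
    (hV : 0 < V) (hx : 0 < x) (hC : C = x ^ 27 * V ^ 4) (hw : ∀ l, |w l - w₀| ≤ 1 / x ^ 15)
    (i j : I) (l : ι) :
    |ω - C / (z i j l + κ) - (ω - C * ψ i j) - C / S i j ^ 2 * (w l - w₀)| ≤
      1 / (x ^ 3 * c₀ ^ 4) := by
  have hC₀ : 0 ≤ C := by rw [hC]; positivity
  calc |ω - C / (z i j l + κ) - (ω - C * ψ i j) - C / S i j ^ 2 * (w l - w₀)|
      = C * |1 / (z i j l + κ) - ψ i j + (w l - w₀) / S i j ^ 2| := by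
        rw [← abs_of_nonneg hC₀, ← abs_mul, ← abs_neg, abs_of_nonneg hC₀]
        ring_nf
    _ ≤ C * ((w l - w₀) ^ 2 / S i j ^ 2) := by gcongr; exact h.abs_sub_add_le i j l
    _ = C / S i j ^ 2 * |w l - w₀| ^ 2 := by rw [sq_abs]; ring
    _ ≤ x ^ 27 / c₀ ^ 4 * (1 / x ^ 15) ^ 2 := by
        refine mul_le_mul (h.div_slope_sq_le hc₀ hV hx.le hC i j) ?_ (by positivity) (by positivity)
        gcongr
        exact hw l
    _ = 1 / (x ^ 3 * c₀ ^ 4) := by field_simp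

theorem le_abs_div_slope_sq_sub (h : IsNearAffineFamily c₀ V (1 / x ^ 6) κ w₀ w z S ψ)
    (hc₀ : 0 < c₀) (hV : 0 < V) (hx : 0 < x) (hxc : 10 ^ 12 ≤ x * c₀ ^ 6)
    (hC : C = x ^ 27 * V ^ 4) {i i' j j' : I} (hi : i ≠ i') (hj : j ≠ j')
    (hclose : |C / S i j ^ 2 - C / S i j' ^ 2| < x ^ 14 / 128) :
    x ^ 14 / 128 ≤ |C / S i' j ^ 2 - C / S i' j' ^ 2| := by
  by_contra! hclose'
  have hC₀ : 0 < C := by rw [hC]; positivity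
  have hslope {i : I} (h_lt : |C / S i j ^ 2 - C / S i j' ^ 2| < x ^ 14 / 128) :=
    abs_sub_le_of_abs_div_sq_sub_le hC₀ (by positivity) (h.slope_mem_Icc i j)
      (h.slope_mem_Icc i j') h_lt.le
  have hle := h.le_of_abs_slope_sub_le i i' j j' _ hi hj (hslope hclose) (hslope hclose')
  have hlhs : c₀ ^ 4 * V ^ 2 * (1 / x ^ 6) ^ 2 = c₀ ^ 4 * x * (V ^ 2 / x ^ 13) := by field_simp
  have hrhs : 720 * (x ^ 14 / 128 * (90 * V ^ 2) ^ 4 / (2 * (c₀ ^ 2 * V ^ 2) * C)) =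
      720 * 90 ^ 4 / 256 / c₀ ^ 2 * (V ^ 2 / x ^ 13) := by
    rw [hC]
    field_simp
    norm_num
  rw [hlhs, hrhs] at hle
  have hle' := le_of_mul_le_mul_right hle (by positivity)
  rw [le_div_iff₀ (by positivity)] at hle'
  linarith

end IsNearAffineFamily

theorem size_le_pow_seventeen {x k : ℝ} (hx : 1 ≤ x) (hk : 0 ≤ k)
    (hlog : 65536 * (k + 2 + 13 * log x) ≤ x) :
    512 * x ^ 2 * ((⌊128 * x ^ 14 * k⌋₊ + 1 : ℕ) +
      1 / (x ^ 14 / 128 * (1 / x ^ 28)) * (1 + log (x ^ 13))) ≤ x ^ 17 := by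
  have hx14 : 1 ≤ x ^ 14 := one_le_pow₀ hx
  have hfloor : (⌊128 * x ^ 14 * k⌋₊ : ℝ) ≤ 128 * x ^ 14 * k := Nat.floor_le (by positivity)
  calc 512 * x ^ 2 * ((⌊128 * x ^ 14 * k⌋₊ + 1 : ℕ) +
        1 / (x ^ 14 / 128 * (1 / x ^ 28)) * (1 + log (x ^ 13)))
      = 512 * x ^ 2 * (⌊128 * x ^ 14 * k⌋₊ + 1 + 128 * x ^ 14 * (1 + 13 * log x)) := by
        rw [Real.log_pow, show 1 / (x ^ 14 / 128 * (1 / x ^ 28)) = 128 * x ^ 14 by field_simp]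
        push_cast
        ring
    _ ≤ 512 * x ^ 2 * (128 * x ^ 14 * k + 128 * x ^ 14 + 128 * x ^ 14 * (1 + 13 * log x)) := by
        gcongr
        linarith
    _ = x ^ 16 * (65536 * (k + 2 + 13 * log x)) := by ring
    _ ≤ x ^ 16 * x := by gcongr
    _ = x ^ 17 := by ring

theorem IsNearAffineFamily.exists_dni_sq_le {I ι : Type*} [Fintype I] [Fintype ι] [Nonempty I]
    [Nonempty ι] {c₀ V κ w₀ C : ℝ} {w : ι → ℝ} {z : I → I → ι → ℝ} {S ψ : I → I → ℝ} {N : ℕ}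
    (h : IsNearAffineFamily c₀ V (1 / (N : ℝ) ^ 6) κ w₀ w z S ψ) (hc₀ : 0 < c₀) (hc₁ : c₀ ≤ 1)
    (hV : 0 < V) (hC : C = N ^ 27 * V ^ 4) (hNc : 10 ^ 12 ≤ N * c₀ ^ 6)
    (hNlog : 65536 * (1 / c₀ ^ 4 + 2 + 13 * log N) ≤ N)
    (hw : ∀ l, |w l - w₀| ≤ 1 / (N : ℝ) ^ 15) (hw' : ∀ l l', |w l - w l'| ≤ 1 / (N : ℝ) ^ 15)
    (hsep : ∀ l l', l ≠ l' → 1 / (N : ℝ) ^ 28 ≤ |w l - w l'|)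
    (hcard : (N : ℝ) ^ 17 ≤ Fintype.card I * Fintype.card ι) (ω : ℝ) :
    ∃ i j l, dni (C / (z i j l + κ) - ω) ^ 2 ≤ 1 / N := by
  have hc₀6 : c₀ ^ 6 ≤ c₀ ^ 4 := pow_le_pow_of_le_one hc₀.le hc₁ (by norm_num)
  have hc₀4 : c₀ ^ 4 ≤ 1 := pow_le_one₀ hc₀.le hc₁
  have hN : (10 : ℝ) ^ 12 ≤ N := by nlinarith
  have hN₀ : (0 : ℝ) < N := by linarith
  suffices ∃ i j l, dni (ω - C / (z i j l + κ)) ^ 2 ≤ 1 / N by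
    obtain ⟨i, j, l, hle⟩ := this
    exact ⟨i, j, l, by rwa [← dni_neg, neg_sub]⟩
  refine exists_dni_sq_le_of_near_affine (N := N) (K := N ^ 13)
    (J := ⌊128 * (N : ℝ) ^ 14 * (1 / c₀ ^ 4)⌋₊ + 1) (g := N ^ 14 / 128) (ε₁ := 1 / N ^ 28)
    (Nat.one_le_cast.1 (by linarith : (1 : ℝ) ≤ N)) (by positivity) (by positivity)
    (h.abs_sub_affine_le hc₀ hV hN₀ hC hw) ?_ (fun i j => ?_) (fun i j => ?_)
    (fun i i' j j' => h.le_abs_div_slope_sq_sub hc₀ hV hN₀ hNc hC) hw (le_of_eq ?_) hsep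
    (fun l l' => (hw' l l').trans_eq ?_) ?_ ?_
  · rw [mul_one_div, div_le_div_iff₀ (by positivity) (by positivity)]
    have : 128 ≤ N * c₀ ^ 4 := by nlinarith
    nlinarith [sq_nonneg (N : ℝ)]
  · rw [hC]
    positivity
  · calc N * (C / S i j ^ 2) ≤ N * (N ^ 27 / c₀ ^ 4) := by
          exact mul_le_mul_of_nonneg_left (h.div_slope_sq_le hc₀ hV hN₀.le hC i j) hN₀.le
      _ = N ^ 14 / 128 * (128 * N ^ 14 * (1 / c₀ ^ 4)) := by field_simp
      _ < _ := by
          gcongr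
          push_cast
          exact Nat.lt_floor_add_one _
  · field_simp
  · push_cast
    field_simp
  · push_cast
    field_simp
    linarith
  · push_cast
    refine le_trans ?_ hcard
    exact_mod_cast size_le_pow_seventeen (by linarith) (by positivity) hNlog

theorem eventually_add_mul_log_le (a k : ℝ) : ∀ᶠ x : ℝ in atTop, a + k * log x ≤ x := by
  have hlog : (fun x : ℝ => a + k * log x) =o[atTop] id :=
    (Asymptotics.isLittleO_const_id_atTop a).add (isLittleO_log_id_atTop.const_mul_left k)
  filter_upwards [hlog.bound one_pos, eventually_ge_atTop 0] with x hx hx₀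
  rw [one_mul, id, norm_of_nonneg hx₀] at hx
  exact (le_norm_self _).trans hx

theorem one_div_sixteen_mul_sq_le_one {b : ℕ} (hb : 1 ≤ b) : 1 / (16 * (b : ℝ) ^ 2) ≤ 1 := by
  have : (1 : ℝ) ≤ b := by exact_mod_cast hb
  exact div_le_one_of_le₀ (by nlinarith) (by positivity)

theorem exists_scale {x C c₀ : ℝ} (hc₀ : 0 < c₀) (hc₁ : c₀ ≤ 1) (hxc : 10 ^ 12 ≤ x * c₀ ^ 6)
    (hx : 1 ≤ x) (hC : x ^ 43 ≤ C) :
    ∃ V : ℝ, 2 ≤ V ∧ 1 < c₀ * V ∧ 48 / c₀ ^ 3 ≤ V ^ 2 * (1 / x ^ 6) ∧ C = x ^ 27 * V ^ 4 := by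
  obtain ⟨V, hxV, hCV⟩ := exists_eq_mul_pow_four hx hC
  have hx₄ : x ≤ x ^ 4 := le_self_pow₀ hx (by norm_num)
  have hpow {k : ℕ} (hk : k ≤ 6) : 10 ^ 12 ≤ x * c₀ ^ k :=
    hxc.trans (mul_le_mul_of_nonneg_left (pow_le_pow_of_le_one hc₀.le hc₁ hk) (by linarith))
  have hx₀ : 10 ^ 12 ≤ x := by simpa using hpow (Nat.zero_le 6)
  have hx₁ : 10 ^ 12 ≤ x * c₀ := by simpa using hpow (by norm_num : 1 ≤ 6)
  refine ⟨V, by linarith, by nlinarith, ?_, hCV⟩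
  calc 48 / c₀ ^ 3 ≤ x := by
        rw [div_le_iff₀ (by positivity)]
        linarith [hpow (by norm_num : 3 ≤ 6)]
    _ ≤ (x ^ 4) ^ 2 * (1 / x ^ 6) := by
        field_simp
        nlinarith
    _ ≤ V ^ 2 * (1 / x ^ 6) := by gcongr

theorem exists_bad_dni_sq_le {b B ν N : ℕ} {c₀ C κ : ℝ} (hb : b = 2 * B + 3)
    (hbB : b ^ 17 ≤ B ^ 19) (hc₀ : c₀ = 1 / (16 * (b : ℝ) ^ 2)) (hN : N = b ^ ν)
    (hNc : 10 ^ 12 ≤ N * c₀ ^ 6) (hNlog : 65536 * (1 / c₀ ^ 4 + 2 + 13 * log N) ≤ N)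
    (hC : (N : ℝ) ^ 43 ≤ C) (hκ : κ ∈ Set.Icc 0 1) (ω : ℝ) :
    ∃ z ∈ Set.Icc 1 (6 / c₀), BadWith (c₀ / 204) z ∧ dni (C / (z + κ) - ω) ^ 2 ≤ 1 / N := by
  have hB : NeZero B := ⟨by rintro rfl; simp [hb] at hbB⟩
  obtain ⟨Y, hY, hYsep⟩ := exists_bad_cluster hb 0 (6 * ν)
  obtain ⟨w, hw, hwsep⟩ := exists_bad_cluster hb (15 * ν) (13 * ν)
  have hpow (k : ℕ) : (b : ℝ) ^ (k * ν) = N ^ k := by rw [hN, mul_comm, pow_mul]; push_cast; rfl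
  rw [← hc₀] at hY hw
  simp only [zero_add, ← add_mul, Nat.reduceAdd, hpow] at hYsep hwsep
  have hb₁ : (1 : ℝ) ≤ b := by exact_mod_cast (by omega : 1 ≤ b)
  have hN₁ : (1 : ℝ) ≤ N := by rw [hN]; exact_mod_cast one_le_pow₀ (by omega)
  have hc₀_pos : 0 < c₀ := by rw [hc₀]; positivity
  have hc₀_le : c₀ ≤ 1 := by rw [hc₀]; exact one_div_sixteen_mul_sq_le_one (by omega)
  obtain ⟨V, hV, hcV, hVN, hCV⟩ := exists_scale hc₀_pos hc₀_le hNc hN₁ hC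
  let l₀ : Fin (13 * ν) → Fin B := 0
  obtain ⟨z, S, ψ, h⟩ := exists_isNearAffineFamily hc₀_pos hc₀_le hV hcV (by positivity) hVN hY
    (fun i i' hi => (hYsep i i' hi).2) hw (hw l₀).1 hκ
  have hw' l l' : |w l - w l'| ≤ 1 / (N : ℝ) ^ 15 := by
    obtain rfl | hne := eq_or_ne l l'
    · rw [sub_self, abs_zero]
      positivity
    · exact (hwsep l l' hne).1
  have hcard : (N : ℝ) ^ 17 ≤
      Fintype.card (Fin (6 * ν) → Fin B) * Fintype.card (Fin (13 * ν) → Fin B) := by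
    simp only [Fintype.card_fun, Fintype.card_fin, hN]
    norm_cast
    rw [← pow_add, ← add_mul, pow_mul, ← pow_mul, mul_comm, pow_mul]
    exact Nat.pow_le_pow_left hbB ν
  obtain ⟨i, j, l, hle⟩ := h.exists_dni_sq_le hc₀_pos hc₀_le (by linarith) hCV hNc hNlog
    (hw' · l₀) hw' (fun l l' hl => (hwsep l l' hl).2) hcard ω
  exact ⟨z i j l, h.mem_Icc i j l, h.badWith i j l, hle⟩

theorem eventually_exists_bad_dni_sq_le :
    ∃ c₂ Z : ℝ, 0 < c₂ ∧ c₂ ≤ 1 ∧ 1 ≤ Z ∧ ∀ᶠ R : ℕ in atTop, ∀ C κ ω : ℝ, (R : ℝ) ^ 44 ≤ C →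
      κ ∈ Set.Icc 0 1 → ∃ z ∈ Set.Icc 1 Z, BadWith c₂ z ∧ dni (C / (z + κ) - ω) ^ 2 ≤ 1 / R := by
  obtain ⟨b, B, hb, hbB⟩ : ∃ b B : ℕ, b = 2 * B + 3 ∧ b ^ 17 ≤ B ^ 19 :=
    ⟨1027, 512, by norm_num, by norm_num⟩
  have hb₁ : 1 < b := by omega
  obtain ⟨c₀, hc₀_eq⟩ : ∃ c₀, c₀ = 1 / (16 * (b : ℝ) ^ 2) := ⟨_, rfl⟩
  have hc₀ : 0 < c₀ := by rw [hc₀_eq]; positivity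
  have hc₁ : c₀ ≤ 1 := by rw [hc₀_eq]; exact one_div_sixteen_mul_sq_le_one hb₁.le
  refine ⟨c₀ / 204, 6 / c₀, by positivity, by linarith, by rw [one_le_div hc₀]; linarith, ?_⟩
  have hlarge : ∀ᶠ N : ℕ in atTop, 10 ^ 12 ≤ N * c₀ ^ 6 ∧
      65536 * (1 / c₀ ^ 4 + 2 + 13 * log N) ≤ N := by
    refine tendsto_natCast_atTop_atTop.eventually (p := fun x : ℝ => 10 ^ 12 ≤ x * c₀ ^ 6 ∧
      65536 * (1 / c₀ ^ 4 + 2 + 13 * log x) ≤ x) (Eventually.and ?_ ?_)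
    · exact (tendsto_id.atTop_mul_const (by positivity)).eventually_ge_atTop _
    · filter_upwards [eventually_add_mul_log_le (65536 * (1 / c₀ ^ 4 + 2)) (65536 * 13)] with x hx
      linarith
  have hN : Tendsto (fun R => b ^ Nat.clog b R) atTop atTop :=
    tendsto_atTop_mono (fun R => Nat.le_pow_clog hb₁ R) tendsto_id
  filter_upwards [hN.eventually hlarge, eventually_ge_atTop (b ^ 43)] with R ⟨hNc, hNlog⟩ hR C κ ω
    hC hκ
  have hR₁ : 1 < R := (Nat.one_lt_pow (by norm_num) hb₁).trans_le hR
  have hNR : b ^ Nat.clog b R ≤ b * R := by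
    obtain ⟨k, hk⟩ := Nat.exists_eq_succ_of_ne_zero (Nat.clog_pos hb₁ hR₁).ne'
    have hlt : b ^ k < R := Nat.pow_lt_of_lt_clog (by omega)
    rw [hk, pow_succ']
    exact Nat.mul_le_mul_left _ hlt.le
  have hNC : ((b ^ Nat.clog b R : ℕ) : ℝ) ^ 43 ≤ C := by
    refine le_trans ?_ hC
    norm_cast
    calc (b ^ Nat.clog b R) ^ 43 ≤ (b * R) ^ 43 := Nat.pow_le_pow_left hNR 43
      _ = b ^ 43 * R ^ 43 := mul_pow ..
      _ ≤ R * R ^ 43 := Nat.mul_le_mul_right _ hR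
      _ = R ^ 44 := by ring
  obtain ⟨z, hz, hzbad, hle⟩ := exists_bad_dni_sq_le hb hbB hc₀_eq rfl hNc hNlog hNC hκ ω
  refine ⟨z, hz, hzbad, hle.trans ?_⟩
  gcongr
  exact Nat.le_pow_clog hb₁ R

end InverseShift

/-! ### Steering inside good intervals -/

section Steering

/-- Inside each `N`-interval of level `m`, and for each `n` at least `A` times its scale `b ^ m`,
there are `N`-intervals of all levels `M` with `K n ≤ b ^ M` on which `n y` is within `e` of any
prescribed residue `θ` modulo `1`. -/
def CanSteer (b : ℕ) (N : ℕ → ℤ → Prop) (A K e : ℝ) : Prop :=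
  ∀ m i, N m i → ∀ n θ : ℝ, A * (b : ℝ) ^ m ≤ n → ∀ M : ℕ, K * n ≤ (b : ℝ) ^ M →
    ∃ i', N M i' ∧ adicIcc b M i' ⊆ adicIcc b m i ∧ ∀ y ∈ adicIcc b M i', dni (n * y - θ) ≤ e

theorem mul_mobius_sub {a b c d : ℤ} (hdet : a * d - b * c = 1) {z : ℝ} (hc : (c : ℝ) ≠ 0)
    (hden : c * z + d ≠ 0) (n θ : ℝ) :
    n * ((a * z + b) / (c * z + d)) - θ =
      -(n / (c : ℝ) ^ 2 / (z + d / c) - (n * a / c - θ)) := by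
  have hdet' : (a : ℝ) * d - b * c = 1 := by exact_mod_cast hdet
  have hshift : n / (c : ℝ) ^ 2 / (z + d / c) = n / (c * (c * z + d)) := by field_simp
  have hmobius : n * ((a * z + b) / (c * z + d)) = n * a / c - n / (c * (c * z + d)) := by
    rw [← mul_div_assoc, div_sub_div _ _ hc (mul_ne_zero hc hden),
      div_eq_div_iff hden (mul_ne_zero hc (mul_ne_zero hc hden))]
    linear_combination (-(n * c * (c * z + d))) * hdet'
  rw [hshift, hmobius]
  ring

theorem eventually_exists_dni_mobius_le :
    ∃ c₂ Z : ℝ, 0 < c₂ ∧ c₂ ≤ 1 ∧ 1 ≤ Z ∧ ∀ᶠ R : ℕ in atTop, ∀ (V y : ℝ) (a b c d : ℤ),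
      IsDirichletMatrix V y a b c d → ∀ n θ : ℝ, V ^ 2 * (R : ℝ) ^ 88 ≤ n →
        ∃ z ∈ Set.Icc 1 Z, BadWith c₂ z ∧ dni (n * ((a * z + b) / (c * z + d)) - θ) ≤ 1 / R := by
  obtain ⟨c₂, Z, hc₂, hc₂₁, hZ, hR⟩ := eventually_exists_bad_dni_sq_le
  refine ⟨c₂, Z, hc₂, hc₂₁, hZ, ?_⟩
  filter_upwards [(tendsto_pow_atTop two_ne_zero).eventually hR] with R hR V y a b c d h n θ hn
  have hc := h.c_pos
  have hC : ((R ^ 2 : ℕ) : ℝ) ^ 44 ≤ n / (c : ℝ) ^ 2 := by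
    rw [le_div_iff₀ (by positivity)]
    calc ((R ^ 2 : ℕ) : ℝ) ^ 44 * (c : ℝ) ^ 2 = (c : ℝ) ^ 2 * (R : ℝ) ^ 88 := by push_cast; ring
      _ ≤ V ^ 2 * (R : ℝ) ^ 88 := by gcongr; exact h.c_le
      _ ≤ n := hn
  have hκ : (d : ℝ) / c ∈ Set.Icc (0 : ℝ) 1 :=
    ⟨div_nonneg (by linarith [h.one_le_d]) hc.le, (div_le_one hc).mpr h.d_le_c⟩
  obtain ⟨z, hz, hzbad, hle⟩ := hR _ _ (n * a / c - θ) hC hκ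
  refine ⟨z, hz, hzbad, ?_⟩
  rw [mul_mobius_sub h.det_eq_one hc.ne' (h.mul_add_pos hz.1).ne', dni_neg]
  refine le_of_sq_le_sq (hle.trans_eq ?_) (by positivity)
  rw [div_pow, one_pow, Nat.cast_pow]

variable {B b m M : ℕ} {i i' : ℤ} {κ c c' K W : ℝ}

theorem GoodAdic.exists_badWith [NeZero B] (hb : b = 2 * B + 3) (hκ : 0 < κ)
    (hκb : κ * (2 * b) ≤ 1) (hcκ : c' * (8 * b) ≤ κ) (hc : c ≤ c') (hG : GoodAdic b κ c 1 m i) :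
    ∃ x ∈ adicCore b m i, BadWith c x ∧
      ∀ q p : ℤ, 1 ≤ q → κ * (b : ℝ) ^ m ≤ (q : ℝ) ^ 2 → c' ≤ q * |q * x - p| := by
  obtain ⟨x, -, hx⟩ := exists_isCantorCoding_bad hb hκ hκb hcκ m i
  obtain ⟨hcore, hbad⟩ := hx 0
  refine ⟨x 0, hcore, fun q p hq => ?_, hbad⟩
  rcases le_or_gt (κ * (b : ℝ) ^ m) ((q : ℝ) ^ 2) with hlarge | hsmall
  · exact hc.trans (hbad q p hq hlarge)
  · exact hG _ (adicCore_subset_adicIcc hcore) q p hq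
      (one_le_pow₀ (by exact_mod_cast hq)) hsmall

theorem mem_adicIcc_of_abs_sub_le {x y : ℝ} (hx : x ∈ adicCore b m i)
    (h : |y - x| ≤ 1 / (b : ℝ) ^ (m + 1)) : y ∈ adicIcc b m i := by
  have hyx := abs_le.mp h
  exact ⟨by linarith [hx.1], by linarith [hx.2]⟩

theorem exists_mem_adicIcc (hb : 0 < b) (M : ℕ) (x : ℝ) : ∃ i, x ∈ adicIcc b M i := by
  have hpos : 0 < (b : ℝ) ^ M := by positivity
  refine ⟨⌊x * (b : ℝ) ^ M⌋, ?_, ?_⟩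
  · exact (div_le_iff₀ hpos).mpr (Int.floor_le _)
  · exact (le_div_iff₀ hpos).mpr (Int.lt_floor_add_one _).le

theorem GoodAdic.of_subset (hb : 0 < b) (hG : GoodAdic b κ c K m i)
    (hsub : adicIcc b M i' ⊆ adicIcc b m i) {x : ℝ} (hx : x ∈ adicIcc b M i') {A : ℝ}
    (hA : A ≤ c * (b : ℝ) ^ M)
    (hmid : ∀ q p : ℤ, 1 ≤ q → κ * (b : ℝ) ^ m ≤ (q : ℝ) ^ 2 → 2 * c ≤ q * |q * x - p|)
    (hlarge : ∀ q p : ℤ, 1 ≤ q → A ≤ (q : ℝ) ^ 2 → c + κ ≤ q * |q * x - p|) :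
    GoodAdic b κ c K M i' := by
  intro y hy q p hq hqK hqM
  rcases lt_or_ge ((q : ℝ) ^ 2) (κ * (b : ℝ) ^ m) with hqm | hqm
  · exact hG y (hsub hy) q p hq hqK hqm
  have hq0 : (0 : ℝ) < q := by exact_mod_cast hq
  have hpos : 0 < (b : ℝ) ^ M := by positivity
  have hdist : q * |q * x - p| ≤ q * |q * y - p| + (q : ℝ) ^ 2 / (b : ℝ) ^ M := by
    calc q * |q * x - p| = q * |(q * y - p) + q * (x - y)| := by ring_nf
      _ ≤ q * (|q * y - p| + q * (1 / (b : ℝ) ^ M)) := by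
        gcongr
        refine (abs_add_le _ _).trans ?_
        rw [abs_mul, abs_of_pos hq0]
        gcongr
        exact abs_sub_le_of_mem_adicIcc hx hy
      _ = q * |q * y - p| + (q : ℝ) ^ 2 / (b : ℝ) ^ M := by ring
  rcases le_or_gt A ((q : ℝ) ^ 2) with hqA | hqA
  · have hκ : (q : ℝ) ^ 2 / (b : ℝ) ^ M ≤ κ := (div_le_iff₀ hpos).mpr hqM.le
    linarith [hlarge q p hq hqA]
  · have hc : (q : ℝ) ^ 2 / (b : ℝ) ^ M ≤ c := (div_le_iff₀ hpos).mpr (hqA.le.trans hA)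
    linarith [hmid q p hq hqm]

/-- `x` is a point near the middle of a good interval of level `m` whose approximation constants
are strong enough for small neighbourhoods of `x` to be good too. -/
structure IsSteeringPoint (b : ℕ) (κ c W : ℝ) (m : ℕ) (i : ℤ) (x : ℝ) : Prop where
  exists_core : ∃ y ∈ adicCore b m i, |x - y| ≤ 1 / (2 * (b : ℝ) ^ (m + 1))
  mid_le : ∀ q p : ℤ, 1 ≤ q → κ * (b : ℝ) ^ m ≤ (q : ℝ) ^ 2 → 2 * c ≤ q * |q * x - p|
  large_le : ∀ q p : ℤ, 1 ≤ q → W * (b : ℝ) ^ m ≤ (q : ℝ) ^ 2 → c + κ ≤ q * |q * x - p|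

theorem IsDirichletMatrix.isSteeringPoint {V y c₂ z Z : ℝ} {P P' Q Q' : ℤ}
    (h : IsDirichletMatrix V y P P' Q Q') (hb : 1 ≤ b) (hy : y ∈ adicCore b m i)
    (hbad : ∀ q p : ℤ, 1 ≤ q → κ * (b : ℝ) ^ m ≤ (q : ℝ) ^ 2 → c' ≤ q * |q * y - p|)
    (hQ : 4 * b ^ 2 * (b : ℝ) ^ m ≤ (Q : ℝ) ^ 2) (hV : V ^ 2 = W * (b : ℝ) ^ m)
    (hc' : 0 ≤ c') (hcc₂ : c' ≤ c₂) (hc₂ : c₂ ≤ 1) (hz : z ∈ Set.Icc 1 Z) (hzbad : BadWith c₂ z)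
    (hc : 2 * c ≤ c' / (2 * (Z + 1))) (hκ : c + κ ≤ c₂ / (2 * (Z + 1))) :
    IsSteeringPoint b κ c W m i ((P * z + P') / (Q * z + Q')) where
  exists_core := by
    refine ⟨y, hy, (h.abs_mobius_sub_le hz.1).trans ?_⟩
    have hb' : (1 : ℝ) ≤ b := by exact_mod_cast hb
    rw [div_le_div_iff₀ (pow_pos h.c_pos 2) (by positivity), one_mul]
    calc 2 * (2 * (b : ℝ) ^ (m + 1)) = 4 * b * (b : ℝ) ^ m := by ring
      _ ≤ 4 * b ^ 2 * (b : ℝ) ^ m := by gcongr; exact le_self_pow₀ hb' two_ne_zero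
      _ ≤ (Q : ℝ) ^ 2 := hQ
  mid_le q p hq hqm := hc.trans <| h.le_mul_abs_mobius hc' (hcc₂.trans hc₂) hz.1 hz.2
    (hzbad.mono hcc₂) hq fun _ => hbad q p hq hqm
  large_le q p hq hqW := by
    refine hκ.trans <| h.le_mul_abs_mobius (hc'.trans hcc₂) hc₂ hz.1 hz.2 hzbad hq fun hqQ => ?_
    have hqQ' : (q : ℝ) < Q := by exact_mod_cast hqQ
    have hq0 : (0 : ℝ) < q := by exact_mod_cast hq
    nlinarith [h.c_le]

theorem IsSteeringPoint.exists_goodAdic {x : ℝ} (hx : IsSteeringPoint b κ c W m i x) (hb : 0 < b)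
    (hG : GoodAdic b κ c K m i) (hM : 2 * (b : ℝ) ^ (m + 1) ≤ (b : ℝ) ^ M)
    (hW : W * (b : ℝ) ^ m ≤ c * (b : ℝ) ^ M) :
    ∃ i', GoodAdic b κ c K M i' ∧ adicIcc b M i' ⊆ adicIcc b m i ∧ x ∈ adicIcc b M i' := by
  obtain ⟨i', hxi⟩ := exists_mem_adicIcc hb M x
  obtain ⟨x', hx', hxx'⟩ := hx.exists_core
  have hsub : adicIcc b M i' ⊆ adicIcc b m i := by
    intro y hy
    refine mem_adicIcc_of_abs_sub_le hx' ?_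
    calc |y - x'| ≤ |y - x| + |x - x'| := abs_sub_le _ _ _
      _ ≤ 1 / (2 * (b : ℝ) ^ (m + 1)) + 1 / (2 * (b : ℝ) ^ (m + 1)) := by
        gcongr
        exact (abs_sub_le_of_mem_adicIcc hy hxi).trans
          (one_div_le_one_div_of_le (by positivity) hM)
      _ = 1 / (b : ℝ) ^ (m + 1) := by field_simp; norm_num
  exact ⟨i', hG.of_subset hb hsub hxi hW hx.mid_le hx.large_le, hsub, hxi⟩

theorem exists_steering_constants {b c₂ Z : ℝ} (hb : 1 ≤ b) (hc₂ : 0 < c₂) (hZ : 1 ≤ Z) :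
    ∃ κ c c' : ℝ, 0 < c ∧ c ≤ c' ∧ c' ≤ κ ∧ κ ≤ c₂ ∧ κ * (2 * b) ≤ c₂ ∧ c' * (8 * b) ≤ κ ∧
      2 * c ≤ c' / (2 * (Z + 1)) ∧ c + κ ≤ c₂ / (2 * (Z + 1)) := by
  obtain ⟨κ, hκ⟩ : ∃ κ, κ = c₂ / (2 * (Z + 1)) / (2 * b) := ⟨_, rfl⟩
  obtain ⟨c', hc'⟩ : ∃ c', c' = κ / (8 * b) := ⟨_, rfl⟩
  have hκ₀ : 0 < κ := by rw [hκ]; positivity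
  have hc'₀ : 0 < c' := by rw [hc']; positivity
  have hκ₂ : κ * (2 * b) = c₂ / (2 * (Z + 1)) := by rw [hκ]; field_simp
  have hκc₂ : κ * (2 * b) ≤ c₂ := by rw [hκ₂]; exact div_le_self hc₂.le (by linarith)
  have hc'κ : c' * (8 * b) = κ := by rw [hc']; field_simp
  have hcc' : c' / (4 * (Z + 1)) ≤ c' := div_le_self hc'₀.le (by linarith)
  have hc'_le : c' ≤ κ := by nlinarith
  refine ⟨κ, c' / (4 * (Z + 1)), c', by positivity, hcc', hc'_le, by nlinarith, hκc₂, hc'κ.le,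
    ?_, by nlinarith⟩
  apply le_of_eq
  field_simp
  norm_num

theorem eventually_exists_isSteeringPoint [NeZero B] (hb : b = 2 * B + 3) :
    ∃ κ c : ℝ, 0 < c ∧ κ * (2 * b) ≤ 1 ∧ c * (8 * b) ≤ κ ∧ ∀ᶠ R : ℕ in atTop,
      ∀ m i, GoodAdic b κ c 1 m i → ∀ n θ : ℝ, (2 * b / c) ^ 2 * (R : ℝ) ^ 88 * (b : ℝ) ^ m ≤ n →
        ∃ x, IsSteeringPoint b κ c ((2 * b / c) ^ 2) m i x ∧ dni (n * x - θ) ≤ 1 / R := by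
  obtain ⟨c₂, Z, hc₂, hc₂₁, hZ, hR⟩ := eventually_exists_dni_mobius_le
  have hb₁ : (1 : ℝ) ≤ b := by exact_mod_cast (by omega : 1 ≤ b)
  obtain ⟨κ, c, c', hc, hcc', hc'κ, hκc₂, hκb, hbc', hc_mid, hc_large⟩ :=
    exists_steering_constants hb₁ hc₂ hZ
  have hc' : 0 < c' := hc.trans_le hcc'
  refine ⟨κ, c, hc, hκb.trans hc₂₁, hbc'.trans' (by gcongr), ?_⟩
  filter_upwards [hR] with R hR m i hG n θ hn
  obtain ⟨y, hy, hyc, hyc'⟩ :=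
    hG.exists_badWith hb (hc'.trans_le hc'κ) (hκb.trans hc₂₁) hbc' hcc'
  have hβ : 1 ≤ √((b : ℝ) ^ m) := one_le_sqrt.mpr (one_le_pow₀ hb₁)
  have hV₁ : 1 ≤ 2 * b / c := by rw [one_le_div hc]; linarith
  obtain ⟨V, hV⟩ : ∃ V, V = 2 * b / c * √((b : ℝ) ^ m) := ⟨_, rfl⟩
  have hV_one : 1 ≤ V := hV ▸ one_le_mul_of_one_le_of_one_le hV₁ hβ
  have hV_sq : V ^ 2 = (2 * b / c) ^ 2 * (b : ℝ) ^ m := by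
    rw [hV, mul_pow, sq_sqrt (by positivity)]
  obtain ⟨P, P', Q, Q', h⟩ := exists_isDirichletMatrix hV_one y
  have hQ : 4 * b ^ 2 * (b : ℝ) ^ m ≤ (Q : ℝ) ^ 2 := by
    calc 4 * b ^ 2 * (b : ℝ) ^ m = (c * V) ^ 2 := by rw [mul_pow, hV_sq]; field_simp; norm_num
      _ ≤ (Q : ℝ) ^ 2 := by gcongr; exact h.mul_le_c (by linarith) hyc
  obtain ⟨z, hz, hzbad, hle⟩ := hR V y P P' Q Q' h n θ (by rw [hV_sq]; linarith)
  exact ⟨_, h.isSteeringPoint (by omega) hy hyc' hQ hV_sq hc'.le (hc'κ.trans hκc₂) hc₂₁ hz hzbad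
    hc_mid hc_large, hle⟩

theorem eventually_canSteer [NeZero B] (hb : b = 2 * B + 3) :
    ∃ κ c W : ℝ, 0 < c ∧ c ≤ 1 ∧ 1 ≤ W ∧ κ * (2 * b) ≤ 1 ∧ c * (8 * b) ≤ κ ∧
      ∀ᶠ R : ℕ in atTop, CanSteer b (GoodAdic b κ c 1) (W * (R : ℝ) ^ 88) (R / c) (2 / R) := by
  obtain ⟨κ, c, hc, hκb, hcκ, hR⟩ := eventually_exists_isSteeringPoint hb
  have hb₁ : (1 : ℝ) ≤ b := by exact_mod_cast (by omega : 1 ≤ b)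
  have hκ : 0 < κ := lt_of_lt_of_le (by positivity) hcκ
  have hc₁ : c ≤ 1 := by nlinarith
  have hbc : 2 * b ≤ 2 * b / c := le_div_self (by positivity) hc hc₁
  refine ⟨κ, c, (2 * b / c) ^ 2, hc, hc₁, one_le_pow₀ (by linarith), hκb, hcκ, ?_⟩
  filter_upwards [hR, eventually_ge_atTop 1] with R hR hR₁ m i hG n θ hn M hM
  have hR₁' : (1 : ℝ) ≤ R := by exact_mod_cast hR₁
  have hn₀ : 0 < n := lt_of_lt_of_le (by positivity) hn
  obtain ⟨x, hx, hle⟩ := hR m i hG n θ hn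
  have hWn : (2 * b / c) ^ 2 * (b : ℝ) ^ m ≤ n := by
    refine le_trans ?_ hn
    gcongr
    exact le_mul_of_one_le_right (by positivity) (one_le_pow₀ hR₁')
  have hRn : R * n ≤ c * (b : ℝ) ^ M := by
    rwa [div_mul_eq_mul_div, div_le_iff₀ hc, mul_comm _ c] at hM
  have hnM : n ≤ c * (b : ℝ) ^ M := (le_mul_of_one_le_left hn₀.le hR₁').trans hRn
  have hMm : 2 * (b : ℝ) ^ (m + 1) ≤ (b : ℝ) ^ M := by
    calc 2 * (b : ℝ) ^ (m + 1) = 2 * b * (b : ℝ) ^ m := by ring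
      _ ≤ (2 * b / c) ^ 2 * (b : ℝ) ^ m := by
        gcongr
        exact hbc.trans (le_self_pow₀ (by linarith) two_ne_zero)
      _ ≤ c * (b : ℝ) ^ M := hWn.trans hnM
      _ ≤ (b : ℝ) ^ M := mul_le_of_le_one_left (by positivity) hc₁
  obtain ⟨i', hG', hsub, hxi⟩ := hx.exists_goodAdic (by omega) hG hMm (hWn.trans hnM)
  refine ⟨i', hG', hsub, fun y hy => ?_⟩
  have herr : |n * (y - x)| ≤ 1 / R := by
    rw [abs_mul, abs_of_pos hn₀, le_div_iff₀ (by linarith)]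
    calc n * |y - x| * R ≤ n * (1 / (b : ℝ) ^ M) * R := by
          gcongr
          exact abs_sub_le_of_mem_adicIcc hy hxi
      _ = R * n / (b : ℝ) ^ M := by ring
      _ ≤ 1 := (div_le_one (by positivity)).mpr (hRn.trans (by nlinarith [hn₀]))
  calc dni (n * y - θ) = dni (n * x - θ + n * (y - x)) := by ring_nf
    _ ≤ dni (n * x - θ) + |n * (y - x)| := dni_add_le _ _
    _ ≤ 1 / R + 1 / R := add_le_add hle herr
    _ = 2 / R := by ring

end Steering

/-! ### Convergents and scale sequences -/

section Convergents

variable {a : ℝ}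

theorem exists_int_eq_contsAux (a : ℝ) (n : ℕ) :
    (∃ z : ℤ, ((GenContFract.of a).contsAux n).a = z) ∧
      ∃ z : ℤ, ((GenContFract.of a).contsAux n).b = z := by
  induction n using Nat.twoStepInduction with
  | zero => exact ⟨⟨1, by simp⟩, ⟨0, by simp⟩⟩
  | one => exact ⟨⟨⌊a⌋, by simp⟩, ⟨1, by simp⟩⟩
  | more n ih ih' =>
    rcases hgp : (GenContFract.of a).s.get? n with _ | gp
    · rwa [GenContFract.contsAux_stable_step_of_terminated hgp]
    · obtain ⟨⟨x, hx⟩, y, hy⟩ := ih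
      obtain ⟨⟨x', hx'⟩, y', hy'⟩ := ih'
      obtain ⟨hnum, z, hz⟩ := GenContFract.of_partNum_eq_one_and_exists_int_partDen_eq hgp
      rw [GenContFract.contsAux_recurrence hgp rfl rfl]
      exact ⟨⟨z * x' + x, by simp [hnum, hz, hx, hx']⟩, ⟨z * y' + y, by simp [hnum, hz, hy, hy']⟩⟩

theorem exists_int_eq_nums (a : ℝ) (t : ℕ) : ∃ z : ℤ, (GenContFract.of a).nums t = z :=
  (exists_int_eq_contsAux a (t + 1)).1

theorem qden_zero (a : ℝ) : qden a 0 = 1 := GenContFract.zeroth_den_eq_one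

theorem qden_monotone (a : ℝ) : Monotone (qden a) :=
  monotone_nat_of_le_succ fun _ => GenContFract.of_den_mono

theorem one_le_qden (a : ℝ) (t : ℕ) : 1 ≤ qden a t :=
  (qden_zero a).ge.trans (qden_monotone a t.zero_le)

theorem exists_natCast_eq_qden (a : ℝ) (t : ℕ) : ∃ q : ℕ, 1 ≤ q ∧ qden a t = q := by
  obtain ⟨z, hz⟩ : ∃ z : ℤ, qden a t = z := (exists_int_eq_contsAux a (t + 1)).2
  have hz₁ : 1 ≤ z := by exact_mod_cast hz ▸ one_le_qden a t
  lift z to ℕ using by omega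
  exact ⟨z, by omega, hz⟩

theorem not_terminatedAt_of_irrational (ha : Irrational a) (n : ℕ) :
    ¬(GenContFract.of a).TerminatedAt n := by
  intro hn
  obtain ⟨q, hq⟩ := (GenContFract.terminates_iff_rat a).mp ⟨n, hn⟩
  exact ha ⟨q, hq.symm⟩

theorem two_mul_qden_le (ha : Irrational a) (t : ℕ) : 2 * qden a t ≤ qden a (t + 2) := by
  obtain ⟨gp, hgp⟩ := Option.ne_none_iff_exists'.mp (not_terminatedAt_of_irrational ha (t + 1))
  have hden : 1 ≤ gp.b := GenContFract.of_one_le_get?_partDen (GenContFract.partDen_eq_s_b hgp)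
  have hrec : qden a (t + 2) = gp.b * qden a (t + 1) + gp.a * qden a t :=
    GenContFract.dens_recurrence hgp rfl rfl
  rw [hrec, (GenContFract.of_partNum_eq_one_and_exists_int_partDen_eq hgp).1]
  nlinarith [qden_monotone a t.le_succ, one_le_qden a (t + 1)]

theorem exists_isCoprime_abs_sub_le (ha : Irrational a) (t : ℕ) :
    ∃ (p : ℤ) (q : ℕ), 1 ≤ q ∧ qden a t = q ∧ IsCoprime p q ∧ |a - p / q| ≤ 1 / (q : ℝ) ^ 2 := by
  obtain ⟨p, hp⟩ := exists_int_eq_nums a t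
  obtain ⟨p', hp'⟩ := exists_int_eq_nums a (t + 1)
  obtain ⟨q, hq₁, hq⟩ := exists_natCast_eq_qden a t
  obtain ⟨q', -, hq'⟩ := exists_natCast_eq_qden a (t + 1)
  refine ⟨p, q, hq₁, hq, ⟨(-1) ^ (t + 1) * q', -((-1) ^ (t + 1) * p'), ?_⟩, ?_⟩
  · have hdet : (p : ℝ) * q' - q * p' = (-1) ^ (t + 1) := by
      rw [← hp, ← hp', ← hq, ← hq']
      exact SimpContFract.determinant (s := SimpContFract.of a)
        (not_terminatedAt_of_irrational ha t)
    calc (-1) ^ (t + 1) * q' * p + -((-1) ^ (t + 1) * p') * (q : ℤ)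
        = (-1) ^ (t + 1) * (p * q' - q * p') := by ring
      _ = (-1) ^ (t + 1) * (-1) ^ (t + 1) := by congr 1; exact_mod_cast hdet
      _ = 1 := by rw [← mul_pow]; simp
  · have hconv := GenContFract.abs_sub_convs_le (not_terminatedAt_of_irrational ha t)
    rw [GenContFract.conv_eq_num_div_den, hp] at hconv
    change |a - p / qden a t| ≤ 1 / (qden a t * qden a (t + 1)) at hconv
    have hpos := one_le_qden a t
    rw [← hq]
    refine hconv.trans (one_div_le_one_div_of_le (by positivity) ?_)
    nlinarith [qden_monotone a t.le_succ]

end Convergents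

section ScaleSequence

theorem exists_nat_mul_dni_le (a g : ℝ) {p : ℤ} {q : ℕ} (hq : 1 ≤ q) (hpq : IsCoprime p q)
    (h : |a - p / q| ≤ 1 / (q : ℝ) ^ 2) :
    ∃ n : ℕ, q ≤ n ∧ n < 2 * q ∧ n * dni (n * a - g) ≤ 5 := by
  obtain ⟨u, v, huv⟩ := hpq
  have : (0 : ℝ) < q := by exact_mod_cast hq
  obtain ⟨k, hk⟩ : ∃ k, k = round (q * g) := ⟨_, rfl⟩
  obtain ⟨r, hr⟩ := Int.eq_ofNat_of_zero_le (Int.emod_nonneg (u * k) (by omega : (q : ℤ) ≠ 0))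
  have hrq : r < q := by exact_mod_cast hr ▸ Int.emod_lt_of_pos (u * k) (by omega : (0 : ℤ) < q)
  have hdiv := Int.emod_add_mul_ediv (u * k) q
  rw [hr] at hdiv
  obtain ⟨j, hj⟩ : ∃ j : ℤ, ((q + r : ℕ) : ℤ) * p = k + q * j := by
    refine ⟨p - v * k - u * k / q * p, ?_⟩
    push_cast
    linear_combination k * huv + p * hdiv
  obtain ⟨n, hn⟩ : ∃ n, n = q + r := ⟨_, rfl⟩
  rw [← hn] at hj
  refine ⟨n, by omega, by omega, ?_⟩
  have hnq : (n : ℝ) ≤ 2 * q := by exact_mod_cast (by omega : n ≤ 2 * q)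
  have hsub : n * a - g - j = n * (a - p / q) + (k - q * g) / q := by
    have : (n : ℝ) * p = k + q * j := by exact_mod_cast hj
    field_simp
    linarith
  have hdni : dni (n * a - g) ≤ 5 / 2 / q := by
    calc dni (n * a - g) ≤ |n * a - g - j| := dni_le_abs_sub_intCast _ _
      _ ≤ n * |a - p / q| + |q * g - k| / q := by
        rw [hsub, abs_sub_comm _ (k : ℝ)]
        refine (abs_add_le _ _).trans_eq ?_
        rw [abs_mul, abs_div, Nat.abs_cast, Nat.abs_cast]
      _ ≤ 2 * q * (1 / (q : ℝ) ^ 2) + 1 / 2 / q := by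
        gcongr
        exact hk ▸ abs_sub_round _
      _ = 5 / 2 / q := by field_simp; norm_num
  calc n * dni (n * a - g) ≤ 2 * q * (5 / 2 / q) := by gcongr; exact dni_nonneg _
    _ = 5 := by field_simp

/-- Integers `N t`, comparable to the denominators `Q t` of the convergents of `a`, for which
`N t * ‖N t * a - g‖` stays bounded. The field `log_le` is where membership in `KSet` enters. -/
structure IsScaleSequence (a g D : ℝ) (Q N : ℕ → ℕ) : Prop where
  one_le : ∀ t, 1 ≤ Q t
  mono : Monotone Q
  two_mul_le : ∀ t, 2 * Q t ≤ Q (t + 2)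
  log_le : ∀ t, log (Q t) ≤ D * t
  le : ∀ t, Q t ≤ N t
  lt : ∀ t, N t < 2 * Q t
  mul_dni_le : ∀ t, N t * dni (N t * a - g) ≤ 5

theorem exists_isScaleSequence {a : ℝ} (ha : a ∈ KSet) (g : ℝ) :
    ∃ (D : ℝ) (Q N : ℕ → ℕ), 1 ≤ D ∧ IsScaleSequence a g D Q N := by
  obtain ⟨hirr, C, hC⟩ := ha
  choose P Q hQ₁ hQ hPQ happrox using exists_isCoprime_abs_sub_le hirr
  choose N hQN hNQ hN using fun t => exists_nat_mul_dni_le a g (hQ₁ t) (hPQ t) (happrox t)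
  refine ⟨max C 1, Q, N, le_max_right _ _, hQ₁, fun t t' h => ?_, fun t => ?_, fun t => ?_,
    hQN, hNQ, hN⟩
  · exact_mod_cast hQ t ▸ hQ t' ▸ qden_monotone a h
  · exact_mod_cast hQ t ▸ hQ (t + 2) ▸ two_mul_qden_le hirr t
  · rw [← hQ]
    rcases t.eq_zero_or_pos with rfl | ht
    · simp [qden_zero]
    · have := hC t ht
      rw [div_le_iff₀ (by exact_mod_cast ht)] at this
      exact this.trans (by gcongr; exact le_max_left _ _)

namespace IsScaleSequence

variable {a g D : ℝ} {Q N : ℕ → ℕ}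

theorem two_pow_mul_le (h : IsScaleSequence a g D Q N) (t k : ℕ) :
    2 ^ k * Q t ≤ Q (t + 2 * k) := by
  induction k with
  | zero => simp
  | succ k ih =>
    calc 2 ^ (k + 1) * Q t = 2 * (2 ^ k * Q t) := by ring
      _ ≤ 2 * Q (t + 2 * k) := by gcongr
      _ ≤ Q (t + 2 * (k + 1)) := h.two_mul_le _

theorem two_pow_le (h : IsScaleSequence a g D Q N) {k t : ℕ} (hkt : 2 * k ≤ t) : 2 ^ k ≤ Q t := by
  calc 2 ^ k ≤ 2 ^ k * Q 0 := Nat.le_mul_of_pos_right _ (h.one_le 0)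
    _ ≤ Q (0 + 2 * k) := h.two_pow_mul_le 0 k
    _ ≤ Q t := h.mono (by omega)

theorem mul_log_two_le (h : IsScaleSequence a g D Q N) {k t : ℕ} (hkt : 2 * k ≤ t) :
    k * log 2 ≤ log (Q t) := by
  rw [← log_pow]
  exact log_le_log (by positivity) (by exact_mod_cast h.two_pow_le hkt)

theorem two_pow_mul_N_le (h : IsScaleSequence a g D Q N) {t t' u : ℕ} (htt' : t + 2 * u ≤ t') :
    2 ^ u * N t ≤ 2 * N t' := by
  calc 2 ^ u * N t ≤ 2 ^ u * (2 * Q t) := by gcongr; exact (h.lt t).le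
    _ = 2 * (2 ^ u * Q t) := by ring
    _ ≤ 2 * N t' := by
      gcongr
      exact (h.two_pow_mul_le t u).trans ((h.mono htt').trans (h.le t'))

theorem N_le_N_add (h : IsScaleSequence a g D Q N) {u : ℕ} (hu : 0 < u) (t j : ℕ) :
    N t ≤ N (t + 2 * u * j) := by
  rcases j.eq_zero_or_pos with rfl | hj
  · exact le_rfl
  · have := h.two_pow_mul_N_le (t := t) (t' := t + 2 * u * j) (u := 1) (by nlinarith)
    omega

theorem exists_log_sub_log_le (h : IsScaleSequence a g D Q N) {H : ℕ} (hH : 0 < H) (k : ℕ) :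
    ∃ t, H * k ≤ t ∧ t + k ≤ 2 * H * k ∧ log (Q (t + k)) - log (Q t) ≤ 2 * D * k := by
  have hsum : ∑ j ∈ Finset.range H, (log (Q (H * k + (j + 1) * k)) - log (Q (H * k + j * k))) ≤
      H • (2 * D * k) := by
    rw [Finset.sum_range_sub fun j => log (Q (H * k + j * k)), nsmul_eq_mul]
    have hend := h.log_le (H * k + H * k)
    have : 0 ≤ log (Q (H * k + 0 * k)) := log_natCast_nonneg _
    push_cast at hend
    linarith
  obtain ⟨j, hj, hle⟩ := Finset.exists_le_of_sum_le (Finset.nonempty_range_iff.mpr hH.ne')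
    (hsum.trans_eq (by rw [Finset.sum_const, Finset.card_range]))
  have hj' : (j + 1) * k ≤ H * k := Nat.mul_le_mul_right k (Finset.mem_range.mp hj)
  refine ⟨H * k + j * k, by omega, by linarith, ?_⟩
  rwa [show H * k + j * k + k = H * k + (j + 1) * k by ring]

end IsScaleSequence

end ScaleSequence

/-! ### Blocks of forced approximations -/

section Forces

/-- Every interval of level `m` satisfying `N` contains an interval of level `M` satisfying `N`, all
of whose points satisfy `Φ`. -/
def Forces (b : ℕ) (N : ℕ → ℤ → Prop) (m M : ℕ) (Φ : ℝ → Prop) : Prop :=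
  ∀ i, N m i → ∃ i', N M i' ∧ adicIcc b M i' ⊆ adicIcc b m i ∧ ∀ y ∈ adicIcc b M i', Φ y

variable {b : ℕ} {N : ℕ → ℤ → Prop} {m M k : ℕ} {Φ Ψ : ℝ → Prop}

theorem Forces.and (h : Forces b N m M Φ) (h' : Forces b N M k Ψ) :
    Forces b N m k fun y => Φ y ∧ Ψ y := by
  intro i hi
  obtain ⟨i', hi', hsub, hΦ⟩ := h i hi
  obtain ⟨i'', hi'', hsub', hΨ⟩ := h' i' hi'
  exact ⟨i'', hi'', hsub'.trans hsub, fun y hy => ⟨hΦ y (hsub' hy), hΨ y hy⟩⟩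

theorem Forces.mono (h : Forces b N m M Φ) (hΦ : ∀ y, Φ y → Ψ y) : Forces b N m M Ψ := by
  intro i hi
  obtain ⟨i', hi', hsub, hy⟩ := h i hi
  exact ⟨i', hi', hsub, fun y h => hΦ y (hy y h)⟩

theorem forces_of_le (hN : ∀ m, Forces b N m (m + 1) fun _ => True) (hm : m ≤ M) :
    Forces b N m M fun _ => True := by
  induction M, hm using Nat.le_induction with
  | base => exact fun i hi => ⟨i, hi, subset_rfl, fun _ _ => trivial⟩
  | succ M _ ih => exact (ih.and (hN M)).mono fun _ _ => trivial

theorem CanSteer.forces_forall_lt {A K e : ℝ} (h : CanSteer b N A K e) (hb : 2 ≤ b) (hA : 0 < A)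
    (hN : ∀ m, Forces b N m (m + 1) fun _ => True) {n θ : ℕ → ℝ} (hn : ∀ j, A * (b : ℝ) ^ m ≤ n j)
    (hgap : ∀ j j', j < j' → K * b * A * n j ≤ n j') (J : ℕ) (hm : m ≤ M)
    (hM : ∀ j < J, K * n j ≤ (b : ℝ) ^ M) :
    Forces b N m M fun y => ∀ j < J, dni (n j * y - θ j) ≤ e := by
  have hb₁ : (1 : ℝ) < b := by exact_mod_cast (by omega : 1 < b)
  induction J generalizing M with
  | zero => exact (forces_of_le hN hm).mono fun _ _ j hj => absurd hj j.not_lt_zero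
  | succ J ih =>
    have hnJ : (b : ℝ) ^ m ≤ n J / A := by rw [le_div_iff₀' hA]; exact hn J
    obtain ⟨l, hl, hl'⟩ := exists_nat_pow_near ((one_le_pow₀ hb₁.le).trans hnJ) hb₁
    have hml : m < l + 1 := (pow_lt_pow_iff_right₀ hb₁).mp (hnJ.trans_lt hl')
    have hlow : Forces b N m l fun y => ∀ j < J, dni (n j * y - θ j) ≤ e := by
      refine ih (by omega) fun j hj => le_of_mul_le_mul_right ?_ (by linarith : (0 : ℝ) < b)
      have : K * n j * b ≤ n J / A := by rw [le_div_iff₀ hA]; linarith [hgap j J hj]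
      exact pow_succ (b : ℝ) l ▸ this.trans hl'.le
    have htop : Forces b N l M fun y => dni (n J * y - θ J) ≤ e := fun i hi =>
      h l i hi (n J) (θ J) ((le_div_iff₀' hA).mp hl) M (hM J J.lt_succ_self)
    refine (hlow.and htop).mono fun y ⟨hlt, heq⟩ j hj => ?_
    rcases Nat.lt_succ_iff_lt_or_eq.mp hj with hj | rfl
    exacts [hlt j hj, heq]

theorem exists_levels {b A K q q' : ℝ} (hb : 1 < b) (hlogb : 1 ≤ log b) (hA : 1 ≤ A) (hK : 1 ≤ K)
    (hAq : A ≤ q) (hqq' : q ≤ q') :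
    ∃ m M : ℕ, A * b ^ m ≤ q ∧ K * q' ≤ b ^ M ∧ log q - log A ≤ (m + 1) * log b ∧ m ≤ M ∧
      (M : ℝ) ≤ m + (2 + log (K * A) + log q' - log q) := by
  have hq : 0 < q := by linarith
  have hq' : 0 < q' := hq.trans_le hqq'
  obtain ⟨m, hm, hm'⟩ := exists_nat_pow_near ((one_le_div (by linarith)).mpr hAq) hb
  obtain ⟨M, hM, hM'⟩ := exists_nat_pow_near (x := K * q') (by nlinarith) hb
  rw [le_div_iff₀' (by linarith)] at hm
  have hlogm : log q - log A ≤ (m + 1) * log b := by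
    rw [← log_div hq.ne' (by linarith)]
    exact_mod_cast log_pow b (m + 1) ▸ log_le_log (by positivity) hm'.le
  have hlogM : M * log b ≤ log K + log q' := by
    rw [← log_mul (by linarith) hq'.ne', ← log_pow]
    exact log_le_log (by positivity) hM
  have hmM : m < M + 1 := by
    refine (pow_lt_pow_iff_right₀ hb).mp (lt_of_le_of_lt ?_ hM')
    calc b ^ m ≤ A * b ^ m := le_mul_of_one_le_left (by positivity) hA
      _ ≤ q' := hm.trans hqq'
      _ ≤ K * q' := le_mul_of_one_le_left hq'.le hK
  refine ⟨m, M + 1, hm, hM'.le, hlogm, by omega, ?_⟩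
  have hdiff : ((M : ℝ) - m - 1) * log b ≤ log (K * A) + log q' - log q := by
    rw [log_mul (by linarith) (by linarith)]
    linarith
  push_cast
  rcases le_or_gt ((M : ℝ) - m - 1) 0 with hneg | hpos
  · have := log_nonneg (one_le_mul_of_one_le_of_one_le hK hA)
    linarith [log_le_log hq hqq']
  · nlinarith

theorem exists_lt_forall_dni_sub_le {R : ℕ} (hR : 1 ≤ R) (δ : ℝ) :
    ∃ j < R, ∀ x, dni (x - δ) ≤ dni (x - j / R) + 1 / R := by
  have hR₀ : (0 : ℝ) < R := by exact_mod_cast hR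
  have hx₀ : 0 ≤ Int.fract δ * R := by positivity
  refine ⟨⌊Int.fract δ * R⌋₊, ?_, fun x => ?_⟩
  · rw [Nat.floor_lt hx₀]
    nlinarith [Int.fract_lt_one δ]
  obtain ⟨j, hj⟩ : ∃ j, j = ⌊Int.fract δ * R⌋₊ := ⟨_, rfl⟩
  rw [← hj]
  have hle : (j : ℝ) / R ≤ Int.fract δ := by
    rw [div_le_iff₀ hR₀]; exact hj ▸ Nat.floor_le hx₀
  have hlt : Int.fract δ ≤ j / R + 1 / R := by
    rw [← add_div, le_div_iff₀ hR₀]; exact hj ▸ (Nat.lt_floor_add_one _).le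
  calc dni (x - δ) = dni (x - j / R + (j / R - Int.fract δ) + (-⌊δ⌋ : ℤ)) := by
        push_cast
        congr 1
        linarith [Int.self_sub_floor δ]
    _ = dni (x - j / R + (j / R - Int.fract δ)) := dni_add_intCast _ _
    _ ≤ dni (x - j / R) + |j / R - Int.fract δ| := dni_add_le _ _
    _ ≤ dni (x - j / R) + 1 / R := by
      gcongr
      rw [abs_le]
      constructor <;> linarith

end Forces

section Levels

theorem eventually_mul_rpow_lt {τ : ℝ} (hτ : τ < 1) (C : ℝ) :
    ∀ᶠ R : ℕ in atTop, ∀ x : ℝ, 1 ≤ x → x ≤ C * (R * (Nat.log 2 R + 1)) → 15 * x ^ τ < R := by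
  obtain ⟨σ, hσ⟩ : ∃ σ, σ = max τ 0 := ⟨_, rfl⟩
  obtain ⟨ρ, hρ⟩ : ∃ ρ, ρ = (1 - σ) / 2 := ⟨_, rfl⟩
  have hσ₀ : 0 ≤ σ := hσ ▸ le_max_right _ _
  have hρ₀ : 0 < ρ := by
    have : σ < 1 := hσ ▸ max_lt hτ one_pos
    linarith
  have hlog : (fun x : ℝ => C * ((log 2)⁻¹ * log x + 1)) =o[atTop] fun x => x ^ ρ :=
    (((isLittleO_log_rpow_atTop hρ₀).const_mul_left _).add
      (Asymptotics.isLittleO_const_left.mpr (.inr (tendsto_norm_atTop_atTop.comp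
        (tendsto_rpow_atTop hρ₀))))).const_mul_left _
  filter_upwards [tendsto_natCast_atTop_atTop.eventually (hlog.bound one_pos),
    tendsto_natCast_atTop_atTop.eventually ((tendsto_rpow_atTop hρ₀).eventually_gt_atTop 15),
    eventually_ge_atTop 1] with R hRC hR15 hR x hx hxR
  have hR₁ : (1 : ℝ) ≤ R := by exact_mod_cast hR
  have hxpow : x ≤ (R : ℝ) ^ (1 + ρ) := by
    rw [one_mul, norm_of_nonneg (by positivity : (0 : ℝ) ≤ (R : ℝ) ^ ρ)] at hRC
    have hnatLog : (Nat.log 2 R : ℝ) + 1 ≤ (log 2)⁻¹ * log R + 1 := by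
      gcongr
      simpa only [logb, div_eq_inv_mul, Nat.cast_ofNat] using natLog_le_logb R 2
    calc x ≤ R * (C * ((log 2)⁻¹ * log R + 1)) := by
          have hCR : 0 < C * (R * (Nat.log 2 R + 1)) := by linarith
          have : 0 < C := pos_of_mul_pos_left hCR (by positivity)
          rw [mul_left_comm]
          exact hxR.trans (by gcongr)
      _ ≤ R * (R : ℝ) ^ ρ := by gcongr; exact (le_norm_self _).trans hRC
      _ = (R : ℝ) ^ (1 + ρ) := by rw [rpow_add (by positivity), rpow_one]
  calc 15 * x ^ τ ≤ 15 * x ^ σ := by gcongr; exact hσ ▸ le_max_left _ _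
    _ ≤ 15 * ((R : ℝ) ^ (1 + ρ)) ^ σ := by gcongr
    _ ≤ 15 * (R : ℝ) ^ (1 - ρ) := by
      rw [← rpow_mul (by positivity)]
      gcongr
      nlinarith
    _ < (R : ℝ) ^ ρ * (R : ℝ) ^ (1 - ρ) := by gcongr
    _ = R := by rw [← rpow_add (by positivity)]; simp

theorem one_le_log_natCast {n : ℕ} (hn : 3 ≤ n) : 1 ≤ log n := by
  have : (3 : ℝ) ≤ n := by exact_mod_cast hn
  rw [le_log_iff_exp_le (by linarith)]
  linarith [exp_one_lt_d9]

theorem pow_le_two_pow_mul_log (R k : ℕ) : R ^ k ≤ 2 ^ (k * (Nat.log 2 R + 1)) := by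
  rw [mul_comm, pow_mul]
  gcongr
  exact (Nat.lt_pow_succ_log_self one_lt_two R).le

theorem mul_lt_one_div_rpow_log {R n p d τ : ℝ} (hR : 0 < R) (hn : 1 ≤ log n)
    (hτ : 15 * log n ^ τ < R) (hp : p ≤ 5) (hd₀ : 0 ≤ d) (hd : d ≤ 3 / R) :
    p * d < 1 / log n ^ τ := by
  calc p * d ≤ 5 * (3 / R) := by gcongr
    _ = 15 / R := by ring
    _ < 1 / log n ^ τ := by
      rw [div_lt_div_iff₀ hR (by positivity)]
      linarith

variable {b : ℕ} {G : ℕ → ℤ → Prop} {a g D : ℝ} {Q N : ℕ → ℕ}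

namespace IsScaleSequence

theorem exists_levels (h : IsScaleSequence a g D Q N) (hb : 3 ≤ b) {A K : ℝ} (hA : 1 ≤ A)
    (hK : 1 ≤ K) {t t' u : ℕ} (hu : 2 * (K * A) ≤ 2 ^ u) (ht : 2 * u ≤ t) (htt' : t ≤ t') :
    ∃ m M : ℕ, A * (b : ℝ) ^ m ≤ N t ∧ K * (2 * Q t') ≤ (b : ℝ) ^ M ∧
      log (Q t) - u ≤ (m + 1) * log b ∧ m ≤ M ∧
      (M : ℝ) ≤ m + (2 + u + (log (Q t') - log (Q t))) := by
  have hb₁ : (1 : ℝ) < b := by exact_mod_cast (by omega : 1 < b)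
  have hQt : (1 : ℝ) ≤ Q t := by exact_mod_cast h.one_le t
  have hQN : (Q t : ℝ) ≤ N t := by exact_mod_cast h.le t
  have hNQ : (N t : ℝ) ≤ 2 * Q t := by exact_mod_cast (h.lt t).le
  have hQQ : (Q t : ℝ) ≤ Q t' := by exact_mod_cast h.mono htt'
  have hlogu : log (2 ^ u) ≤ u := by
    rw [log_pow]
    exact mul_le_of_le_one_right (by positivity) (by linarith [log_two_lt_d9])
  have hAu : A ≤ 2 ^ u := by nlinarith
  have huQ : (2 : ℝ) ^ u ≤ Q t := by exact_mod_cast h.two_pow_le ht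
  obtain ⟨m, M, hm, hM, hlogm, hmM, hMle⟩ := _root_.exists_levels hb₁ (one_le_log_natCast hb) hA hK
    (hAu.trans (huQ.trans hQN)) (hNQ.trans (by gcongr : (2 : ℝ) * Q t ≤ 2 * Q t'))
  have hlogA : log A ≤ u := (log_le_log (by linarith) hAu).trans hlogu
  have hlogKA : log 2 + log (K * A) ≤ u := by
    rw [← log_mul two_ne_zero (by positivity)]
    exact (log_le_log (by positivity) hu).trans hlogu
  have hlogN : log (Q t) ≤ log (N t) := log_le_log (by linarith) hQN
  refine ⟨m, M, hm, hM, by linarith, hmM, ?_⟩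
  rw [log_mul two_ne_zero (by linarith)] at hMle
  linarith

theorem forces_block (h : IsScaleSequence a g D Q N) (hb : 2 ≤ b)
    (hG : ∀ m, Forces b G m (m + 1) fun _ => True) {A K e : ℝ} (hst : CanSteer b G A K e)
    (hA : 0 < A) (hK : 0 ≤ K) {t u R m M : ℕ} (hu₀ : 0 < u) (hu : 2 * (K * b * A) ≤ 2 ^ u)
    (hm : A * (b : ℝ) ^ m ≤ N t) (hM : K * (2 * Q (t + 2 * u * R)) ≤ (b : ℝ) ^ M) (hmM : m ≤ M)
    (θ : ℕ → ℝ) :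
    Forces b G m M fun y => ∀ j < R, dni (N (t + 2 * u * j) * y - θ j) ≤ e := by
  refine hst.forces_forall_lt hb hA hG (fun j => hm.trans ?_) (fun j j' hj => ?_) R hmM
    fun j hj => hM.trans' ?_
  · exact_mod_cast h.N_le_N_add hu₀ t j
  · have : (2 : ℝ) ^ u * N (t + 2 * u * j) ≤ 2 * N (t + 2 * u * j') := by
      exact_mod_cast h.two_pow_mul_N_le (by nlinarith)
    nlinarith
  · have : N (t + 2 * u * j) ≤ 2 * Q (t + 2 * u * R) :=
      (h.lt _).le.trans (by gcongr; exact h.mono (by gcongr))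
    gcongr
    exact_mod_cast this

theorem le_N_add_mul (h : IsScaleSequence a g D Q N) (hb : 2 ≤ b) {A : ℝ} (hA : 1 ≤ A)
    {t u m : ℕ} (hu₀ : 0 < u) (hm : A * (b : ℝ) ^ m ≤ N t) (j : ℕ) : m ≤ N (t + 2 * u * j) := by
  have hpow : b ^ m ≤ N t := by
    exact_mod_cast (le_mul_of_one_le_left (by positivity) hA).trans hm
  calc m ≤ b ^ m := (Nat.lt_pow_self (by omega)).le
    _ ≤ N (t + 2 * u * j) := hpow.trans (h.N_le_N_add hu₀ t j)

end IsScaleSequence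

end Levels

section Blocks

theorem exists_forall_block_bounds {D ℓ η : ℝ} (hD : 0 ≤ D) (hℓ : 0 < ℓ) (hη : 0 < η) :
    ∃ H : ℕ, 0 < H ∧ ∀ u R m X L : ℝ, 1 ≤ u → 1 ≤ R → X ≤ R → u * R * H * log 2 ≤ L →
      L - u ≤ (m + 1) * ℓ → X ≤ m ∧ 7 * D * u * R ≤ η * m := by
  obtain ⟨H, hH⟩ := exists_nat_gt (2 * (ℓ * (2 + 7 * D / η) + 1))
  have hH₀ : (0 : ℝ) < H := hH.trans' (by positivity)
  refine ⟨H, by exact_mod_cast hH₀, fun u R m X L hu hR hX hL hm => ?_⟩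
  obtain ⟨v, hv⟩ : ∃ v, v = u * R := ⟨_, rfl⟩
  have hlog : ℓ * (2 + 7 * D / η) + 1 ≤ H * log 2 := by nlinarith [log_two_gt_d9]
  have hRv : R ≤ v := hv ▸ le_mul_of_one_le_left (by linarith) hu
  have huv : u ≤ v := hv ▸ le_mul_of_one_le_right (by linarith) hR
  have hvm : 7 * D / η * v + 2 * v ≤ m + 1 := by
    have : v * (ℓ * (2 + 7 * D / η) + 1) ≤ v * (H * log 2) := by gcongr; linarith
    rw [← hv] at hL
    refine le_of_mul_le_mul_right ?_ hℓ
    linarith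
  have hv₀ : 0 ≤ v := by linarith
  have hDv : 0 ≤ 7 * D / η * v := by positivity
  refine ⟨by linarith, ?_⟩
  calc 7 * D * u * R = η * (7 * D / η * v) := by rw [hv]; field_simp
    _ ≤ η * m := by gcongr; linarith

variable {b : ℕ} {G : ℕ → ℤ → Prop} {a g D τ η : ℝ} {Q N : ℕ → ℕ}

theorem IsScaleSequence.eventually_exists_block (h : IsScaleSequence a g D Q N) (hD : 1 ≤ D)
    (hτ : τ < 1) {ℓ : ℝ} (hℓ : 0 < ℓ) (hη : 0 < η) (X : ℕ) :
    ∀ᶠ R : ℕ in atTop, ∃ t u : ℕ, 0 < u ∧ R ^ 90 ≤ 2 ^ u ∧ 2 * u ≤ t ∧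
      (∀ m : ℝ, log (Q t) - u ≤ (m + 1) * ℓ →
        X ≤ m ∧ 2 + u + (log (Q (t + 2 * u * R)) - log (Q t)) ≤ η * m) ∧
      ∀ x, 1 ≤ x → x ≤ 1 + log (Q (t + 2 * u * R)) → 15 * x ^ τ < R := by
  obtain ⟨H, hH, hbounds⟩ := exists_forall_block_bounds (D := D) (by linarith) hℓ hη
  filter_upwards [eventually_mul_rpow_lt hτ (1 + 360 * D * H), eventually_ge_atTop X,
    eventually_ge_atTop 1] with R hpow hX hR
  obtain ⟨u, hu⟩ : ∃ u, u = 90 * (Nat.log 2 R + 1) := ⟨_, rfl⟩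
  obtain ⟨t, hHt, htH, hdiff⟩ := h.exists_log_sub_log_le hH (2 * u * R)
  have hu₁ : (1 : ℝ) ≤ u := by exact_mod_cast (by omega : 1 ≤ u)
  have hR₁ : (1 : ℝ) ≤ R := by exact_mod_cast hR
  have hRlog : 1 ≤ R * ((Nat.log 2 R : ℝ) + 1) := by nlinarith [(Nat.log 2 R).cast_nonneg (α := ℝ)]
  have hHu : 2 * u ≤ H * (2 * u * R) := by
    calc 2 * u ≤ 2 * u * R := Nat.le_mul_of_pos_right _ hR
      _ ≤ H * (2 * u * R) := Nat.le_mul_of_pos_left _ hH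
  refine ⟨t, u, by omega, hu ▸ pow_le_two_pow_mul_log R 90, hHu.trans hHt, fun m hm => ?_,
    fun x hx hxle => hpow x hx (hxle.trans ?_)⟩
  · have hlow := h.mul_log_two_le (k := u * R * H) (by linarith)
    push_cast at hlow hdiff
    obtain ⟨hXm, hηm⟩ := hbounds u R m X _ hu₁ hR₁ (by exact_mod_cast hX) hlow hm
    refine ⟨hXm, hηm.trans' ?_⟩
    have huR : (u : ℝ) ≤ D * u * R := by nlinarith [mul_le_mul hD hR₁ zero_le_one (by linarith)]
    linarith
  · have hend : ((t + 2 * u * R : ℕ) : ℝ) ≤ 360 * H * (R * (Nat.log 2 R + 1)) := by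
      rw [hu] at htH ⊢
      exact_mod_cast htH.trans_eq (by ring)
    calc 1 + log (Q (t + 2 * u * R)) ≤ 1 + D * (t + 2 * u * R : ℕ) := by
          gcongr
          exact h.log_le _
      _ ≤ R * (Nat.log 2 R + 1) + D * (360 * H * (R * (Nat.log 2 R + 1))) := by gcongr
      _ = (1 + 360 * D * H) * (R * (Nat.log 2 R + 1)) := by ring

theorem IsScaleSequence.exists_mul_dni_mul_dni_lt (h : IsScaleSequence a g D Q N) {t u R : ℕ}
    (hR : 1 ≤ R) (hlog : ∀ j < R, 1 ≤ log (N (t + 2 * u * j)))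
    (hτ : ∀ x, 1 ≤ x → x ≤ 1 + log (Q (t + 2 * u * R)) → 15 * x ^ τ < R) {y : ℝ}
    (hy : ∀ j < R, dni (N (t + 2 * u * j) * y - j / R) ≤ 2 / R) (δ : ℝ) :
    ∃ j < R, N (t + 2 * u * j) * dni (N (t + 2 * u * j) * a - g) *
      dni (N (t + 2 * u * j) * y - δ) < 1 / log (N (t + 2 * u * j)) ^ τ := by
  obtain ⟨j, hj, hδ⟩ := exists_lt_forall_dni_sub_le hR δ
  refine ⟨j, hj, mul_lt_one_div_rpow_log (by exact_mod_cast hR) (hlog j hj)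
    (hτ _ (hlog j hj) ?_) (h.mul_dni_le _) (dni_nonneg _) ?_⟩
  · have hNQ : N (t + 2 * u * j) ≤ 2 * Q (t + 2 * u * R) :=
      (h.lt _).le.trans (by gcongr; exact h.mono (by gcongr))
    have hN : 1 ≤ N (t + 2 * u * j) := (h.one_le _).trans (h.le _)
    have hQ := h.one_le (t + 2 * u * R)
    calc log (N (t + 2 * u * j)) ≤ log (2 * Q (t + 2 * u * R)) := by
          gcongr
          exact_mod_cast hNQ
      _ = log 2 + log (Q (t + 2 * u * R)) := log_mul two_ne_zero (by positivity)
      _ ≤ 1 + log (Q (t + 2 * u * R)) := by linarith [log_two_lt_d9]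
  · calc dni (N (t + 2 * u * j) * y - δ) ≤ 2 / R + 1 / R := (hδ _).trans (by gcongr; exact hy j hj)
      _ = 3 / R := by ring

theorem exists_forces (hb : 3 ≤ b) (hG : ∀ m, Forces b G m (m + 1) fun _ => True) {c W : ℝ}
    (hc : 0 < c) (hc₁ : c ≤ 1) (hW : 1 ≤ W)
    (hst : ∀ᶠ R : ℕ in atTop, CanSteer b G (W * (R : ℝ) ^ 88) (R / c) (2 / R))
    (ha : a ∈ KSet) (g : ℝ) (hτ : τ < 1) (hη : 0 < η) (X : ℕ) :
    ∃ m M : ℕ, X ≤ m ∧ m ≤ M ∧ (M : ℝ) ≤ m + η * m ∧ Forces b G m M fun y => ∀ δ, ∃ n : ℕ, X ≤ n ∧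
      n * dni (n * a - g) * dni (n * y - δ) < 1 / log n ^ τ := by
  obtain ⟨D, Q, N, hD, h⟩ := exists_isScaleSequence ha g
  have hb₁ : (1 : ℝ) < b := by exact_mod_cast (by omega : 1 < b)
  obtain ⟨R, hstR, hblock, hR, hER⟩ :=
    (hst.and ((h.eventually_exists_block hD hτ (log_pos hb₁) hη (max X 3)).and
      ((eventually_ge_atTop 1).and
        (tendsto_natCast_atTop_atTop.eventually_ge_atTop (2 * b * W / c))))).exists
  obtain ⟨t, u, hu₀, hRu, hut, hlevels, hpow⟩ := hblock
  have hR₁ : (1 : ℝ) ≤ R := by exact_mod_cast hR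
  have hA : 1 ≤ W * (R : ℝ) ^ 88 := one_le_mul_of_one_le_of_one_le hW (one_le_pow₀ hR₁)
  have hK : 1 ≤ R / c := (one_le_div hc).mpr (hc₁.trans hR₁)
  have hKbA : 2 * (R / c * b * (W * (R : ℝ) ^ 88)) ≤ 2 ^ u := by
    calc 2 * (R / c * b * (W * (R : ℝ) ^ 88)) = 2 * b * W / c * (R : ℝ) ^ 89 := by ring
      _ ≤ R * (R : ℝ) ^ 89 := by gcongr
      _ = (R : ℝ) ^ 90 := by ring
      _ ≤ 2 ^ u := by exact_mod_cast hRu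
  have hKA : 2 * (R / c * (W * (R : ℝ) ^ 88)) ≤ 2 ^ u := by
    refine hKbA.trans' ?_
    gcongr
    exact le_mul_of_one_le_right (by positivity) hb₁.le
  obtain ⟨m, M, hm, hM, hlogm, hmM, hMle⟩ :=
    h.exists_levels (t' := t + 2 * u * R) hb hA hK hKA hut (by omega)
  obtain ⟨hXm, hηm⟩ := hlevels m hlogm
  have hmN (j : ℕ) : max X 3 ≤ N (t + 2 * u * j) :=
    le_trans (by exact_mod_cast hXm) (h.le_N_add_mul (by omega) hA hu₀ hm j)
  refine ⟨m, M, (le_max_left _ _).trans (by exact_mod_cast hXm), hmM, hMle.trans (by gcongr), ?_⟩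
  refine (h.forces_block (by omega) hG hstR (by linarith) (by linarith) hu₀ hKbA hm hM hmM
    fun j => j / R).mono fun y hy δ => ?_
  obtain ⟨j, -, hlt⟩ := h.exists_mul_dni_mul_dni_lt hR
    (fun j _ => one_le_log_natCast ((le_max_right _ _).trans (hmN j))) hpow hy δ
  exact ⟨_, (le_max_left _ _).trans (hmN j), hlt⟩

end Blocks

/-! ### Sparse jumps -/

section JumpSchedule

/-- The levels of a Cantor construction each of whose steps climbs one level by branching and then
jumps a further `h l` levels from the level `l` it has reached. -/
def jumpLevel (h : ℕ → ℕ) : ℕ → ℕ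
  | 0 => 0
  | r + 1 => jumpLevel h r + 1 + h (jumpLevel h r + 1)

/-- Jumps of lengths `h (m w)` take place exactly from the levels `m 0 < m 1 < ⋯`, which are sparse
and large in comparison with the jumps. -/
structure IsJumpSchedule (η : ℝ) (m h : ℕ → ℕ) : Prop where
  pos : 0 < m 0
  two_mul_lt : ∀ w, 2 * (m w + h (m w)) < m (w + 1)
  le_mul : ∀ w, (h (m w) : ℝ) ≤ η * m w
  eq_zero : ∀ l ∉ Set.range m, h l = 0

theorem exists_isJumpSchedule {η : ℝ} {P : ℕ → ℕ → ℕ → Prop}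
    (hP : ∀ w X : ℕ, ∃ m M : ℕ, X ≤ m ∧ m ≤ M ∧ (M : ℝ) ≤ m + η * m ∧ P w m M) :
    ∃ m h, IsJumpSchedule η m h ∧ ∀ w, P w (m w) (m w + h (m w)) := by
  choose m M hXm hmM hMη hP using hP
  let X : ℕ → ℕ := Nat.rec 1 fun w X => 2 * M w X + 1
  have hstep (w : ℕ) : 2 * M w (X w) < m (w + 1) (X (w + 1)) := hXm (w + 1) (X (w + 1))
  have hmono : StrictMono fun w => m w (X w) :=
    strictMono_nat_of_lt_succ fun w => by have := hmM w (X w); have := hstep w; omega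
  obtain ⟨h, hh⟩ : ∃ h, h = Function.extend (fun w => m w (X w))
    (fun w => M w (X w) - m w (X w)) 0 := ⟨_, rfl⟩
  have hM (w : ℕ) : m w (X w) + h (m w (X w)) = M w (X w) := by
    rw [hh, hmono.injective.extend_apply (g := fun w => M w (X w) - m w (X w))]
    exact Nat.add_sub_cancel' (hmM w (X w))
  refine ⟨fun w => m w (X w), h, ⟨hXm 0 1, fun w => ?_, fun w => ?_, fun l hl => ?_⟩, fun w => ?_⟩
  · exact (hM w).symm ▸ hstep w
  · have : (m w (X w) : ℝ) + h (m w (X w)) = M w (X w) := by exact_mod_cast hM w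
    linarith [hMη w (X w)]
  · rw [hh, Function.extend_apply' _ _ _ hl, Pi.zero_apply]
  · exact (hM w).symm ▸ hP w (X w)

theorem le_jumpLevel (h : ℕ → ℕ) (r : ℕ) : r ≤ jumpLevel h r := by
  induction r with
  | zero => exact Nat.zero_le _
  | succ r ih => rw [jumpLevel]; omega

namespace IsJumpSchedule

variable {η : ℝ} {m h : ℕ → ℕ}

theorem strictMono (H : IsJumpSchedule η m h) : StrictMono m :=
  strictMono_nat_of_lt_succ fun w => by have := H.two_mul_lt w; omega

theorem add_lt (H : IsJumpSchedule η m h) {w w' : ℕ} (hw : w < w') : m w + h (m w) < m w' := by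
  have := H.two_mul_lt w
  have : m (w + 1) ≤ m w' := H.strictMono.monotone hw
  omega

theorem exists_jumpLevel_add_one_eq (H : IsJumpSchedule η m h) (w : ℕ) :
    ∃ r, jumpLevel h r + 1 = m w := by
  have hex : ∃ r, m w ≤ jumpLevel h (r + 1) := ⟨m w, by have := le_jumpLevel h (m w + 1); omega⟩
  refine ⟨Nat.find hex, ?_⟩
  obtain ⟨r, hr⟩ : ∃ r, r = Nat.find hex := ⟨_, rfl⟩
  have hle : m w ≤ jumpLevel h (r + 1) := hr ▸ Nat.find_spec hex
  have hlt : jumpLevel h r < m w := by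
    rcases r with - | r
    · exact H.pos.trans_le (H.strictMono.monotone w.zero_le)
    · exact not_le.mp (Nat.find_min hex (by omega))
  rw [← hr]
  rw [jumpLevel] at hle
  by_cases hrange : jumpLevel h r + 1 ∈ Set.range m
  · obtain ⟨w', hw'⟩ := hrange
    rw [← hw'] at hle ⊢
    have : ¬ w' < w := fun h => (H.add_lt h).not_ge hle
    have := H.strictMono.monotone (not_lt.mp this)
    omega
  · rw [H.eq_zero _ hrange] at hle
    omega

theorem jumpLevel_le_add_sum (H : IsJumpSchedule η m h) {r w : ℕ} (hw : jumpLevel h r < m w) :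
    jumpLevel h r ≤ r + ∑ k ∈ Finset.range w, h (m k) := by
  induction r generalizing w with
  | zero => exact Nat.zero_le _
  | succ r ih =>
    rw [jumpLevel] at hw ⊢
    by_cases hrange : jumpLevel h r + 1 ∈ Set.range m
    · obtain ⟨w', hw'⟩ := hrange
      have hlow := ih (w := w') (by omega)
      rw [← hw'] at hw ⊢
      have hlt : w' < w := H.strictMono.lt_iff_lt.mp (by omega)
      have hsum : ∑ k ∈ Finset.range (w' + 1), h (m k) ≤ ∑ k ∈ Finset.range w, h (m k) :=
        Finset.sum_le_sum_of_subset (Finset.range_subset_range.mpr hlt)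
      rw [Finset.sum_range_succ] at hsum
      omega
    · rw [H.eq_zero _ hrange] at hw ⊢
      have := ih (w := w) (by omega)
      omega

theorem sum_le_mul (H : IsJumpSchedule η m h) (hη : 0 ≤ η) (w : ℕ) :
    ∑ k ∈ Finset.range (w + 1), (h (m k) : ℝ) ≤ 2 * η * m w := by
  induction w with
  | zero =>
    have : 0 ≤ η * m 0 := by positivity
    rw [Finset.sum_range_one]
    linarith [H.le_mul 0]
  | succ w ih =>
    have hdouble : (2 : ℝ) * m w ≤ m (w + 1) := by
      have := H.two_mul_lt w
      exact_mod_cast (by omega : 2 * m w ≤ m (w + 1))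
    rw [Finset.sum_range_succ]
    linarith [H.le_mul (w + 1), mul_le_mul_of_nonneg_left hdouble hη]

theorem mul_jumpLevel_le (H : IsJumpSchedule η m h) (hη : 0 ≤ η) (r : ℕ) :
    (1 - 2 * η) * jumpLevel h r ≤ r := by
  have hex : ∃ w, jumpLevel h r < m w := ⟨_, H.strictMono.le_apply (x := jumpLevel h r + 1)⟩
  obtain ⟨w, hw⟩ : ∃ w, w = Nat.find hex := ⟨_, rfl⟩
  have hle : (jumpLevel h r : ℝ) ≤ r + ∑ k ∈ Finset.range w, (h (m k) : ℝ) := by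
    exact_mod_cast H.jumpLevel_le_add_sum (hw ▸ Nat.find_spec hex)
  have hsum : ∑ k ∈ Finset.range w, (h (m k) : ℝ) ≤ 2 * η * jumpLevel h r := by
    rcases w with - | w
    · rw [Finset.sum_range_zero]
      positivity
    · have hmin : m w ≤ jumpLevel h r := not_lt.mp (Nat.find_min hex (by omega))
      exact (H.sum_le_mul hη w).trans (by gcongr)
  linarith

end IsJumpSchedule

variable {B b : ℕ} {N : ℕ → ℤ → Prop} {i₀ : ℤ}

theorem exists_isCantorCoding_jumpLevel (h₀ : N 0 i₀)
    (hbranch : ∀ m i, N m i → ∃ ch : Fin B → ℤ, (∀ d, N (m + 1) (ch d)) ∧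
      IsBranching b m i (m + 1) ch)
    {h : ℕ → ℕ} {Φ : ℕ → ℝ → Prop} (hΦ : ∀ l, Forces b N l (l + h l) (Φ l)) :
    ∃ x : (ℕ → Fin B) → ℝ, IsCantorCoding b (jumpLevel h) x ∧ ∀ d r,
      (∃ i, N (jumpLevel h r) i ∧ x d ∈ adicIcc b (jumpLevel h r) i) ∧
        Φ (jumpLevel h r + 1) (x d) := by
  obtain ⟨x, hx, hmem⟩ := exists_isCantorCoding (b := b) (B := B) (L := jumpLevel h) (i₀ := i₀)
    (N := fun r i => N (jumpLevel h r) i ∧ ∀ r', r = r' + 1 →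
      ∀ y ∈ adicIcc b (jumpLevel h r) i, Φ (jumpLevel h r' + 1) y)
    ⟨h₀, fun _ hr => absurd hr (Nat.succ_ne_zero _).symm⟩ fun r i ⟨hi, _⟩ => by
      obtain ⟨ch, hch, hbr⟩ := hbranch _ i hi
      choose ch' hch' hsub hΦ' using fun d => hΦ _ (ch d) (hch d)
      refine ⟨ch', fun d => ⟨hch' d, fun r' hr' => ?_⟩, hbr.trans hsub⟩
      obtain rfl : r = r' := Nat.succ_injective hr'
      exact hΦ' d
  refine ⟨x, hx, fun d r => ⟨((hmem d).2 r).imp fun i hi => ⟨hi.1.1, hi.2⟩, ?_⟩⟩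
  obtain ⟨i, hi, hxi⟩ := (hmem d).2 (r + 1)
  exact hi.2 r rfl _ hxi

theorem exists_isCantorCoding_forall (h₀ : N 0 i₀)
    (hbranch : ∀ m i, N m i → ∃ ch : Fin B → ℤ, (∀ d, N (m + 1) (ch d)) ∧
      IsBranching b m i (m + 1) ch)
    {η : ℝ} (hη : 0 ≤ η) {Φ : ℕ → ℝ → Prop}
    (hΦ : ∀ w X : ℕ, ∃ m M : ℕ, X ≤ m ∧ m ≤ M ∧ (M : ℝ) ≤ m + η * m ∧ Forces b N m M (Φ w)) :
    ∃ (L : ℕ → ℕ) (x : (ℕ → Fin B) → ℝ), IsCantorCoding b L x ∧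
      (∀ r, r ≤ L r ∧ (1 - 2 * η) * L r ≤ r) ∧
      ∀ d, (∀ r, ∃ i, N (L r) i ∧ x d ∈ adicIcc b (L r) i) ∧ ∀ w, Φ w (x d) := by
  obtain ⟨m, h, H, hforces⟩ := exists_isJumpSchedule hΦ
  have hforces' (l : ℕ) : Forces b N l (l + h l) fun y => ∀ w, m w = l → Φ w y := by
    by_cases hl : l ∈ Set.range m
    · obtain ⟨w, rfl⟩ := hl
      exact (hforces w).mono fun y hy w' hw' => H.strictMono.injective hw' ▸ hy
    · rw [H.eq_zero l hl]
      exact fun i hi => ⟨i, hi, subset_rfl, fun y _ w hw => absurd ⟨w, hw⟩ hl⟩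
  obtain ⟨x, hx, hmem⟩ := exists_isCantorCoding_jumpLevel h₀ hbranch hforces'
  refine ⟨jumpLevel h, x, hx, fun r => ⟨le_jumpLevel h r, H.mul_jumpLevel_le hη r⟩, fun d =>
    ⟨fun r => (hmem d r).1, fun w => ?_⟩⟩
  obtain ⟨r, hr⟩ := H.exists_jumpLevel_add_one_eq w
  exact (hmem d r).2 w hr.symm

end JumpSchedule

theorem exists_two_mul_add_three_rpow_le {s : ℝ} (hs₀ : 0 ≤ s) (hs : s < 1) :
    ∃ B : ℕ, 2 ≤ B ∧ ((2 * B + 3 : ℕ) : ℝ) ^ s ≤ B := by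
  have hlim : Tendsto (fun B : ℕ => (B : ℝ) ^ (1 - s)) atTop atTop :=
    (tendsto_rpow_atTop (by linarith)).comp tendsto_natCast_atTop_atTop
  obtain ⟨B, hB, hB₂⟩ :=
    ((hlim.eventually_ge_atTop ((5 : ℝ) ^ s)).and (eventually_ge_atTop 2)).exists
  have hB₀ : (0 : ℝ) < B := by positivity
  refine ⟨B, hB₂, ?_⟩
  calc ((2 * B + 3 : ℕ) : ℝ) ^ s ≤ (5 * (B : ℝ)) ^ s := by
        gcongr
        exact_mod_cast (by omega : 2 * B + 3 ≤ 5 * B)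
    _ = 5 ^ s * (B : ℝ) ^ s := mul_rpow (by norm_num) hB₀.le
    _ ≤ (B : ℝ) ^ (1 - s) * (B : ℝ) ^ s := by gcongr
    _ = B := by rw [← rpow_add hB₀, sub_add_cancel, rpow_one]

theorem GoodAdic.exists_subset_Bad {B b : ℕ} (hb : b = 2 * B + 3) (hB : 2 ≤ B) {κ c : ℝ}
    (hc : 0 < c) (hκb : κ * (2 * b) ≤ 1) (hcκ : c * (8 * b) ≤ κ) {s : NNReal} {s₁ η : ℝ}
    (hs : 0 < s) (hs₁ : 0 ≤ s₁) (hη : 0 ≤ η) (hbs₁ : (b : ℝ) ^ s₁ ≤ B) (hsη : s = s₁ * (1 - 2 * η))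
    {Φ : ℕ → ℝ → Prop} (hΦ : ∀ w X : ℕ, ∃ m M : ℕ, X ≤ m ∧ m ≤ M ∧ (M : ℝ) ≤ m + η * m ∧
      Forces b (GoodAdic b κ c 1) m M (Φ w)) :
    ∃ G ⊆ Bad, s ≤ dimH G ∧ ∀ β ∈ G, ∀ w, Φ w β := by
  have hb₁ : (1 : ℝ) ≤ b := by exact_mod_cast (by omega : 1 ≤ b)
  have hκ : 0 < κ := hcκ.trans_lt' (by positivity)
  have h₀ : GoodAdic b κ c 1 0 0 := .of_le (by rw [pow_zero]; nlinarith)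
  obtain ⟨L, x, hx, hL, hmem⟩ := exists_isCantorCoding_forall h₀
    (fun m i hi => hi.exists_isBranching hb hκb hcκ) hη hΦ
  refine ⟨Set.range x, ?_, hx.le_dimH_range (by omega) hB hs hbs₁ fun r => ?_, ?_⟩
  · rintro _ ⟨d, rfl⟩
    refine BadWith.mem_Bad hc fun q p hq => le_mul_abs_of_forall_goodAdic (by omega) hκ
      (fun r => (hL r).1) (hmem d).1 hq (one_le_pow₀ ?_) p
    exact_mod_cast hq
  · rw [hsη, mul_assoc]
    gcongr
    exact (hL r).2
  · rintro _ ⟨d, rfl⟩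
    exact (hmem d).2

theorem exists_subset_Bad_le_dimH {τ : ℝ} (hτ : τ < 1) {α : ℕ → ℝ} (hα : ∀ i, α i ∈ KSet)
    (γ : ℕ → ℝ) {s : NNReal} (hs₀ : 0 < s) (hs : s < 1) :
    ∃ G ⊆ Bad, s ≤ dimH G ∧ ∀ β ∈ G, ∀ i δ, ∃ᶠ n : ℕ in atTop,
      n * dni (n * α i - γ i) * dni (n * β - δ) < 1 / log n ^ τ := by
  obtain ⟨s₁, hss₁, hs₁⟩ := exists_between (NNReal.coe_lt_one.mpr hs)
  have hs₁₀ : 0 < s₁ := (NNReal.coe_pos.mpr hs₀).trans hss₁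
  obtain ⟨η, hη⟩ : ∃ η, η = (1 - s / s₁) / 2 := ⟨_, rfl⟩
  have hη₀ : 0 < η := by
    have := (div_lt_one hs₁₀).mpr hss₁
    linarith
  obtain ⟨B, hB, hBs₁⟩ := exists_two_mul_add_three_rpow_le hs₁₀.le hs₁
  have : NeZero B := ⟨by omega⟩
  obtain ⟨κ, c, W, hc, hc₁, hW, hκb, hcκ, hst⟩ := eventually_canSteer (B := B) rfl
  have hext (m : ℕ) : Forces (2 * B + 3) (GoodAdic (2 * B + 3) κ c 1) m (m + 1) fun _ => True := by
    intro i hi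
    obtain ⟨ch, hch, hbr⟩ := hi.exists_isBranching rfl hκb hcκ
    exact ⟨ch 0, hch 0, (hbr.subset_core 0).trans adicCore_subset_adicIcc, fun _ _ => trivial⟩
  obtain ⟨G, hGBad, hGdim, hG⟩ := GoodAdic.exists_subset_Bad rfl hB hc hκb hcκ hs₀ hs₁₀.le hη₀.le
    hBs₁ (by rw [hη]; field_simp; ring) (Φ := fun w y => ∀ δ, ∃ n : ℕ, w.unpair.2 ≤ n ∧
      n * dni (n * α w.unpair.1 - γ w.unpair.1) * dni (n * y - δ) < 1 / log n ^ τ) fun w X => by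
    obtain ⟨m, M, hXm, hmM, hM, hforces⟩ := exists_forces (by omega) hext hc hc₁ hW hst
      (hα w.unpair.1) (γ w.unpair.1) hτ hη₀ (max X w.unpair.2)
    exact ⟨m, M, (le_max_left _ _).trans hXm, hmM, hM, hforces.mono fun y hy δ =>
      (hy δ).imp fun n hn => ⟨(le_max_right _ _).trans hn.1, hn.2⟩⟩
  refine ⟨G, hGBad, hGdim, fun β hβ i δ => frequently_atTop.mpr fun n₀ => ?_⟩
  simpa only [Nat.unpair_pair] using hG β hβ (Nat.pair i n₀) δ

theorem stmt_1_general (τ : ℝ) (hτ : τ < 1) (α γ : ℕ → ℝ) (hα : ∀ i, α i ∈ KSet) :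
    ∃ G : Set ℝ, G ⊆ Bad ∧ dimH G = 1 ∧ ∀ β ∈ G, ∀ i : ℕ, ∀ δ : ℝ, ∃ᶠ n : ℕ in atTop,
      (n : ℝ) * dni (n * α i - γ i) * dni (n * β - δ) < 1 / log n ^ τ := by
  choose G hGBad hGdim hG using fun s : {s : NNReal // 0 < s ∧ s < 1} =>
    exists_subset_Bad_le_dimH hτ hα γ s.2.1 s.2.2
  refine ⟨⋃ s, G s, Set.iUnion_subset hGBad, le_antisymm ?_ ?_, fun β hβ => ?_⟩
  · exact dimH_univ ▸ dimH_mono (Set.subset_univ _)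
  · refine le_of_forall_lt fun r hr => ?_
    lift r to NNReal using (hr.trans ENNReal.one_lt_top).ne
    obtain ⟨s, hrs, hs⟩ := exists_between (ENNReal.coe_lt_one_iff.mp hr)
    calc (r : ENNReal) < s := ENNReal.coe_lt_coe.mpr hrs
      _ ≤ dimH (G ⟨s, pos_of_gt hrs, hs⟩) := hGdim _
      _ ≤ dimH (⋃ s, G s) := dimH_mono (Set.subset_iUnion _ _)
  · obtain ⟨s, hs⟩ := Set.mem_iUnion.mp hβ
    exact hG s β hs

theorem eventually_one_div_le_rpow_log_log_log_div {ε τ : ℝ} (hε : 0 ≤ ε) :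
    ∀ᶠ n : ℕ in atTop, 1 / log n ^ τ ≤ log (log (log n)) ^ ε / log n ^ τ := by
  have hlim : Tendsto (fun n : ℕ => log (log (log n))) atTop atTop :=
    tendsto_log_atTop.comp (tendsto_log_atTop.comp
      (tendsto_log_atTop.comp tendsto_natCast_atTop_atTop))
  filter_upwards [hlim.eventually_ge_atTop 1] with n hlog
  have : 0 ≤ log n := log_natCast_nonneg n
  gcongr
  exact one_le_rpow hlog hε

theorem stmt_1 (ε : ℝ) (hε : 0 < ε) (α γ : ℕ → ℝ) (hα : ∀ i, α i ∈ KSet) :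
    ∃ G : Set ℝ, G ⊆ Bad ∧ dimH G = 1 ∧
      ∀ β ∈ G, ∀ i : ℕ, ∀ δ : ℝ,
        ∃ᶠ n : ℕ in Filter.atTop,
          (n : ℝ) * dni (n * α i - γ i) * dni (n * β - δ) <
            (Real.log (Real.log (Real.log n))) ^ (ε + 1/2) / (Real.log n) ^ ((1:ℝ)/2) := by
  obtain ⟨G, hGBad, hGdim, hG⟩ := stmt_1_general (1 / 2) (by norm_num) α γ hα
  exact ⟨G, hGBad, hGdim, fun β hβ i δ =>
    ((hG β hβ i δ).and_eventually (eventually_one_div_le_rpow_log_log_log_div (by linarith))).mono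
      fun n hn => hn.1.trans_le hn.2⟩
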